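/- Theorem 1.2 (exponential case). Let α ∈ (0,1), d₁, d₂ > 0 and c₁, c₂ ∈ ℝ with c₁ ≠ c₂. Assume f₁, f₂, g₁, g₂ : ℝ² → ℝ are C^{2,α} and there exist constants C₀ > 1 and r₀ > 0 such that for all |u|, |v| ≤ r₀: |f₁(u,v)| ≤ C₀(|u|⁴ + |u||v|), |g₁(u,v)| ≤ C₀(|u|² + |u||v|), |f₂(u,v)| ≤ C₀(|v|⁴ + |u||v|), |g₂(u,v)| ≤ C₀(|v|² + |u||v|). Then there exists M₀ ≥ 1 such that for every M ≥ M₀ and every ε > 0 there exists δ > 0 with the following property: for every pair (u₀, v₀) of bounded, α-Hölder continuous functions ℝ → ℝ satisfying |u₀(x)| e^{x²/M} < δ and |v₀(x)| e^{x²/M} < δ for all x ∈ ℝ, there exists a global classical solution (u,v) of system (GRD) with initial data (u₀, v₀) such that for all x ∈ ℝ and t ≥ 0: |u(x,t)| ≤ ε e^{-(x+c₁t)²/(M(1+t))}/√(1+t), |v(x,t)| ≤ ε e^{-(x+c₂t)²/(M(1+t))}/√(1+t), sup_{x∈ℝ}(|u(x,t)| + |v(x,t)|) ≤ ε/√(1+t),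 and ∫_ℝ (|u(x,t)| + |v(x,t)|) dx ≤ ε. -/

import Mathlib

open MeasureTheory Set

noncomputable section

/-- `f` is `α`-Hölder continuous. -/
def HolderCont (α : ℝ) (f : ℝ → ℝ) : Prop :=
  ∃ C : ℝ, ∀ x y : ℝ, |f x - f y| ≤ C * |x - y| ^ α

/-- `h : ℝ² → ℝ` is `C^{2,α}`: twice continuously differentiable with `α`-Hölder
continuous second-order derivatives. -/
def IsC2Holder (α : ℝ) (h : ℝ × ℝ → ℝ) : Prop :=
  ContDiff ℝ 2 h ∧
    ∃ C : ℝ, ∀ x y : ℝ × ℝ,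
      ‖iteratedFDeriv ℝ 2 h x - iteratedFDeriv ℝ 2 h y‖ ≤ C * ‖x - y‖ ^ α

/-- A classical solution of the reaction-diffusion-advection system (GRD)
`u_t = d₁ u_xx + c₁ u_x + f₁(u,v) + ∂_x(g₁(u,v))`,
`v_t = d₂ v_xx + c₂ v_x + f₂(u,v) + ∂_x(g₂(u,v))`
on `ℝ × [0,T)` with initial data `(u₀, v₀)`: jointly continuous, bounded in `x` on
each compact time interval, once continuously differentiable in `t` and twice
continuously differentiable in `x` on `ℝ × (0,T)`, satisfying both equations
pointwise there, and attaining the initial data at `t = 0`. -/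
def IsClassicalSolution (d₁ d₂ c₁ c₂ : ℝ) (f₁ f₂ g₁ g₂ : ℝ × ℝ → ℝ)
    (T : ENNReal) (u₀ v₀ : ℝ → ℝ) (u v : ℝ → ℝ → ℝ) : Prop :=
  (∀ x : ℝ, u x 0 = u₀ x) ∧ (∀ x : ℝ, v x 0 = v₀ x) ∧
  ContinuousOn (fun p : ℝ × ℝ => (u p.1 p.2, v p.1 p.2))
    {p : ℝ × ℝ | 0 ≤ p.2 ∧ ENNReal.ofReal p.2 < T} ∧
  (∀ t₁ : ℝ, 0 ≤ t₁ → ENNReal.ofReal t₁ < T →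
    ∃ K : ℝ, ∀ x t : ℝ, 0 ≤ t → t ≤ t₁ → |u x t| + |v x t| ≤ K) ∧
  ∃ ut vt ux vx uxx vxx gx hx : ℝ → ℝ → ℝ,
    (∀ x t : ℝ, 0 < t → ENNReal.ofReal t < T →
      HasDerivAt (fun τ => u x τ) (ut x t) t ∧
      HasDerivAt (fun ξ => u ξ t) (ux x t) x ∧
      HasDerivAt (fun ξ => ux ξ t) (uxx x t) x ∧
      HasDerivAt (fun ξ => g₁ (u ξ t, v ξ t)) (gx x t) x ∧
      HasDerivAt (fun τ => v x τ) (vt x t) t ∧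
      HasDerivAt (fun ξ => v ξ t) (vx x t) x ∧
      HasDerivAt (fun ξ => vx ξ t) (vxx x t) x ∧
      HasDerivAt (fun ξ => g₂ (u ξ t, v ξ t)) (hx x t) x ∧
      ut x t = d₁ * uxx x t + c₁ * ux x t + f₁ (u x t, v x t) + gx x t ∧
      vt x t = d₂ * vxx x t + c₂ * vx x t + f₂ (u x t, v x t) + hx x t) ∧
    ContinuousOn (fun p : ℝ × ℝ =>
        (ut p.1 p.2, ux p.1 p.2, uxx p.1 p.2, vt p.1 p.2, vx p.1 p.2, vxx p.1 p.2))
      {p : ℝ × ℝ | 0 < p.2 ∧ ENNReal.ofReal p.2 < T}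

/-!
In the frame `x + cᵢ t` the `i`-th equation is a forced heat equation, so solutions are sought as
fixed points of its Duhamel map. Let `u` and `v` lie below the Gaussian packets
`e exp (-(x + cᵢ t)² / (M (1 + t))) / √(1 + t)`. The fluxes and the quartic reaction terms then
decay fast enough for the heat flow to reproduce such packets. The mixed reaction term `|u| |v|` by
itself does not: a quadratic source is not integrable in time along one packet. But as `c₁ ≠ c₂`,
the two packets separate linearly in time, over a width growing only like `√t`, and their overlap is
exponentially small. So the Duhamel map turns packets of amplitude `e ≤ 1`, with data of size `δ`,
into packets of amplitude `K (δ + 3 C e²)`, which is at most `e` for small `e` and `δ`, and it is a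
contraction for the sup norm with weight `exp (-L t)`, `L` large. The fixed point is classical by
bootstrapping: it is Hölder in space, hence differentiable with a Hölder derivative, which makes the
sources Hölder.
-/

namespace GRD

open Real Filter Topology
open scoped BoundedContinuousFunction

section HeatKernel

open Polynomial

/-! ### The Gaussian profile and its derivatives -/

/-- The polynomial factor of the `k`-th derivative of the Gaussian `exp (-z² / (4d))`, up to the
sign `(-1)^k`: a rescaled Hermite polynomial. -/
def scaledHermite (d : ℝ) : ℕ → ℝ[X]
  | 0 => 1
  | k + 1 => C (2 * d)⁻¹ * X * scaledHermite d k - derivative (scaledHermite d k)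

/-- `(-1)^k` times the `k`-th derivative of the kernel of `∂ₜ - d ∂ₓ²` at time `1`. -/
def heatProfile (d : ℝ) (k : ℕ) (z : ℝ) : ℝ :=
  (scaledHermite d k).eval z * ((√(4 * π * d))⁻¹ * exp (-z ^ 2 / (4 * d)))

@[fun_prop]
lemma continuous_heatProfile (d : ℝ) (k : ℕ) : Continuous (heatProfile d k) := by
  unfold heatProfile
  fun_prop

lemma hasDerivAt_heatProfile (d : ℝ) (k : ℕ) (z : ℝ) :
    HasDerivAt (heatProfile d k) (-heatProfile d (k + 1) z) z := by
  have hexponent : HasDerivAt (fun z : ℝ => -z ^ 2 / (4 * d)) (-(2 * z) / (4 * d)) z := by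
    simpa using ((hasDerivAt_pow 2 z).neg).div_const (4 * d)
  have h := ((scaledHermite d k).hasDerivAt z).mul (hexponent.exp.const_mul (√(4 * π * d))⁻¹)
  refine HasDerivAt.congr_deriv (f := heatProfile d k) h ?_
  simp only [heatProfile, scaledHermite, eval_sub, eval_mul, eval_C, eval_X]
  ring

lemma tendsto_rpow_mul_eval_mul_exp_cocompact (p : ℝ[X]) {s b : ℝ} (hs : 0 ≤ s) (hb : 0 < b) :
    Tendsto (fun z => |z| ^ s * p.eval z * exp (-b * z ^ 2)) (cocompact ℝ) (𝓝 0) := by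
  induction p using Polynomial.induction_on' with
  | add p q hp hq => simpa [mul_add, add_mul] using hp.add hq
  | monomial n c =>
    have h := (tendsto_rpow_abs_mul_exp_neg_mul_sq_cocompact hb (s + n)).const_mul |c|
    rw [mul_zero] at h
    refine squeeze_zero_norm (fun z => le_of_eq ?_) h
    rw [eval_monomial, rpow_add_of_nonneg (abs_nonneg z) hs n.cast_nonneg, rpow_natCast]
    simp only [norm_mul, norm_pow, Real.norm_eq_abs, abs_exp, abs_of_nonneg (rpow_nonneg
      (abs_nonneg z) s)]
    ring

lemma exists_rpow_mul_heatProfile_le {d : ℝ} (hd : 0 < d) (k : ℕ) {s : ℝ} (hs : 0 ≤ s) :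
    ∃ A, 0 < A ∧ ∀ z, |z| ^ s * |heatProfile d k z| ≤ A * exp (-(1 / (8 * d)) * z ^ 2) := by
  have hlim := tendsto_rpow_mul_eval_mul_exp_cocompact (scaledHermite d k) hs
    (b := 1 / (8 * d)) (by positivity)
  have hcont : Continuous fun z : ℝ =>
      |z| ^ s * (scaledHermite d k).eval z * exp (-(1 / (8 * d)) * z ^ 2) := by fun_prop
  set F : ZeroAtInftyContinuousMap ℝ ℝ := ⟨⟨_, hcont⟩, hlim⟩
  set c := (√(4 * π * d))⁻¹
  have : 0 < c := by positivity
  refine ⟨(‖F.toBCF‖ + 1) * c, by positivity, fun z => ?_⟩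
  have hbound : |F z| ≤ ‖F.toBCF‖ + 1 := (F.toBCF.norm_coe_le_norm z).trans (by linarith)
  have hsplit : exp (-z ^ 2 / (4 * d)) =
      exp (-(1 / (8 * d)) * z ^ 2) * exp (-(1 / (8 * d)) * z ^ 2) := by
    rw [← exp_add]; congr 1; field_simp; ring
  have hF_abs : |F z| = |z| ^ s * |(scaledHermite d k).eval z| * exp (-(1 / (8 * d)) * z ^ 2) := by
    change |(|z| ^ s * (scaledHermite d k).eval z * exp (-(1 / (8 * d)) * z ^ 2))| = _
    rw [abs_mul, abs_mul, abs_exp, abs_of_nonneg (rpow_nonneg (abs_nonneg z) s)]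
  calc |z| ^ s * |heatProfile d k z| = |F z| * c * exp (-(1 / (8 * d)) * z ^ 2) := by
        rw [hF_abs, heatProfile, abs_mul, abs_of_pos (a := _ * exp _) (by positivity), hsplit]
        ring
    _ ≤ _ := by gcongr

lemma exists_heatProfile_le {d : ℝ} (hd : 0 < d) (k : ℕ) :
    ∃ A, 0 < A ∧ ∀ z, |heatProfile d k z| ≤ A * exp (-(1 / (8 * d)) * z ^ 2) := by
  simpa using exists_rpow_mul_heatProfile_le hd k le_rfl

lemma integrable_rpow_mul_heatProfile {d s : ℝ} (hd : 0 < d) (hs : 0 ≤ s) (k : ℕ) :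
    Integrable fun z => |z| ^ s * |heatProfile d k z| := by
  obtain ⟨A, -, hA⟩ := exists_rpow_mul_heatProfile_le hd k hs
  refine ((integrable_exp_neg_mul_sq (b := 1 / (8 * d)) (by positivity)).const_mul A).mono'
    (by fun_prop) (ae_of_all _ fun z => ?_)
  rw [norm_of_nonneg (by positivity)]
  exact hA z

lemma integrable_heatProfile {d : ℝ} (hd : 0 < d) (k : ℕ) : Integrable (heatProfile d k) := by
  have h := integrable_rpow_mul_heatProfile hd le_rfl k
  simp only [rpow_zero, one_mul] at h
  exact (integrable_norm_iff (by fun_prop)).1 h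

lemma integral_heatProfile_zero {d : ℝ} (hd : 0 < d) : ∫ z, heatProfile d 0 z = 1 := by
  have hexp (z : ℝ) : exp (-z ^ 2 / (4 * d)) = exp (-(1 / (4 * d)) * z ^ 2) := by congr 1; ring
  have hvar : π / (1 / (4 * d)) = 4 * π * d := by field_simp
  simp only [heatProfile, scaledHermite, eval_one, one_mul, hexp]
  rw [integral_const_mul, integral_gaussian, hvar]
  exact inv_mul_cancel₀ (by positivity)

lemma tendsto_heatProfile_cocompact {d : ℝ} (hd : 0 < d) (k : ℕ) :
    Tendsto (heatProfile d k) (cocompact ℝ) (𝓝 0) := by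
  obtain ⟨A, -, hA⟩ := exists_heatProfile_le hd k
  refine squeeze_zero_norm hA ?_
  simpa using (tendsto_rpow_abs_mul_exp_neg_mul_sq_cocompact (a := 1 / (8 * d))
    (by positivity) 0).const_mul A

lemma integral_heatProfile_succ {d : ℝ} (hd : 0 < d) (k : ℕ) :
    ∫ z, heatProfile d (k + 1) z = 0 := by
  have h := integral_of_hasDerivAt_of_tendsto (hasDerivAt_heatProfile d k)
    (integrable_heatProfile hd (k + 1)).neg
    ((tendsto_heatProfile_cocompact hd k).mono_left atBot_le_cocompact)
    ((tendsto_heatProfile_cocompact hd k).mono_left atTop_le_cocompact)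
  rw [integral_neg] at h
  linarith

/-! ### The heat flow and its derivatives -/

/-- The mean of `w` around `x` at scale `σ`, with respect to the density `ψ`. -/
def scaledMean (ψ w : ℝ → ℝ) (σ x : ℝ) : ℝ := ∫ z, w (x + σ * z) * ψ z

lemma integrable_scaledMean {ψ w : ℝ → ℝ} (hψ : Integrable ψ) (hw : Continuous w) {A : ℝ}
    (hA : ∀ x, |w x| ≤ A) (σ x : ℝ) : Integrable fun z => w (x + σ * z) * ψ z :=
  hψ.bdd_mul (c := A) (by fun_prop) (ae_of_all _ fun _ => hA _)

lemma abs_scaledMean_le {ψ w : ℝ → ℝ} (hψ : Integrable ψ) {A : ℝ} (hA : ∀ x, |w x| ≤ A)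
    (σ x : ℝ) : |scaledMean ψ w σ x| ≤ A * ∫ z, |ψ z| := by
  rw [scaledMean, ← integral_const_mul, ← Real.norm_eq_abs]
  refine norm_integral_le_of_norm_le (hψ.abs.const_mul A) (ae_of_all _ fun z => ?_)
  rw [norm_mul]
  exact mul_le_mul_of_nonneg_right (hA _) (abs_nonneg _)

lemma scaledMean_eq_integral_div (ψ w : ℝ → ℝ) {σ : ℝ} (hσ : 0 < σ) (x : ℝ) :
    scaledMean ψ w σ x = σ⁻¹ * ∫ y, w y * ψ ((y - x) / σ) := by
  have hscale := Measure.integral_comp_mul_left (fun y => w (x + y) * ψ (y / σ)) σ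
  have hshift := integral_add_left_eq_self (μ := volume) (fun y => w y * ψ ((y - x) / σ)) x
  simp only [add_sub_cancel_left] at hshift
  simp only [mul_div_cancel_left₀ _ hσ.ne'] at hscale
  rw [hshift, abs_of_pos (by positivity), smul_eq_mul] at hscale
  exact hscale

/-- The `k`-th spatial derivative, up to the sign `(-1)^k`, of the kernel of `∂ₜ - d ∂ₓ²`. -/
def heatKernel (d : ℝ) (k : ℕ) (τ y : ℝ) : ℝ := ((√τ) ^ (k + 1))⁻¹ * heatProfile d k (y / √τ)

/-- The `k`-th spatial derivative at `(x, τ)` of the solution of `wₜ = d wₓₓ` with initial data `w`;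
rescaling the kernel to unit time makes the formula for `k = 0` meaningful at `τ = 0` too. -/
def heatFlow (d : ℝ) (k : ℕ) (w : ℝ → ℝ) (x τ : ℝ) : ℝ :=
  ((√τ) ^ k)⁻¹ * scaledMean (heatProfile d k) w (√τ) x

lemma heatFlow_zero_zero {d : ℝ} (hd : 0 < d) (w : ℝ → ℝ) (x : ℝ) : heatFlow d 0 w x 0 = w x := by
  simp [heatFlow, scaledMean, integral_const_mul, integral_heatProfile_zero hd]

lemma heatFlow_eq_integral_heatKernel (d : ℝ) (k : ℕ) (w : ℝ → ℝ) (x : ℝ) {τ : ℝ} (hτ : 0 < τ) :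
    heatFlow d k w x τ = ∫ y, w y * heatKernel d k τ (y - x) := by
  rw [heatFlow, scaledMean_eq_integral_div _ _ (by positivity), ← mul_assoc, ← mul_inv, ← pow_succ,
    ← integral_const_mul]
  simp only [heatKernel, mul_left_comm]

@[fun_prop]
lemma continuous_heatKernel (d : ℝ) (k : ℕ) (τ : ℝ) : Continuous (heatKernel d k τ) := by
  unfold heatKernel
  fun_prop

lemma integrable_heatKernel {d : ℝ} (hd : 0 < d) (k : ℕ) {τ : ℝ} (hτ : 0 < τ) :
    Integrable (heatKernel d k τ) :=
  ((integrable_heatProfile hd k).comp_div (by positivity)).const_mul _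

lemma hasDerivAt_heatKernel_space (d : ℝ) (k : ℕ) {τ : ℝ} (hτ : 0 < τ) (y : ℝ) :
    HasDerivAt (heatKernel d k τ) (-heatKernel d (k + 1) τ y) y := by
  have h := (((hasDerivAt_heatProfile d k (y / √τ)).comp y
    ((hasDerivAt_id y).div_const (√τ)))).const_mul ((√τ) ^ (k + 1))⁻¹
  refine h.congr_deriv ?_
  have := sqrt_pos.2 hτ
  rw [heatKernel]
  field_simp
  ring

lemma hasDerivAt_heatKernel_time {d : ℝ} (hd : 0 < d) (y : ℝ) {τ : ℝ} (hτ : 0 < τ) :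
    HasDerivAt (fun τ => heatKernel d 0 τ y) (d * heatKernel d 2 τ y) τ := by
  have hq : 0 < √τ := sqrt_pos.2 hτ
  have hinv : HasDerivAt (fun τ => (√τ)⁻¹) (-(1 / (2 * √τ)) / (√τ) ^ 2) τ :=
    (hasDerivAt_sqrt hτ.ne').inv hq.ne'
  have hquot : HasDerivAt (fun τ => y / √τ) (y * (-(1 / (2 * √τ)) / (√τ) ^ 2)) τ := by
    simpa only [div_eq_mul_inv] using hinv.const_mul y
  have h := hinv.mul ((hasDerivAt_heatProfile d 0 (y / √τ)).comp τ hquot)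
  refine (h.congr_of_eventuallyEq (Eventually.of_forall fun τ => by
    simp [heatKernel])).congr_deriv ?_
  simp only [Function.comp, heatKernel, heatProfile, scaledHermite, eval_one, eval_sub, eval_mul,
    eval_C, eval_X, derivative_one, derivative_C, derivative_X, derivative_mul, derivative_sub,
    eval_zero, eval_add, derivative_zero]
  field_simp
  ring

lemma exists_heatKernel_le {d : ℝ} (hd : 0 < d) (k : ℕ) :
    ∃ A, 0 < A ∧ ∀ τ > 0, ∀ y,
      |heatKernel d k τ y| ≤ A * ((√τ) ^ (k + 1))⁻¹ * exp (-y ^ 2 / (8 * d * τ)) := by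
  obtain ⟨A, hA, hle⟩ := exists_heatProfile_le hd k
  refine ⟨A, hA, fun τ hτ y => ?_⟩
  rw [heatKernel, abs_mul, abs_of_pos (by positivity), mul_comm A, mul_assoc]
  gcongr
  refine (hle _).trans_eq ?_
  rw [div_pow, sq_sqrt hτ.le]
  congr 2
  field_simp

lemma integrable_exp_neg_sq_div (c : ℝ) {v : ℝ} (hv : 0 < v) :
    Integrable fun y : ℝ => exp (-(y - c) ^ 2 / v) := by
  refine ((integrable_exp_neg_mul_sq (b := 1 / v) (by positivity)).comp_sub_right c).congr
    (ae_of_all _ fun y => ?_)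
  simp only
  congr 1
  ring

lemma hasDerivAt_integral_mul_of_dominated {w : ℝ → ℝ} (hw : Continuous w) {A : ℝ}
    (hA : ∀ x, |w x| ≤ A) {κ κ' : ℝ → ℝ → ℝ} {p : ℝ} {s : Set ℝ} (hs : s ∈ 𝓝 p) {b : ℝ → ℝ}
    (hcont : ∀ q, Continuous (κ q)) (hcont' : Continuous (κ' p)) (hint : Integrable (κ p))
    (hb : Integrable b) (hbound : ∀ y, ∀ q ∈ s, |κ' q y| ≤ b y)
    (hderiv : ∀ y, ∀ q ∈ s, HasDerivAt (fun q => κ q y) (κ' q y) q) :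
    HasDerivAt (fun q => ∫ y, w y * κ q y) (∫ y, w y * κ' p y) p := by
  refine (hasDerivAt_integral_of_dominated_loc_of_deriv_le (F := fun q y => w y * κ q y)
    (F' := fun q y => w y * κ' q y) (bound := fun y => A * b y) hs
    (Eventually.of_forall fun q => (hw.mul (hcont q)).aestronglyMeasurable)
    (hint.bdd_mul (c := A) (by fun_prop) (ae_of_all _ fun y => hA y))
    (hw.mul hcont').aestronglyMeasurable (ae_of_all _ fun y q hq => ?_) (hb.const_mul A)
    (ae_of_all _ fun y q hq => (hderiv y q hq).const_mul _)).2
  rw [norm_mul]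
  exact mul_le_mul (hA y) (hbound y q hq) (norm_nonneg _) ((abs_nonneg _).trans (hA y))

lemma hasDerivAt_heatFlow_space {d : ℝ} (hd : 0 < d) (k : ℕ) {w : ℝ → ℝ} (hw : Continuous w)
    {A : ℝ} (hA : ∀ x, |w x| ≤ A) (x : ℝ) {τ : ℝ} (hτ : 0 < τ) :
    HasDerivAt (fun x => heatFlow d k w x τ) (heatFlow d (k + 1) w x τ) x := by
  simp only [heatFlow_eq_integral_heatKernel _ _ _ _ hτ]
  obtain ⟨C, hC, hle⟩ := exists_heatKernel_le hd (k + 1)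
  set c := C * ((√τ) ^ (k + 1 + 1))⁻¹
  have hc : 0 < c := by positivity
  refine hasDerivAt_integral_mul_of_dominated hw hA (Metric.ball_mem_nhds x (sqrt_pos.2 hτ))
    (κ := fun x y => heatKernel d k τ (y - x)) (κ' := fun x y => heatKernel d (k + 1) τ (y - x))
    (b := fun y => c * (exp (1 / (8 * d)) * exp (-(y - x) ^ 2 / (16 * d * τ))))
    (fun _ => by fun_prop) (by fun_prop) ((integrable_heatKernel hd k hτ).comp_sub_right x)
    (((integrable_exp_neg_sq_div x (by positivity)).const_mul _).const_mul _) ?_ ?_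
  · intro y q hq
    refine (hle τ hτ _).trans (mul_le_mul_of_nonneg_left ?_ hc.le)
    have hq' : (q - x) ^ 2 ≤ τ := by
      rw [Metric.mem_ball, Real.dist_eq] at hq
      rw [← sq_abs, ← sq_sqrt hτ.le]
      gcongr
    have hsq : (y - x) ^ 2 ≤ 2 * (y - q) ^ 2 + 2 * τ := by
      nlinarith [sq_nonneg ((y - q) - (q - x))]
    rw [← exp_add]
    gcongr
    rw [show 1 / (8 * d) + -(y - x) ^ 2 / (16 * d * τ) = (2 * τ - (y - x) ^ 2) / (16 * d * τ) by
        field_simp; ring,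
      show -(y - q) ^ 2 / (8 * d * τ) = -(2 * (y - q) ^ 2) / (16 * d * τ) by field_simp; ring]
    gcongr
    linarith
  · intro y q _
    exact ((hasDerivAt_heatKernel_space d k hτ (y - q)).comp q
      ((hasDerivAt_id q).const_sub y)).congr_deriv (by ring)

lemma hasDerivAt_heatFlow_time {d : ℝ} (hd : 0 < d) {w : ℝ → ℝ} (hw : Continuous w) {A : ℝ}
    (hA : ∀ x, |w x| ≤ A) (x : ℝ) {τ : ℝ} (hτ : 0 < τ) :
    HasDerivAt (fun τ => heatFlow d 0 w x τ) (d * heatFlow d 2 w x τ) τ := by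
  have hkernel : (fun τ => heatFlow d 0 w x τ) =ᶠ[𝓝 τ]
      fun τ => ∫ y, w y * heatKernel d 0 τ (y - x) := by
    filter_upwards [lt_mem_nhds hτ] with τ hτ
    exact heatFlow_eq_integral_heatKernel _ _ _ _ hτ
  refine HasDerivAt.congr_of_eventuallyEq ?_ hkernel
  rw [heatFlow_eq_integral_heatKernel _ _ _ _ hτ, ← integral_const_mul]
  simp only [mul_left_comm d]
  obtain ⟨C, hC, hle⟩ := exists_heatKernel_le hd 2
  refine hasDerivAt_integral_mul_of_dominated hw hA
    (Ioo_mem_nhds (half_lt_self hτ) (lt_two_mul_self hτ))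
    (κ := fun τ y => heatKernel d 0 τ (y - x)) (κ' := fun τ y => d * heatKernel d 2 τ (y - x))
    (b := fun y => d * (C * ((√(τ / 2)) ^ 3)⁻¹ * exp (-(y - x) ^ 2 / (16 * d * τ))))
    (fun _ => by fun_prop) (by fun_prop) ((integrable_heatKernel hd 0 hτ).comp_sub_right x)
    (((integrable_exp_neg_sq_div x (by positivity)).const_mul _).const_mul _) ?_ ?_
  · intro y q hq
    have hq0 : 0 < q := (half_pos hτ).trans hq.1
    have := half_pos hτ
    rw [abs_mul, abs_of_pos hd]
    refine mul_le_mul_of_nonneg_left ((hle q hq0 _).trans ?_) hd.le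
    gcongr ?_ * ?_
    · gcongr
      exact hq.1.le
    · refine exp_le_exp.2 ?_
      rw [neg_div, neg_div, neg_le_neg_iff]
      refine div_le_div_of_nonneg_left (sq_nonneg _) (by positivity) ?_
      nlinarith [hq.2]
  · exact fun y q hq => hasDerivAt_heatKernel_time hd (y - x) ((half_pos hτ).trans hq.1)

end HeatKernel

/-! ### Smoothing estimates for the heat flow -/

lemma inv_sqrt_pow_mul_sqrt_rpow {τ : ℝ} (hτ : 0 < τ) (k : ℕ) (γ : ℝ) :
    ((√τ) ^ k)⁻¹ * (√τ) ^ γ = τ ^ (-((k - γ) / 2)) := by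
  rw [sqrt_eq_rpow, ← rpow_natCast, ← rpow_neg (by positivity), ← rpow_mul hτ.le,
    ← rpow_mul hτ.le, ← rpow_add hτ]
  ring_nf

lemma inv_sqrt_pow_eq_rpow {τ : ℝ} (hτ : 0 < τ) (k : ℕ) : ((√τ) ^ k)⁻¹ = τ ^ (-(k / 2) : ℝ) := by
  simpa using inv_sqrt_pow_mul_sqrt_rpow hτ k 0

lemma abs_heatFlow_le {d : ℝ} (hd : 0 < d) (k : ℕ) {w : ℝ → ℝ} {A : ℝ} (hA : ∀ x, |w x| ≤ A)
    (x : ℝ) {τ : ℝ} (hτ : 0 < τ) :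
    |heatFlow d k w x τ| ≤ A * (∫ z, |heatProfile d k z|) * τ ^ (-(k / 2) : ℝ) := by
  rw [heatFlow, abs_mul, abs_of_pos (by positivity), inv_sqrt_pow_eq_rpow hτ, mul_comm]
  gcongr
  exact abs_scaledMean_le (integrable_heatProfile hd k) hA _ _

lemma abs_heatFlow_succ_le_of_holder {d α : ℝ} (hd : 0 < d) (hα : 0 ≤ α) (k : ℕ) {w : ℝ → ℝ}
    (hw : Continuous w) {B : ℝ} (hB : ∀ x, |w x| ≤ B) {A : ℝ}
    (hA : ∀ x y, |w x - w y| ≤ A * |x - y| ^ α) (x : ℝ) {τ : ℝ} (hτ : 0 < τ) :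
    |heatFlow d (k + 1) w x τ| ≤
      A * (∫ z, |z| ^ α * |heatProfile d (k + 1) z|) * τ ^ (-((k + 1 - α) / 2)) := by
  have hψ := integrable_heatProfile hd (k + 1)
  -- the profile has mean zero, so `w` may be replaced by its increment from `x`
  have hcentre : scaledMean (heatProfile d (k + 1)) w (√τ) x =
      ∫ z, (w (x + √τ * z) - w x) * heatProfile d (k + 1) z := by
    simp only [sub_mul]
    rw [integral_sub (integrable_scaledMean hψ hw hB _ x) (hψ.const_mul _), integral_const_mul,
      integral_heatProfile_succ hd, mul_zero, sub_zero, scaledMean]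
  have hmean : |scaledMean (heatProfile d (k + 1)) w (√τ) x| ≤
      A * (√τ) ^ α * ∫ z, |z| ^ α * |heatProfile d (k + 1) z| := by
    rw [hcentre, ← integral_const_mul, ← Real.norm_eq_abs]
    refine norm_integral_le_of_norm_le ((integrable_rpow_mul_heatProfile hd hα _).const_mul _)
      (ae_of_all _ fun z => ?_)
    rw [norm_mul, Real.norm_eq_abs, Real.norm_eq_abs, ← mul_assoc]
    refine mul_le_mul_of_nonneg_right ((hA _ _).trans_eq ?_) (abs_nonneg _)
    rw [add_sub_cancel_left, abs_mul, abs_of_nonneg (sqrt_nonneg τ),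
      mul_rpow (sqrt_nonneg τ) (abs_nonneg z), mul_assoc]
  rw [heatFlow, abs_mul, abs_of_pos (by positivity)]
  calc ((√τ) ^ (k + 1))⁻¹ * |scaledMean (heatProfile d (k + 1)) w (√τ) x|
      ≤ ((√τ) ^ (k + 1))⁻¹ * (A * (√τ) ^ α * ∫ z, |z| ^ α * |heatProfile d (k + 1) z|) := by
        gcongr
    _ = A * (∫ z, |z| ^ α * |heatProfile d (k + 1) z|) *
          (((√τ) ^ (k + 1))⁻¹ * (√τ) ^ α) := by ring
    _ = _ := by rw [inv_sqrt_pow_mul_sqrt_rpow hτ]; push_cast; rfl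

lemma min_one_le_rpow {q α : ℝ} (hq : 0 ≤ q) (hα : 0 ≤ α) (hα1 : α ≤ 1) : min 1 q ≤ q ^ α := by
  rcases le_total q 1 with h | h
  · exact (min_le_right _ _).trans (by simpa using rpow_le_rpow_of_exponent_ge' hq h hα hα1)
  · exact (min_le_left _ _).trans (one_le_rpow h hα)

lemma exists_abs_heatFlow_sub_le {d α : ℝ} (hd : 0 < d) (hα : 0 ≤ α) (hα1 : α ≤ 1) (k : ℕ) :
    ∃ C, 0 ≤ C ∧ ∀ (w : ℝ → ℝ) (A : ℝ), Continuous w → (∀ x, |w x| ≤ A) → ∀ τ > 0, ∀ x y,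
      |heatFlow d k w x τ - heatFlow d k w y τ| ≤
        C * A * |x - y| ^ α * τ ^ (-((k + α) / 2)) := by
  set I₀ := ∫ z, |heatProfile d k z|
  set I₁ := ∫ z, |heatProfile d (k + 1) z|
  have hI₀ : 0 ≤ I₀ := integral_nonneg fun _ => abs_nonneg _
  have hI₁ : 0 ≤ I₁ := integral_nonneg fun _ => abs_nonneg _
  refine ⟨2 * I₀ + I₁, by positivity, fun w A hw hA τ hτ x y => ?_⟩
  have hA0 : 0 ≤ A := (abs_nonneg _).trans (hA 0)
  set D := |heatFlow d k w x τ - heatFlow d k w y τ|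
  set q := |x - y| * τ ^ (-(1 / 2) : ℝ) with hq
  have htrivial : D ≤ 2 * I₀ * A * τ ^ (-(k / 2) : ℝ) :=
    (abs_sub _ _).trans (by linarith [abs_heatFlow_le hd k hA x hτ, abs_heatFlow_le hd k hA y hτ])
  have hlipschitz : D ≤ I₁ * A * τ ^ (-(k / 2) : ℝ) * q := by
    refine (convex_univ.norm_image_sub_le_of_norm_hasDerivWithin_le
      (f := fun x => heatFlow d k w x τ)
      (fun x _ => (hasDerivAt_heatFlow_space hd k hw hA x hτ).hasDerivWithinAt)
      (fun x _ => abs_heatFlow_le hd (k + 1) hA x hτ) (mem_univ y) (mem_univ x)).trans_eq ?_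
    have hpow : τ ^ (-((k + 1 : ℕ) / 2) : ℝ) = τ ^ (-(k / 2) : ℝ) * τ ^ (-(1 / 2) : ℝ) := by
      rw [← rpow_add hτ]; push_cast; ring_nf
    rw [hpow, hq, Real.norm_eq_abs]
    ring
  have hinterpolate : D ≤ (2 * I₀ + I₁) * A * τ ^ (-(k / 2) : ℝ) * min 1 q := by
    have hq0 : 0 ≤ q := by positivity
    have hK : 0 ≤ A * τ ^ (-(k / 2) : ℝ) := by positivity
    rcases le_total q 1 with h | h
    · rw [min_eq_right h]
      nlinarith [mul_nonneg (mul_nonneg hI₀ hK) hq0]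
    · rw [min_eq_left h]
      nlinarith [mul_nonneg hI₁ hK]
  have hpow : q ^ α = |x - y| ^ α * τ ^ (-(α / 2)) := by
    rw [hq, mul_rpow (abs_nonneg _) (by positivity), ← rpow_mul hτ.le]; ring_nf
  calc D ≤ (2 * I₀ + I₁) * A * τ ^ (-(k / 2) : ℝ) * q ^ α := by
        refine hinterpolate.trans ?_
        gcongr
        exact min_one_le_rpow (by positivity) hα hα1
    _ = (2 * I₀ + I₁) * A * |x - y| ^ α * (τ ^ (-(k / 2) : ℝ) * τ ^ (-(α / 2))) := by
        rw [hpow]; ring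
    _ = _ := by rw [← rpow_add hτ]; ring_nf

/-! ### Functions on the half plane with a power singularity at time zero -/

/-- Joint continuity of a function of `(x, t)` at positive times. -/
def ContinuousPos (h : ℝ → ℝ → ℝ) : Prop :=
  ContinuousOn (fun p : ℝ × ℝ => h p.1 p.2) {p | 0 < p.2}

/-- `h x t = O(t ^ (-a))`, uniformly in `x` and for `t` in bounded intervals. -/
def WeightedBdd (a : ℝ) (h : ℝ → ℝ → ℝ) : Prop :=
  ∀ T > 0, ∃ A, 0 ≤ A ∧ ∀ x s, 0 < s → s ≤ T → |h x s| ≤ A * s ^ (-a)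

/-- The `α`-Hölder constant of `h · t` is `O(t ^ (-a))`, uniformly for `t` in bounded intervals. -/
def WeightedHolder (α a : ℝ) (h : ℝ → ℝ → ℝ) : Prop :=
  ∀ T > 0, ∃ A, 0 ≤ A ∧ ∀ x y s, 0 < s → s ≤ T → |h x s - h y s| ≤ A * |x - y| ^ α * s ^ (-a)

lemma isOpen_snd_pos : IsOpen {p : ℝ × ℝ | 0 < p.2} := isOpen_lt continuous_const continuous_snd

lemma ContinuousPos.space {h : ℝ → ℝ → ℝ} (hh : ContinuousPos h) {s : ℝ} (hs : 0 < s) :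
    Continuous fun y => h y s :=
  hh.comp_continuous (f := fun y => ((y, s) : ℝ × ℝ)) (by fun_prop) fun _ => hs

lemma ContinuousPos.time {h : ℝ → ℝ → ℝ} (hh : ContinuousPos h) (x : ℝ) :
    ContinuousOn (fun t => h x t) (Ioi 0) :=
  ContinuousOn.comp (f := fun t : ℝ => (x, t)) hh (by fun_prop) fun _ ht => ht

lemma continuousPos_of_space {w : ℝ → ℝ} (hw : Continuous w) : ContinuousPos fun x _ => w x :=
  (hw.comp continuous_fst).continuousOn

lemma weightedBdd_of_space {w : ℝ → ℝ} {A : ℝ} (hA : ∀ x, |w x| ≤ A) :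
    WeightedBdd 0 fun x _ => w x :=
  fun _ _ => ⟨A, (abs_nonneg _).trans (hA 0), fun x _ _ _ => by simpa using hA x⟩

lemma rpow_neg_le_mul_rpow_neg {a b s T : ℝ} (hab : a ≤ b) (hs : 0 < s) (hT : s ≤ T) :
    s ^ (-a) ≤ T ^ (b - a) * s ^ (-b) := by
  have hsplit : s ^ (-a) = s ^ (b - a) * s ^ (-b) := by rw [← rpow_add hs]; ring_nf
  rw [hsplit]
  gcongr

lemma WeightedBdd.mono {a b : ℝ} {h : ℝ → ℝ → ℝ} (hh : WeightedBdd a h) (hab : a ≤ b) :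
    WeightedBdd b h := by
  intro T hT
  obtain ⟨A, hA, hle⟩ := hh T hT
  refine ⟨A * T ^ (b - a), by positivity, fun x s hs hsT => (hle x s hs hsT).trans ?_⟩
  rw [mul_assoc]
  gcongr
  exact rpow_neg_le_mul_rpow_neg hab hs hsT

lemma WeightedHolder.mono {α a b : ℝ} {h : ℝ → ℝ → ℝ} (hh : WeightedHolder α a h) (hab : a ≤ b) :
    WeightedHolder α b h := by
  intro T hT
  obtain ⟨A, hA, hle⟩ := hh T hT
  refine ⟨A * T ^ (b - a), by positivity, fun x y s hs hsT => (hle x y s hs hsT).trans ?_⟩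
  calc A * |x - y| ^ α * s ^ (-a) ≤ A * |x - y| ^ α * (T ^ (b - a) * s ^ (-b)) := by
        gcongr; exact rpow_neg_le_mul_rpow_neg hab hs hsT
    _ = _ := by ring

lemma WeightedBdd.exists_abs_le {a : ℝ} {h : ℝ → ℝ → ℝ} (hh : WeightedBdd a h) {s : ℝ}
    (hs : 0 < s) : ∃ A, ∀ x, |h x s| ≤ A := by
  obtain ⟨A, -, hle⟩ := hh s hs
  exact ⟨_, fun x => hle x s hs le_rfl⟩

lemma WeightedBdd.exists_bound_nhds {a : ℝ} {h : ℝ → ℝ → ℝ} (hh : WeightedBdd a h) {s₀ : ℝ}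
    (hs₀ : 0 < s₀) : ∃ A, ∀ᶠ s in 𝓝 s₀, 0 < s ∧ ∀ x, |h x s| ≤ A := by
  obtain ⟨A, hA, hle⟩ := (hh.mono (le_max_left a 0)) (2 * s₀) (by positivity)
  refine ⟨A * (s₀ / 2) ^ (-max a 0), ?_⟩
  filter_upwards [Ioo_mem_nhds (half_lt_self hs₀) (lt_two_mul_self hs₀)] with s hs
  have hs0 : 0 < s := (half_pos hs₀).trans hs.1
  refine ⟨hs0, fun x => (hle x s hs0 hs.2.le).trans (mul_le_mul_of_nonneg_left ?_ hA)⟩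
  exact rpow_le_rpow_of_nonpos (half_pos hs₀) hs.1.le (by simp)

lemma continuousOn_scaledMean {ψ : ℝ → ℝ} (hψ : Integrable ψ) (hψc : Continuous ψ)
    {h : ℝ → ℝ → ℝ} (hc : ContinuousPos h) {a : ℝ} (hb : WeightedBdd a h) :
    ContinuousOn (fun p : ℝ × ℝ × ℝ => scaledMean ψ (fun y => h y p.2.1) p.2.2 p.1)
      {p | 0 < p.2.1} := by
  rintro ⟨x₀, s₀, σ₀⟩ hs₀
  refine ContinuousAt.continuousWithinAt ?_
  obtain ⟨A, hA⟩ := hb.exists_bound_nhds hs₀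
  have hnear : ∀ᶠ p : ℝ × ℝ × ℝ in 𝓝 (x₀, s₀, σ₀), 0 < p.2.1 ∧ ∀ x, |h x p.2.1| ≤ A :=
    (show ContinuousAt (fun p : ℝ × ℝ × ℝ => p.2.1) (x₀, s₀, σ₀) by fun_prop).eventually hA
  unfold scaledMean
  refine continuousAt_of_dominated (bound := fun z => A * |ψ z|) ?_ ?_ (hψ.abs.const_mul _)
    (ae_of_all _ fun z => ContinuousAt.mul ?_ continuousAt_const)
  · filter_upwards [hnear] with p hp
    exact (((hc.space hp.1).comp (by fun_prop)).mul hψc).aestronglyMeasurable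
  · filter_upwards [hnear] with p hp
    refine ae_of_all _ fun z => ?_
    rw [norm_mul]
    exact mul_le_mul_of_nonneg_right (hp.2 _) (abs_nonneg _)
  · exact ContinuousAt.comp (x := (x₀, s₀, σ₀)) (f := fun p : ℝ × ℝ × ℝ => (p.1 + p.2.2 * z, p.2.1))
      (g := fun p : ℝ × ℝ => h p.1 p.2) (hc.continuousAt (isOpen_snd_pos.mem_nhds hs₀))
      (by fun_prop)

lemma continuousOn_heatFlow_zero {d : ℝ} (hd : 0 < d) {h : ℝ → ℝ → ℝ} (hc : ContinuousPos h)
    {a : ℝ} (hb : WeightedBdd a h) :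
    ContinuousOn (fun p : ℝ × ℝ × ℝ => heatFlow d 0 (fun y => h y p.2.1) p.1 p.2.2)
      {p | 0 < p.2.1} := by
  simp only [heatFlow, pow_zero, inv_one, one_mul]
  exact (continuousOn_scaledMean (integrable_heatProfile hd 0) (by fun_prop) hc hb).comp
    (f := fun p : ℝ × ℝ × ℝ => (p.1, p.2.1, √p.2.2)) (by fun_prop) fun p hp => hp

lemma continuousOn_heatFlow {d : ℝ} (hd : 0 < d) (k : ℕ) {h : ℝ → ℝ → ℝ} (hc : ContinuousPos h)
    {a : ℝ} (hb : WeightedBdd a h) :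
    ContinuousOn (fun p : ℝ × ℝ × ℝ => heatFlow d k (fun y => h y p.2.1) p.1 p.2.2)
      {p | 0 < p.2.1 ∧ 0 < p.2.2} := by
  refine ContinuousOn.mul (ContinuousOn.inv₀ (by fun_prop) ?_) ?_
  · rintro p ⟨-, hτ⟩
    exact pow_ne_zero _ (sqrt_pos.2 hτ).ne'
  · exact (continuousOn_scaledMean (integrable_heatProfile hd k) (by fun_prop) hc hb).comp
      (f := fun p : ℝ × ℝ × ℝ => (p.1, p.2.1, √p.2.2)) (by fun_prop) fun p hp => hp.1

/-! ### The Duhamel operator -/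

lemma integrableOn_rpow_mul_one_sub_rpow {p a : ℝ} (hp : p < 1) (ha : a < 1) :
    IntegrableOn (fun r : ℝ => r ^ (-p) * (1 - r) ^ (-a)) (Ioo 0 1) := by
  have h := Complex.betaIntegral_convergent (u := (1 - p : ℝ)) (v := (1 - a : ℝ))
    (by simpa using hp) (by simpa using ha)
  rw [intervalIntegrable_iff_integrableOn_Ioo_of_le zero_le_one] at h
  refine IntegrableOn.congr_fun h.norm (fun r hr => ?_) measurableSet_Ioo
  have hr' : (1 - r : ℂ) = ((1 - r : ℝ) : ℂ) := by push_cast; rfl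
  simp only [norm_mul, hr', Complex.norm_cpow_eq_rpow_re_of_pos hr.1,
    Complex.norm_cpow_eq_rpow_re_of_pos (sub_pos.2 hr.2)]
  simp

/-- The Beta integral `B(1 - p, 1 - a)`, the constant produced by convolving `τ ^ (-p)` with
`s ^ (-a)`. -/
def betaMass (p a : ℝ) : ℝ := ∫ r in Ioo (0 : ℝ) 1, r ^ (-p) * (1 - r) ^ (-a)

lemma betaMass_nonneg (p a : ℝ) : 0 ≤ betaMass p a :=
  setIntegral_nonneg measurableSet_Ioo fun _ hr =>
    mul_nonneg (rpow_nonneg hr.1.le _) (rpow_nonneg (sub_pos.2 hr.2).le _)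

lemma abs_le_of_convolution_bound {Φ : ℝ → ℝ → ℝ} {A p a t r : ℝ} (ht : 0 < t)
    (hr : r ∈ Ioo (0 : ℝ) 1)
    (hΦ : ∀ s τ, 0 < s → 0 < τ → s + τ = t → |Φ s τ| ≤ A * τ ^ (-p) * s ^ (-a)) :
    |Φ (t * (1 - r)) (t * r)| ≤ A * t ^ (-p - a) * (r ^ (-p) * (1 - r) ^ (-a)) := by
  have hr0 : 0 < r := hr.1
  have hr1 : 0 < 1 - r := sub_pos.2 hr.2
  refine (hΦ _ _ (by positivity) (by positivity) (by ring)).trans_eq ?_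
  rw [mul_rpow ht.le hr0.le, mul_rpow ht.le hr1.le, sub_eq_add_neg (-p), rpow_add ht]
  ring

lemma abs_integral_le_of_convolution_bound {Φ : ℝ → ℝ → ℝ} {A p a t : ℝ} (ht : 0 < t) (hp : p < 1)
    (ha : a < 1) (hΦ : ∀ s τ, 0 < s → 0 < τ → s + τ = t → |Φ s τ| ≤ A * τ ^ (-p) * s ^ (-a)) :
    |t * ∫ r in Ioo (0 : ℝ) 1, Φ (t * (1 - r)) (t * r)| ≤
      A * betaMass p a * t ^ (-(p + a - 1)) := by
  have hint : |∫ r in Ioo (0 : ℝ) 1, Φ (t * (1 - r)) (t * r)| ≤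
      ∫ r in Ioo (0 : ℝ) 1, A * t ^ (-p - a) * (r ^ (-p) * (1 - r) ^ (-a)) := by
    rw [← Real.norm_eq_abs]
    refine norm_integral_le_of_norm_le
      ((integrableOn_rpow_mul_one_sub_rpow hp ha).const_mul _) ?_
    filter_upwards [self_mem_ae_restrict measurableSet_Ioo] with r hr
    exact abs_le_of_convolution_bound ht hr hΦ
  rw [integral_const_mul] at hint
  rw [abs_mul, abs_of_pos ht]
  calc t * |∫ r in Ioo (0 : ℝ) 1, Φ (t * (1 - r)) (t * r)|
      ≤ t * (A * t ^ (-p - a) * betaMass p a) := by gcongr; exact hint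
    _ = A * betaMass p a * (t ^ (1 : ℝ) * t ^ (-p - a)) := by rw [rpow_one]; ring
    _ = _ := by rw [← rpow_add ht]; ring_nf

/-- The Duhamel integral `∫₀ᵗ ∂ₓᵏ e^{(t-s) d ∂ₓ²} h(·, s) ds`, rescaled by `s = t (1 - r)` so that
the domain of integration does not depend on `t`. -/
def duhamel (d : ℝ) (k : ℕ) (h : ℝ → ℝ → ℝ) (x t : ℝ) : ℝ :=
  t * ∫ r in Ioo (0 : ℝ) 1, heatFlow d k (fun y => h y (t * (1 - r))) x (t * r)

/-- Sources `h` for which `duhamel d k h` is given by an absolutely convergent integral: the kernel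
contributes a singularity `τ ^ (-p)` and the source a singularity `s ^ (-a)`. -/
structure Admissible (d : ℝ) (k : ℕ) (p a : ℝ) (h : ℝ → ℝ → ℝ) : Prop where
  pos : 0 < d
  continuousPos : ContinuousPos h
  weightedBdd : ∃ b, WeightedBdd b h
  bound : ∀ T > 0, ∃ A, 0 ≤ A ∧ ∀ x s τ, 0 < s → s ≤ T → 0 < τ →
    |heatFlow d k (fun y => h y s) x τ| ≤ A * τ ^ (-p) * s ^ (-a)
  kernel_nonneg : 0 ≤ p
  kernel_lt_one : p < 1
  source_nonneg : 0 ≤ a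
  source_lt_one : a < 1

lemma WeightedBdd.admissible {d : ℝ} (hd : 0 < d) {k : ℕ} (hk : k ≤ 1) {a : ℝ} (ha : 0 ≤ a)
    (ha1 : a < 1) {h : ℝ → ℝ → ℝ} (hb : WeightedBdd a h) (hc : ContinuousPos h) :
    Admissible d k (k / 2) a h := by
  have hk' : (k : ℝ) ≤ 1 := by exact_mod_cast hk
  refine ⟨hd, hc, ⟨a, hb⟩, fun T hT => ?_, by positivity, by linarith, ha, ha1⟩
  obtain ⟨A, hA, hle⟩ := hb T hT
  refine ⟨A * ∫ z, |heatProfile d k z|,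
    mul_nonneg hA (integral_nonneg fun _ => abs_nonneg _), fun x s τ hs hsT hτ => ?_⟩
  exact (abs_heatFlow_le hd k (fun x => hle x s hs hsT) x hτ).trans_eq (by ring)

lemma WeightedHolder.admissible {d : ℝ} (hd : 0 < d) {α a b : ℝ} (hα : 0 < α) (hα2 : α ≤ 2)
    (hb0 : 0 ≤ b) (hb1 : b < 1) {h : ℝ → ℝ → ℝ} (hh : WeightedHolder α b h)
    (hb : WeightedBdd a h) (hc : ContinuousPos h) : Admissible d 2 (1 - α / 2) b h := by
  refine ⟨hd, hc, ⟨a, hb⟩, fun T hT => ?_, by linarith, by linarith, hb0, hb1⟩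
  obtain ⟨A, hA, hle⟩ := hh T hT
  refine ⟨A * ∫ z, |z| ^ α * |heatProfile d 2 z|,
    mul_nonneg hA (integral_nonneg fun _ => by positivity), fun x s τ hs hsT hτ => ?_⟩
  obtain ⟨B, hB⟩ := hb.exists_abs_le hs
  refine (abs_heatFlow_succ_le_of_holder hd hα.le 1 (hc.space hs) hB (A := A * s ^ (-b))
    (fun x y => (hle x y s hs hsT).trans_eq (by ring)) x hτ).trans_eq ?_
  norm_num
  ring_nf

section Admissible

variable {d p a : ℝ} {k : ℕ} {h : ℝ → ℝ → ℝ}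

lemma Admissible.weightedBdd_duhamel (H : Admissible d k p a h) :
    WeightedBdd (p + a - 1) (duhamel d k h) := by
  intro T hT
  obtain ⟨A, hA, hle⟩ := H.bound T hT
  exact ⟨A * betaMass p a, mul_nonneg hA (betaMass_nonneg _ _), fun x t ht htT =>
    abs_integral_le_of_convolution_bound ht H.kernel_lt_one H.source_lt_one
      fun s τ hs hτ hst => hle x s τ hs (by linarith) hτ⟩

lemma Admissible.continuousOn_integrand (H : Admissible d k p a h) :
    ContinuousOn
      (fun q : ℝ × ℝ × ℝ => heatFlow d k (fun y => h y (q.2.1 * (1 - q.2.2))) q.1 (q.2.1 * q.2.2))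
      {q | 0 < q.2.1 ∧ q.2.2 ∈ Ioo (0 : ℝ) 1} := by
  obtain ⟨b, hb⟩ := H.weightedBdd
  exact (continuousOn_heatFlow H.pos k H.continuousPos hb).comp
    (f := fun q : ℝ × ℝ × ℝ => (q.1, q.2.1 * (1 - q.2.2), q.2.1 * q.2.2)) (by fun_prop)
    fun q hq => ⟨mul_pos hq.1 (sub_pos.2 hq.2.2), mul_pos hq.1 hq.2.1⟩

lemma Admissible.aestronglyMeasurable_integrand (H : Admissible d k p a h) (x : ℝ) {t : ℝ}
    (ht : 0 < t) :
    AEStronglyMeasurable (fun r => heatFlow d k (fun y => h y (t * (1 - r))) x (t * r))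
      (volume.restrict (Ioo (0 : ℝ) 1)) :=
  (H.continuousOn_integrand.comp (f := fun r : ℝ => ((x, t, r) : ℝ × ℝ × ℝ)) (by fun_prop)
    fun _ hr => ⟨ht, hr⟩).aestronglyMeasurable measurableSet_Ioo

lemma Admissible.integrand_bound (H : Admissible d k p a h) {T : ℝ} (hT : 0 < T) :
    ∃ A, 0 ≤ A ∧ ∀ x t, 0 < t → t ≤ T → ∀ r ∈ Ioo (0 : ℝ) 1,
      |heatFlow d k (fun y => h y (t * (1 - r))) x (t * r)| ≤
        A * t ^ (-p - a) * (r ^ (-p) * (1 - r) ^ (-a)) := by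
  obtain ⟨A, hA, hle⟩ := H.bound T hT
  exact ⟨A, hA, fun x t ht htT r hr => abs_le_of_convolution_bound
    (Φ := fun s τ => heatFlow d k (fun y => h y s) x τ) ht hr
    fun s τ hs hτ hst => hle x s τ hs (by linarith) hτ⟩

lemma Admissible.integrableOn_integrand (H : Admissible d k p a h) (x : ℝ) {t : ℝ} (ht : 0 < t) :
    IntegrableOn (fun r => heatFlow d k (fun y => h y (t * (1 - r))) x (t * r))
      (Ioo (0 : ℝ) 1) := by
  obtain ⟨A, -, hle⟩ := H.integrand_bound ht
  refine ((integrableOn_rpow_mul_one_sub_rpow H.kernel_lt_one H.source_lt_one).const_mul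
    (A * t ^ (-p - a))).mono' (H.aestronglyMeasurable_integrand x ht) ?_
  filter_upwards [self_mem_ae_restrict measurableSet_Ioo] with r hr
  exact hle x t ht le_rfl r hr

lemma Admissible.continuousPos_duhamel (H : Admissible d k p a h) :
    ContinuousPos (duhamel d k h) := by
  rintro ⟨x₀, t₀⟩ (ht₀ : 0 < t₀)
  refine (ContinuousAt.mul continuousAt_snd ?_).continuousWithinAt
  obtain ⟨A, hA, hle⟩ := H.integrand_bound (T := 2 * t₀) (by positivity)
  have hnear : ∀ᶠ q : ℝ × ℝ in 𝓝 (x₀, t₀), q.2 ∈ Ioo (t₀ / 2) (2 * t₀) :=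
    continuousAt_snd.eventually_mem
      (Ioo_mem_nhds (half_lt_self ht₀) (lt_two_mul_self ht₀))
  refine continuousAt_of_dominated
    (F := fun (q : ℝ × ℝ) r => heatFlow d k (fun y => h y (q.2 * (1 - r))) q.1 (q.2 * r))
    (bound := fun r => A * (t₀ / 2) ^ (-p - a) * (r ^ (-p) * (1 - r) ^ (-a))) ?_ ?_
    ((integrableOn_rpow_mul_one_sub_rpow H.kernel_lt_one H.source_lt_one).const_mul _) ?_
  · filter_upwards [hnear] with q hq
    exact H.aestronglyMeasurable_integrand _ ((half_pos ht₀).trans hq.1)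
  · filter_upwards [hnear] with q hq
    filter_upwards [self_mem_ae_restrict measurableSet_Ioo] with r hr
    refine (hle q.1 q.2 ((half_pos ht₀).trans hq.1) hq.2.le r hr).trans ?_
    refine mul_le_mul_of_nonneg_right (mul_le_mul_of_nonneg_left ?_ hA)
      (mul_nonneg (rpow_nonneg hr.1.le _) (rpow_nonneg (sub_pos.2 hr.2).le _))
    exact rpow_le_rpow_of_nonpos (half_pos ht₀) hq.1.le
      (by linarith [H.kernel_nonneg, H.source_nonneg])
  · filter_upwards [self_mem_ae_restrict measurableSet_Ioo] with r hr
    have hopen : IsOpen {q : ℝ × ℝ × ℝ | 0 < q.2.1 ∧ q.2.2 ∈ Ioo (0 : ℝ) 1} :=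
      (isOpen_lt continuous_const continuous_snd.fst).inter
        (isOpen_Ioo.preimage continuous_snd.snd)
    exact ContinuousAt.comp (x := (x₀, t₀)) (f := fun q : ℝ × ℝ => (q.1, q.2, r))
      (g := fun q : ℝ × ℝ × ℝ =>
        heatFlow d k (fun y => h y (q.2.1 * (1 - q.2.2))) q.1 (q.2.1 * q.2.2))
      (H.continuousOn_integrand.continuousAt (hopen.mem_nhds ⟨ht₀, hr⟩)) (by fun_prop)

lemma Admissible.hasDerivAt_duhamel_space (H : Admissible d k p a h) {p' a' : ℝ}
    (H' : Admissible d (k + 1) p' a' h) (x : ℝ) {t : ℝ} (ht : 0 < t) :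
    HasDerivAt (fun x => duhamel d k h x t) (duhamel d (k + 1) h x t) x := by
  obtain ⟨b, hb⟩ := H.weightedBdd
  obtain ⟨A, -, hle⟩ := H'.integrand_bound ht
  refine HasDerivAt.const_mul _ (hasDerivAt_integral_of_dominated_loc_of_deriv_le univ_mem
    (F' := fun x r => heatFlow d (k + 1) (fun y => h y (t * (1 - r))) x (t * r))
    (Eventually.of_forall fun x => H.aestronglyMeasurable_integrand x ht)
    (H.integrableOn_integrand x ht) (H'.aestronglyMeasurable_integrand x ht)
    (bound := fun r => A * t ^ (-p' - a') * (r ^ (-p') * (1 - r) ^ (-a'))) ?_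
    ((integrableOn_rpow_mul_one_sub_rpow H'.kernel_lt_one H'.source_lt_one).const_mul _) ?_).2
  · filter_upwards [self_mem_ae_restrict measurableSet_Ioo] with r hr x _
    exact hle x t ht le_rfl r hr
  · filter_upwards [self_mem_ae_restrict measurableSet_Ioo] with r hr x _
    have hs : 0 < t * (1 - r) := mul_pos ht (sub_pos.2 hr.2)
    obtain ⟨B, hB⟩ := hb.exists_abs_le hs
    exact hasDerivAt_heatFlow_space H.pos k (H.continuousPos.space hs) hB x (mul_pos ht hr.1)

lemma heatFlow_sub {d : ℝ} (hd : 0 < d) (k : ℕ) {w w' : ℝ → ℝ} (hw : Continuous w)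
    (hw' : Continuous w') {A A' : ℝ} (hA : ∀ x, |w x| ≤ A) (hA' : ∀ x, |w' x| ≤ A') (x τ : ℝ) :
    heatFlow d k (fun y => w y - w' y) x τ = heatFlow d k w x τ - heatFlow d k w' x τ := by
  have hψ := integrable_heatProfile hd k
  simp only [heatFlow, scaledMean, sub_mul]
  rw [integral_sub (integrable_scaledMean hψ hw hA _ x) (integrable_scaledMean hψ hw' hA' _ x),
    mul_sub]

lemma Admissible.duhamel_sub {p' a' : ℝ} {h' : ℝ → ℝ → ℝ} (H : Admissible d k p a h)
    (H' : Admissible d k p' a' h') (x : ℝ) {t : ℝ} (ht : 0 < t) :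
    duhamel d k (fun x t => h x t - h' x t) x t = duhamel d k h x t - duhamel d k h' x t := by
  obtain ⟨b, hb⟩ := H.weightedBdd
  obtain ⟨b', hb'⟩ := H'.weightedBdd
  rw [duhamel, duhamel, duhamel, ← mul_sub,
    ← integral_sub (H.integrableOn_integrand x ht) (H'.integrableOn_integrand x ht)]
  congr 1
  refine setIntegral_congr_fun measurableSet_Ioo fun r hr => ?_
  have hs : 0 < t * (1 - r) := mul_pos ht (sub_pos.2 hr.2)
  obtain ⟨B, hB⟩ := hb.exists_abs_le hs
  obtain ⟨B', hB'⟩ := hb'.exists_abs_le hs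
  exact heatFlow_sub H.pos k (H.continuousPos.space hs) (H'.continuousPos.space hs) hB hB' x _

end Admissible

lemma WeightedBdd.weightedHolder_duhamel {d α : ℝ} (hd : 0 < d) (hα : 0 ≤ α) (hα1 : α < 1)
    {k : ℕ} (hk : k ≤ 1) {a : ℝ} (ha : 0 ≤ a) (ha1 : a < 1) {h : ℝ → ℝ → ℝ}
    (hb : WeightedBdd a h) (hc : ContinuousPos h) :
    WeightedHolder α ((k + α) / 2 + a - 1) (duhamel d k h) := by
  have H := hb.admissible hd hk ha ha1 hc
  have hk' : (k : ℝ) ≤ 1 := by exact_mod_cast hk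
  obtain ⟨C, hC, hdiff⟩ := exists_abs_heatFlow_sub_le hd hα hα1.le k
  intro T hT
  obtain ⟨A, hA, hle⟩ := hb T hT
  refine ⟨C * A * betaMass ((k + α) / 2) a, mul_nonneg (by positivity) (betaMass_nonneg _ _),
    fun x y t ht htT => ?_⟩
  rw [duhamel, duhamel, ← mul_sub,
    ← integral_sub (H.integrableOn_integrand x ht) (H.integrableOn_integrand y ht)]
  refine (abs_integral_le_of_convolution_bound (A := C * A * |x - y| ^ α)
    (p := (k + α) / 2) (a := a)
    (Φ := fun s τ => heatFlow d k (fun y => h y s) x τ - heatFlow d k (fun y => h y s) y τ) ht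
    (by linarith) ha1 fun s τ hs hτ hst => ?_).trans_eq (by ring)
  exact (hdiff _ _ (hc.space hs) (fun x => hle x s hs (by linarith)) τ hτ x y).trans_eq (by ring)

/-! ### The Duhamel integral solves the inhomogeneous heat equation -/

lemma integrableOn_Ioo_rpow_neg {a T : ℝ} (ha : a < 1) :
    IntegrableOn (fun s : ℝ => s ^ (-a)) (Ioo 0 T) := by
  rcases le_total T 0 with hT | hT
  · simp [Ioo_eq_empty_of_le hT]
  · have h := intervalIntegral.intervalIntegrable_rpow' (a := 0) (b := T) (r := -a) (by linarith)
    rwa [intervalIntegrable_iff_integrableOn_Ioo_of_le hT] at h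

lemma integrableOn_Ioo_of_abs_le_rpow_neg {g : ℝ → ℝ} (hg : ContinuousOn g (Ioi 0)) {a A T : ℝ}
    (ha : a < 1) (hb : ∀ s, 0 < s → s ≤ T → |g s| ≤ A * s ^ (-a)) : IntegrableOn g (Ioo 0 T) := by
  refine ((integrableOn_Ioo_rpow_neg ha).const_mul A).mono'
    ((hg.mono fun s hs => hs.1).aestronglyMeasurable measurableSet_Ioo) ?_
  filter_upwards [self_mem_ae_restrict measurableSet_Ioo] with s hs
  exact hb s hs.1 hs.2.le

lemma WeightedBdd.integrableOn_time {a : ℝ} {h : ℝ → ℝ → ℝ} (hb : WeightedBdd a h) (ha : a < 1)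
    (hc : ContinuousPos h) (x : ℝ) {T : ℝ} (hT : 0 < T) :
    IntegrableOn (fun t => h x t) (Ioo 0 T) := by
  obtain ⟨A, -, hle⟩ := hb T hT
  exact integrableOn_Ioo_of_abs_le_rpow_neg (hc.time x) ha (hle x)

lemma duhamel_eq_setIntegral (d : ℝ) (k : ℕ) (h : ℝ → ℝ → ℝ) (x : ℝ) {t : ℝ} (ht : 0 < t) :
    duhamel d k h x t = ∫ s in Ioo 0 t, heatFlow d k (fun y => h y s) x (t - s) := by
  have hsubst := intervalIntegral.mul_integral_comp_sub_mul (a := 0) (b := 1)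
    (f := fun s => heatFlow d k (fun y => h y s) x (t - s)) t t
  simp only [mul_one, sub_self, mul_zero, sub_zero] at hsubst
  rw [intervalIntegral.integral_of_le zero_le_one, intervalIntegral.integral_of_le ht.le,
    integral_Ioc_eq_integral_Ioo, integral_Ioc_eq_integral_Ioo] at hsubst
  rw [← hsubst, duhamel]
  congr 2 with r
  rw [show t * (1 - r) = t - t * r by ring, sub_sub_cancel]

lemma integral_swap_of_integrableOn_triangle {F : ℝ → ℝ → ℝ} {T : ℝ}
    (hF : IntegrableOn (fun p : ℝ × ℝ => F p.1 p.2) {p | 0 < p.2 ∧ p.2 < p.1 ∧ p.1 < T}) :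
    IntegrableOn (fun s => ∫ t in Ioo s T, F t s) (Ioo 0 T) ∧
      ∫ t in Ioo 0 T, ∫ s in Ioo 0 t, F t s = ∫ s in Ioo 0 T, ∫ t in Ioo s T, F t s := by
  set S : Set (ℝ × ℝ) := {p | 0 < p.2 ∧ p.2 < p.1 ∧ p.1 < T}
  have hS : MeasurableSet S := ((isOpen_lt continuous_const continuous_snd).inter
    ((isOpen_lt continuous_snd continuous_fst).inter
      (isOpen_lt continuous_fst continuous_const))).measurableSet
  set G : ℝ → ℝ → ℝ := fun t s => S.indicator (fun p => F p.1 p.2) (t, s)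
  have hG : Integrable (Function.uncurry G) := hF.integrable_indicator hS
  have hinner_s (t : ℝ) : ∫ s, G t s = (Ioo 0 T).indicator (fun t => ∫ s in Ioo 0 t, F t s) t := by
    by_cases ht : t ∈ Ioo 0 T
    · rw [indicator_of_mem ht, ← integral_indicator measurableSet_Ioo]
      congr 1 with s
      simp only [G, S, indicator, mem_ofPred_eq, mem_Ioo, ht.2, and_true]
    · rw [indicator_of_notMem ht]
      refine integral_eq_zero_of_ae (ae_of_all _ fun s => indicator_of_notMem ?_ _)
      rintro ⟨hs, hst, htT⟩
      exact ht ⟨hs.trans hst, htT⟩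
  have hinner_t (s : ℝ) : ∫ t, G t s = (Ioo 0 T).indicator (fun s => ∫ t in Ioo s T, F t s) s := by
    by_cases hs : s ∈ Ioo 0 T
    · rw [indicator_of_mem hs, ← integral_indicator measurableSet_Ioo]
      congr 1 with t
      simp only [G, S, indicator, mem_ofPred_eq, mem_Ioo, hs.1, true_and]
    · rw [indicator_of_notMem hs]
      refine integral_eq_zero_of_ae (ae_of_all _ fun t => indicator_of_notMem ?_ _)
      rintro ⟨hs0, hst, htT⟩
      exact hs ⟨hs0, hst.trans htT⟩
  have hright := hG.integral_prod_right
  have hswap := integral_integral_swap hG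
  simp only [Function.uncurry_apply_pair, hinner_s, hinner_t] at hright hswap
  rw [integral_indicator measurableSet_Ioo, integral_indicator measurableSet_Ioo] at hswap
  exact ⟨(integrable_indicator_iff measurableSet_Ioo).1 hright, hswap⟩

lemma integrableOn_triangle_of_convolution_bound {P : ℝ → ℝ → ℝ} {T : ℝ}
    (hP : ContinuousOn (fun p : ℝ × ℝ => P p.1 p.2) {p | 0 < p.1 ∧ 0 < p.2})
    {A p a : ℝ} (hp : p < 1) (ha : a < 1)
    (hb : ∀ s τ, 0 < s → s ≤ T → 0 < τ → |P s τ| ≤ A * τ ^ (-p) * s ^ (-a)) :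
    IntegrableOn (fun q : ℝ × ℝ => P q.2 (q.1 - q.2)) {q | 0 < q.2 ∧ q.2 < q.1 ∧ q.1 < T} := by
  have hS : MeasurableSet {q : ℝ × ℝ | 0 < q.2 ∧ q.2 < q.1 ∧ q.1 < T} :=
    ((isOpen_lt continuous_const continuous_snd).inter ((isOpen_lt continuous_snd
      continuous_fst).inter (isOpen_lt continuous_fst continuous_const))).measurableSet
  have hkernel := (integrableOn_Ioo_rpow_neg (T := T) hp).integrable_indicator measurableSet_Ioo
  have hsource := (integrableOn_Ioo_rpow_neg (T := T) ha).integrable_indicator measurableSet_Ioo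
  refine ((Integrable.convolution_integrand (ContinuousLinearMap.mul ℝ ℝ) hsource
    hkernel).const_mul A).integrableOn.mono' ?_ ?_
  · exact (hP.comp (f := fun q : ℝ × ℝ => (q.2, q.1 - q.2)) (by fun_prop)
      fun q hq => ⟨hq.1, sub_pos.2 hq.2.1⟩).aestronglyMeasurable hS
  · filter_upwards [self_mem_ae_restrict hS] with q ⟨hs, hst, htT⟩
    have hsource_mem : q.2 ∈ Ioo 0 T := ⟨hs, hst.trans htT⟩
    have hkernel_mem : q.1 - q.2 ∈ Ioo 0 T := ⟨sub_pos.2 hst, by linarith⟩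
    rw [ContinuousLinearMap.mul_apply', indicator_of_mem hsource_mem,
      indicator_of_mem hkernel_mem]
    exact (hb _ _ hs (hst.trans htT).le (sub_pos.2 hst)).trans_eq (by ring)

lemma heatFlow_zero_eq_self_add_integral {d : ℝ} (hd : 0 < d) {w : ℝ → ℝ} (hw : Continuous w)
    {A : ℝ} (hA : ∀ x, |w x| ≤ A) (x : ℝ) {τ : ℝ} (hτ : 0 < τ)
    (hint : IntegrableOn (fun σ => heatFlow d 2 w x σ) (Ioo 0 τ)) :
    heatFlow d 0 w x τ = w x + d * ∫ σ in Ioo 0 τ, heatFlow d 2 w x σ := by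
  have hftc := intervalIntegral.integral_eq_sub_of_hasDerivAt_of_le hτ.le
    (f := fun σ => heatFlow d 0 w x σ) (f' := fun σ => d * heatFlow d 2 w x σ)
    ((continuousOn_heatFlow_zero hd (continuousPos_of_space hw) (weightedBdd_of_space hA)).comp
      (f := fun σ : ℝ => (x, 1, σ))
      (by fun_prop) fun _ _ => zero_lt_one' ℝ)
    (fun σ hσ => hasDerivAt_heatFlow_time hd hw hA x hσ.1)
    ((intervalIntegrable_iff_integrableOn_Ioo_of_le hτ.le).2 (hint.const_mul d))
  rw [heatFlow_zero_zero hd, intervalIntegral.integral_const_mul,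
    intervalIntegral.integral_of_le hτ.le, integral_Ioc_eq_integral_Ioo] at hftc
  linarith

section Admissible

variable {d p a b : ℝ} {h : ℝ → ℝ → ℝ}

lemma Admissible.heatFlow_zero_eq_add_integral (H : Admissible d 2 p b h) (x : ℝ) {s T : ℝ}
    (hs : 0 < s) (hsT : s < T) :
    heatFlow d 0 (fun y => h y s) x (T - s) =
      h x s + d * ∫ t in Ioo s T, heatFlow d 2 (fun y => h y s) x (t - s) := by
  obtain ⟨c, hc⟩ := H.weightedBdd
  obtain ⟨B, hB⟩ := hc.exists_abs_le hs
  obtain ⟨A, -, hle⟩ := H.bound s hs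
  have hcont : ContinuousOn (fun τ => heatFlow d 2 (fun y => h y s) x τ) (Ioi 0) :=
    (continuousOn_heatFlow H.pos 2 H.continuousPos hc).comp
      (f := fun τ : ℝ => (x, s, τ)) (by fun_prop) fun τ hτ => ⟨hs, hτ⟩
  have hint : IntegrableOn (fun τ => heatFlow d 2 (fun y => h y s) x τ) (Ioo 0 (T - s)) :=
    integrableOn_Ioo_of_abs_le_rpow_neg hcont H.kernel_lt_one (A := A * s ^ (-b))
      fun τ hτ _ => (hle x s τ hs le_rfl hτ).trans_eq (by ring)
  have hshift := intervalIntegral.integral_comp_sub_right (a := s) (b := T)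
    (fun τ => heatFlow d 2 (fun y => h y s) x τ) s
  rw [sub_self, intervalIntegral.integral_of_le hsT.le,
    intervalIntegral.integral_of_le (sub_pos.2 hsT).le, integral_Ioc_eq_integral_Ioo,
    integral_Ioc_eq_integral_Ioo] at hshift
  rw [hshift]
  exact heatFlow_zero_eq_self_add_integral H.pos (H.continuousPos.space hs) hB x (sub_pos.2 hsT)
    hint

lemma Admissible.integral_duhamel_two (H : Admissible d 2 p b h) (x : ℝ) {T : ℝ} (hT : 0 < T) :
    IntegrableOn (fun s => ∫ t in Ioo s T, heatFlow d 2 (fun y => h y s) x (t - s)) (Ioo 0 T) ∧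
      ∫ t in Ioo 0 T, duhamel d 2 h x t =
        ∫ s in Ioo 0 T, ∫ t in Ioo s T, heatFlow d 2 (fun y => h y s) x (t - s) := by
  obtain ⟨c, hc⟩ := H.weightedBdd
  obtain ⟨A, -, hle⟩ := H.bound T hT
  have hcont : ContinuousOn (fun q : ℝ × ℝ => heatFlow d 2 (fun y => h y q.1) x q.2)
      {q | 0 < q.1 ∧ 0 < q.2} :=
    (continuousOn_heatFlow H.pos 2 H.continuousPos hc).comp
      (f := fun q : ℝ × ℝ => (x, q.1, q.2)) (by fun_prop) fun q hq => hq
  obtain ⟨hint, hswap⟩ := integral_swap_of_integrableOn_triangle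
    (F := fun t s => heatFlow d 2 (fun y => h y s) x (t - s))
    (integrableOn_triangle_of_convolution_bound hcont H.kernel_lt_one H.source_lt_one (hle x))
  refine ⟨hint, hswap ▸ setIntegral_congr_fun measurableSet_Ioo fun t ht => ?_⟩
  exact duhamel_eq_setIntegral d 2 h x ht.1

lemma Admissible.integrableOn_duhamel_time (H : Admissible d 2 p b h) (x : ℝ) {T : ℝ}
    (hT : 0 < T) : IntegrableOn (fun t => duhamel d 2 h x t) (Ioo 0 T) :=
  H.weightedBdd_duhamel.integrableOn_time (by linarith [H.kernel_lt_one, H.source_lt_one])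
    H.continuousPos_duhamel x hT

lemma Admissible.duhamel_zero_eq_integral (H : Admissible d 2 p b h) (hb : WeightedBdd a h)
    (ha : a < 1) (x : ℝ) {T : ℝ} (hT : 0 < T) :
    duhamel d 0 h x T = ∫ t in Ioo 0 T, (h x t + d * duhamel d 2 h x t) := by
  have hh := hb.integrableOn_time ha H.continuousPos x hT
  obtain ⟨hint, hswap⟩ := H.integral_duhamel_two x hT
  calc duhamel d 0 h x T = ∫ s in Ioo 0 T, heatFlow d 0 (fun y => h y s) x (T - s) :=
        duhamel_eq_setIntegral d 0 h x hT
    _ = ∫ s in Ioo 0 T,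
          (h x s + d * ∫ t in Ioo s T, heatFlow d 2 (fun y => h y s) x (t - s)) :=
        setIntegral_congr_fun measurableSet_Ioo fun s hs =>
          H.heatFlow_zero_eq_add_integral x hs.1 hs.2
    _ = _ := by
        rw [integral_add hh (hint.const_mul d),
          integral_add hh ((H.integrableOn_duhamel_time x hT).const_mul d),
          integral_const_mul, integral_const_mul, hswap]

lemma Admissible.hasDerivAt_duhamel_time (H : Admissible d 2 p b h) (hb : WeightedBdd a h)
    (ha : a < 1) (x : ℝ) {t : ℝ} (ht : 0 < t) :
    HasDerivAt (fun t => duhamel d 0 h x t) (h x t + d * duhamel d 2 h x t) t := by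
  have hcont : ContinuousOn (fun t => h x t + d * duhamel d 2 h x t) (Ioi 0) :=
    (H.continuousPos.time x).add (continuousOn_const.mul (H.continuousPos_duhamel.time x))
  have hint := (hb.integrableOn_time ha H.continuousPos x ht).add
    ((H.integrableOn_duhamel_time x ht).const_mul d)
  refine (intervalIntegral.integral_hasDerivAt_right
    ((intervalIntegrable_iff_integrableOn_Ioo_of_le ht.le).2 hint)
    (hcont.stronglyMeasurableAtFilter isOpen_Ioi t ht)
    (hcont.continuousAt (Ioi_mem_nhds ht))).congr_of_eventuallyEq ?_
  filter_upwards [lt_mem_nhds ht] with T hT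
  rw [H.duhamel_zero_eq_integral hb ha x hT, intervalIntegral.integral_of_le hT.le,
    integral_Ioc_eq_integral_Ioo]
  rfl

end Admissible

/-! ### Regularity of the heat flow and of the Duhamel operator in space-time -/

section HeatFlow

variable {d B : ℝ} {w : ℝ → ℝ}

lemma continuousPos_heatFlow (hd : 0 < d) (k : ℕ) (hw : Continuous w) (hB : ∀ x, |w x| ≤ B) :
    ContinuousPos (heatFlow d k w) :=
  (continuousOn_heatFlow hd k (continuousPos_of_space hw) (weightedBdd_of_space hB)).comp
    (f := fun p : ℝ × ℝ => (p.1, 1, p.2)) (by fun_prop) fun _ hp => ⟨zero_lt_one' ℝ, hp⟩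

lemma continuous_heatFlow_zero (hd : 0 < d) (hw : Continuous w) (hB : ∀ x, |w x| ≤ B) :
    Continuous fun p : ℝ × ℝ => heatFlow d 0 w p.1 p.2 :=
  (continuousOn_heatFlow_zero hd (continuousPos_of_space hw)
    (weightedBdd_of_space hB)).comp_continuous (f := fun p : ℝ × ℝ => (p.1, 1, p.2))
    (by fun_prop) fun _ => zero_lt_one' ℝ

lemma weightedBdd_heatFlow (hd : 0 < d) (k : ℕ) (hB : ∀ x, |w x| ≤ B) :
    WeightedBdd (k / 2) (heatFlow d k w) := fun _ _ =>
  ⟨B * ∫ z, |heatProfile d k z|,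
    mul_nonneg ((abs_nonneg _).trans (hB 0)) (integral_nonneg fun _ => abs_nonneg _),
    fun x _ ht _ => abs_heatFlow_le hd k hB x ht⟩

lemma weightedHolder_heatFlow (hd : 0 < d) {α : ℝ} (hα : 0 ≤ α) (hα1 : α ≤ 1) (k : ℕ)
    (hw : Continuous w) (hB : ∀ x, |w x| ≤ B) :
    WeightedHolder α ((k + α) / 2) (heatFlow d k w) := by
  obtain ⟨C, hC, hle⟩ := exists_abs_heatFlow_sub_le hd hα hα1 k
  exact fun _ _ => ⟨C * B, mul_nonneg hC ((abs_nonneg _).trans (hB 0)),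
    fun x y t ht _ => hle w B hw hB t ht x y⟩

lemma heatFlow_one_eq_heatFlow_zero_deriv (hd : 0 < d) {w' : ℝ → ℝ}
    (hw : ∀ x, HasDerivAt w (w' x) x) (hB : ∀ x, |w x| ≤ B) (hw' : Continuous w') {B' : ℝ}
    (hB' : ∀ x, |w' x| ≤ B') (x : ℝ) {τ : ℝ} (hτ : 0 < τ) :
    heatFlow d 1 w x τ = heatFlow d 0 w' x τ := by
  have hwc : Continuous w := continuous_iff_continuousAt.2 fun x => (hw x).continuousAt
  have hψ := integrable_heatProfile hd 0
  refine (hasDerivAt_heatFlow_space hd 0 hwc hB x hτ).unique (HasDerivAt.const_mul _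
    (hasDerivAt_integral_of_dominated_loc_of_deriv_le univ_mem
      (F' := fun x z => w' (x + √τ * z) * heatProfile d 0 z)
      (bound := fun z => B' * |heatProfile d 0 z|)
      (Eventually.of_forall fun x =>
        (integrable_scaledMean hψ hwc hB (√τ) x).aestronglyMeasurable)
      (integrable_scaledMean hψ hwc hB (√τ) x)
      (integrable_scaledMean hψ hw' hB' (√τ) x).aestronglyMeasurable
      (ae_of_all _ fun z x _ => ?_) (hψ.abs.const_mul _) (ae_of_all _ fun z x _ => ?_)).2)
  · rw [norm_mul]
    exact mul_le_mul_of_nonneg_right (hB' _) (abs_nonneg _)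
  · exact ((hw _).comp_add_const x (√τ * z)).mul_const _

end HeatFlow

section Add

variable {α a : ℝ} {h h' : ℝ → ℝ → ℝ}

lemma ContinuousPos.add (hh : ContinuousPos h) (hh' : ContinuousPos h') :
    ContinuousPos fun x t => h x t + h' x t :=
  ContinuousOn.add hh hh'

lemma WeightedBdd.add (hh : WeightedBdd a h) (hh' : WeightedBdd a h') :
    WeightedBdd a fun x t => h x t + h' x t := by
  intro T hT
  obtain ⟨A, hA, hle⟩ := hh T hT
  obtain ⟨A', hA', hle'⟩ := hh' T hT
  refine ⟨A + A', by positivity, fun x s hs hsT => (abs_add_le _ _).trans ?_⟩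
  rw [add_mul]
  exact add_le_add (hle x s hs hsT) (hle' x s hs hsT)

lemma WeightedHolder.add (hh : WeightedHolder α a h) (hh' : WeightedHolder α a h') :
    WeightedHolder α a fun x t => h x t + h' x t := by
  intro T hT
  obtain ⟨A, hA, hle⟩ := hh T hT
  obtain ⟨A', hA', hle'⟩ := hh' T hT
  refine ⟨A + A', by positivity, fun x y s hs hsT => ?_⟩
  rw [add_sub_add_comm, add_mul, add_mul]
  exact (abs_add_le _ _).trans (add_le_add (hle x y s hs hsT) (hle' x y s hs hsT))

lemma WeightedHolder.congr (hh : WeightedHolder α a h) (heq : ∀ x t, 0 < t → h' x t = h x t) :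
    WeightedHolder α a h' := by
  intro T hT
  obtain ⟨A, hA, hle⟩ := hh T hT
  exact ⟨A, hA, fun x y s hs hsT => by rw [heq x s hs, heq y s hs]; exact hle x y s hs hsT⟩

lemma Admissible.duhamel_add {d p p' a' : ℝ} {k : ℕ}
    (H : Admissible d k p a fun x t => h x t + h' x t) (H' : Admissible d k p' a' h') (x : ℝ)
    {t : ℝ} (ht : 0 < t) :
    duhamel d k (fun x t => h x t + h' x t) x t = duhamel d k h x t + duhamel d k h' x t := by
  have hsub := H.duhamel_sub H' x ht
  simp only [add_sub_cancel_right] at hsub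
  linarith

end Add

@[simp]
lemma duhamel_time_zero (d : ℝ) (k : ℕ) (h : ℝ → ℝ → ℝ) (x : ℝ) : duhamel d k h x 0 = 0 := by
  simp [duhamel]

lemma continuousOn_duhamel {d : ℝ} (hd : 0 < d) {k : ℕ} (hk : k ≤ 1) {h : ℝ → ℝ → ℝ}
    (hb : WeightedBdd 0 h) (hc : ContinuousPos h) :
    ContinuousOn (fun p : ℝ × ℝ => duhamel d k h p.1 p.2) {p | 0 ≤ p.2} := by
  have H := hb.admissible hd hk le_rfl zero_lt_one hc
  rintro ⟨x₀, t₀⟩ (ht₀ : 0 ≤ t₀)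
  rcases ht₀.lt_or_eq with h0 | rfl
  · exact (H.continuousPos_duhamel.continuousAt
      (isOpen_snd_pos.mem_nhds h0)).continuousWithinAt
  obtain ⟨A, -, hle⟩ := H.weightedBdd_duhamel 1 one_pos
  have hk' : (k : ℝ) ≤ 1 := by exact_mod_cast hk
  set q : ℝ := -(k / 2 + 0 - 1)
  have hq : 0 < q := by simp only [q]; linarith
  rw [ContinuousWithinAt, duhamel_time_zero]
  refine squeeze_zero_norm' (a := fun p : ℝ × ℝ => A * p.2 ^ q) ?_ ?_
  · have hsmall : ∀ᶠ p : ℝ × ℝ in 𝓝[{p | 0 ≤ p.2}] (x₀, 0), p.2 < 1 :=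
      nhdsWithin_le_nhds ((isOpen_lt continuous_snd continuous_const).mem_nhds (by simp))
    filter_upwards [self_mem_nhdsWithin, hsmall] with p (hp0 : 0 ≤ p.2) hp1
    rcases hp0.lt_or_eq with hp | hp
    · exact hle p.1 p.2 hp hp1.le
    · simp [← hp, zero_rpow hq.ne']
  · have hcont : Continuous fun p : ℝ × ℝ => A * p.2 ^ q :=
      continuous_const.mul (continuous_snd.rpow_const fun _ => Or.inr hq.le)
    simpa [zero_rpow hq.ne'] using (hcont.tendsto (x₀, 0)).mono_left nhdsWithin_le_nhds

/-- `hx` is the spatial derivative of `h` at positive times; it is continuous there and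
`O(t ^ (-1/2))`, as for the heat flow of a bounded function. -/
structure IsSpaceDeriv (h hx : ℝ → ℝ → ℝ) : Prop where
  continuousPos : ContinuousPos hx
  weightedBdd : WeightedBdd (1 / 2) hx
  hasDerivAt : ∀ x t, 0 < t → HasDerivAt (fun x => h x t) (hx x t) x

lemma IsSpaceDeriv.duhamel_one_eq {d : ℝ} (hd : 0 < d) {h hx : ℝ → ℝ → ℝ} {a : ℝ}
    (D : IsSpaceDeriv h hx) (hb : WeightedBdd a h) (x : ℝ) {t : ℝ} (ht : 0 < t) :
    duhamel d 1 h x t = duhamel d 0 hx x t := by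
  unfold duhamel
  congr 1
  refine setIntegral_congr_fun measurableSet_Ioo fun r hr => ?_
  have hs : 0 < t * (1 - r) := mul_pos ht (sub_pos.2 hr.2)
  obtain ⟨B, hB⟩ := hb.exists_abs_le hs
  obtain ⟨B', hB'⟩ := D.weightedBdd.exists_abs_le hs
  exact heatFlow_one_eq_heatFlow_zero_deriv hd (fun x => D.hasDerivAt x _ hs) hB
    (D.continuousPos.space hs) hB' x (mul_pos ht hr.1)

/-! ### Mild solutions of the heat equation with a reaction and a flux term -/

/-- The mild solution of `u_t = d u_xx + F + G_x` with initial datum `u₀`; the derivative of the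
flux `G` falls on the heat kernel. -/
def mildSolution (d : ℝ) (u₀ : ℝ → ℝ) (F G : ℝ → ℝ → ℝ) (x t : ℝ) : ℝ :=
  heatFlow d 0 u₀ x t + duhamel d 0 F x t + duhamel d 1 G x t

/-- Data `u₀`, `F`, `G` for a mild solution: bounded and continuous, `F` and `G` only at positive
times and on bounded time intervals. -/
structure MildData (d : ℝ) (u₀ : ℝ → ℝ) (F G : ℝ → ℝ → ℝ) : Prop where
  pos : 0 < d
  continuous_init : Continuous u₀
  bdd_init : ∃ B, ∀ x, |u₀ x| ≤ B
  continuousPos_reaction : ContinuousPos F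
  weightedBdd_reaction : WeightedBdd 0 F
  continuousPos_flux : ContinuousPos G
  weightedBdd_flux : WeightedBdd 0 G

/-- `ut`, `ux`, `uxx` are the derivatives of `u` at positive times and are continuous there. -/
structure HasClassicalDerivs (u ut ux uxx : ℝ → ℝ → ℝ) : Prop where
  continuousPos_time : ContinuousPos ut
  continuousPos_space : ContinuousPos ux
  continuousPos_space_space : ContinuousPos uxx
  hasDerivAt_time : ∀ x t, 0 < t → HasDerivAt (fun t => u x t) (ut x t) t
  hasDerivAt_space : ∀ x t, 0 < t → HasDerivAt (fun x => u x t) (ux x t) x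
  hasDerivAt_space_space : ∀ x t, 0 < t → HasDerivAt (fun x => ux x t) (uxx x t) x

namespace MildData

variable {d α : ℝ} {u₀ : ℝ → ℝ} {F G Gx : ℝ → ℝ → ℝ}

lemma admissible_reaction (H : MildData d u₀ F G) {k : ℕ} (hk : k ≤ 1) :
    Admissible d k (k / 2) 0 F :=
  H.weightedBdd_reaction.admissible H.pos hk le_rfl one_pos H.continuousPos_reaction

lemma admissible_flux (H : MildData d u₀ F G) {k : ℕ} (hk : k ≤ 1) : Admissible d k (k / 2) 0 G :=
  H.weightedBdd_flux.admissible H.pos hk le_rfl one_pos H.continuousPos_flux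

lemma mildSolution_zero (H : MildData d u₀ F G) (x : ℝ) : mildSolution d u₀ F G x 0 = u₀ x := by
  simp [mildSolution, heatFlow_zero_zero H.pos]

lemma continuousOn_mildSolution (H : MildData d u₀ F G) :
    ContinuousOn (fun p : ℝ × ℝ => mildSolution d u₀ F G p.1 p.2) {p | 0 ≤ p.2} := by
  obtain ⟨B, hB⟩ := H.bdd_init
  exact ((continuous_heatFlow_zero H.pos H.continuous_init hB).continuousOn.add
    (continuousOn_duhamel H.pos zero_le_one H.weightedBdd_reaction H.continuousPos_reaction)).add
    (continuousOn_duhamel H.pos le_rfl H.weightedBdd_flux H.continuousPos_flux)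

lemma weightedHolder_mildSolution (H : MildData d u₀ F G) (hα : 0 ≤ α) (hα1 : α < 1) :
    WeightedHolder α (α / 2) (mildSolution d u₀ F G) := by
  obtain ⟨B, hB⟩ := H.bdd_init
  have hheat := weightedHolder_heatFlow H.pos hα hα1.le 0 H.continuous_init hB
  have hreaction := WeightedBdd.weightedHolder_duhamel H.pos hα hα1 (k := 0) zero_le_one le_rfl
    one_pos H.weightedBdd_reaction H.continuousPos_reaction
  have hflux := WeightedBdd.weightedHolder_duhamel H.pos hα hα1 (k := 1) le_rfl le_rfl one_pos
    H.weightedBdd_flux H.continuousPos_flux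
  refine ((hheat.mono ?_).add (hreaction.mono ?_)).add (hflux.mono ?_) <;> push_cast <;> linarith

lemma exists_isSpaceDeriv_mildSolution (H : MildData d u₀ F G) (hα : 0 < α) (hα1 : α < 1)
    (hG : WeightedHolder α (α / 2) G) : ∃ ux, IsSpaceDeriv (mildSolution d u₀ F G) ux := by
  obtain ⟨B, hB⟩ := H.bdd_init
  have hF := H.admissible_reaction (k := 1) le_rfl
  have hG := hG.admissible H.pos hα (by linarith) (by linarith) (by linarith)
    H.weightedBdd_flux H.continuousPos_flux
  refine ⟨fun x t => heatFlow d 1 u₀ x t + duhamel d 1 F x t + duhamel d 2 G x t,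
    ((continuousPos_heatFlow H.pos 1 H.continuous_init hB).add hF.continuousPos_duhamel).add
      hG.continuousPos_duhamel, ?_, fun x t ht => ?_⟩
  · refine (((weightedBdd_heatFlow H.pos 1 hB).mono ?_).add (hF.weightedBdd_duhamel.mono ?_)).add
      (hG.weightedBdd_duhamel.mono ?_) <;> norm_num
  · exact ((hasDerivAt_heatFlow_space H.pos 0 H.continuous_init hB x ht).add
      ((H.admissible_reaction zero_le_one).hasDerivAt_duhamel_space hF x ht)).add
      ((H.admissible_flux le_rfl).hasDerivAt_duhamel_space hG x ht)

lemma continuousPos_source (H : MildData d u₀ F G) (D : IsSpaceDeriv G Gx) :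
    ContinuousPos fun x t => F x t + Gx x t :=
  H.continuousPos_reaction.add D.continuousPos

lemma weightedBdd_source (H : MildData d u₀ F G) (D : IsSpaceDeriv G Gx) :
    WeightedBdd (1 / 2) fun x t => F x t + Gx x t :=
  (H.weightedBdd_reaction.mono (by norm_num)).add D.weightedBdd

lemma admissible_source (H : MildData d u₀ F G) (D : IsSpaceDeriv G Gx) {k : ℕ} (hk : k ≤ 1) :
    Admissible d k (k / 2) (1 / 2) fun x t => F x t + Gx x t :=
  (H.weightedBdd_source D).admissible H.pos hk (by norm_num) (by norm_num)
    (H.continuousPos_source D)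

lemma mildSolution_eq_of_isSpaceDeriv (H : MildData d u₀ F G) (D : IsSpaceDeriv G Gx) (x : ℝ)
    {t : ℝ} (ht : 0 < t) : mildSolution d u₀ F G x t =
      heatFlow d 0 u₀ x t + duhamel d 0 (fun x t => F x t + Gx x t) x t := by
  have hGx := D.weightedBdd.admissible H.pos (k := 0) zero_le_one (by norm_num) (by norm_num)
    D.continuousPos
  rw [mildSolution, D.duhamel_one_eq H.pos H.weightedBdd_flux x ht,
    (H.admissible_source D zero_le_one).duhamel_add hGx x ht, add_assoc]

lemma hasDerivAt_mildSolution_space (H : MildData d u₀ F G) (D : IsSpaceDeriv G Gx) (x : ℝ)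
    {t : ℝ} (ht : 0 < t) : HasDerivAt (fun x => mildSolution d u₀ F G x t)
      (heatFlow d 1 u₀ x t + duhamel d 1 (fun x t => F x t + Gx x t) x t) x := by
  obtain ⟨B, hB⟩ := H.bdd_init
  exact ((hasDerivAt_heatFlow_space H.pos 0 H.continuous_init hB x ht).add
    ((H.admissible_source D zero_le_one).hasDerivAt_duhamel_space
      (H.admissible_source D le_rfl) x ht)).congr_of_eventuallyEq
    (Eventually.of_forall fun y => H.mildSolution_eq_of_isSpaceDeriv D y ht)

lemma weightedHolder_of_hasDerivAt (H : MildData d u₀ F G) (D : IsSpaceDeriv G Gx) (hα : 0 ≤ α)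
    (hα1 : α < 1) {ux : ℝ → ℝ → ℝ}
    (hux : ∀ x t, 0 < t → HasDerivAt (fun x => mildSolution d u₀ F G x t) (ux x t) x) :
    WeightedHolder α ((1 + α) / 2) ux := by
  obtain ⟨B, hB⟩ := H.bdd_init
  have hheat := weightedHolder_heatFlow H.pos hα hα1.le 1 H.continuous_init hB
  have hsource := WeightedBdd.weightedHolder_duhamel H.pos hα hα1 (k := 1) le_rfl (by norm_num)
    (by norm_num) (H.weightedBdd_source D) (H.continuousPos_source D)
  refine ((hheat.mono ?_).add (hsource.mono ?_)).congr fun x t ht =>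
    (hux x t ht).unique (H.hasDerivAt_mildSolution_space D x ht) <;> push_cast <;> linarith

lemma exists_hasClassicalDerivs_mildSolution (H : MildData d u₀ F G) (D : IsSpaceDeriv G Gx)
    (hα : 0 < α) (hα1 : α < 1)
    (hsource : WeightedHolder α ((1 + α) / 2) fun x t => F x t + Gx x t) :
    ∃ ut ux uxx, HasClassicalDerivs (mildSolution d u₀ F G) ut ux uxx ∧
      ∀ x t, ut x t = d * uxx x t + (F x t + Gx x t) := by
  obtain ⟨B, hB⟩ := H.bdd_init
  have H₁ := H.admissible_source D le_rfl
  have H₂ := hsource.admissible H.pos hα (by linarith) (by linarith) (by linarith)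
    (H.weightedBdd_source D) (H.continuousPos_source D)
  set S : ℝ → ℝ → ℝ := fun x t => F x t + Gx x t
  have huxx : ContinuousPos fun x t => heatFlow d 2 u₀ x t + duhamel d 2 S x t :=
    (continuousPos_heatFlow H.pos 2 H.continuous_init hB).add H₂.continuousPos_duhamel
  refine ⟨fun x t => d * (heatFlow d 2 u₀ x t + duhamel d 2 S x t) + S x t,
    fun x t => heatFlow d 1 u₀ x t + duhamel d 1 S x t,
    fun x t => heatFlow d 2 u₀ x t + duhamel d 2 S x t,
    ⟨(continuousOn_const.mul huxx).add (H.continuousPos_source D),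
      (continuousPos_heatFlow H.pos 1 H.continuous_init hB).add H₁.continuousPos_duhamel, huxx,
      fun x t ht => ?_, fun x t ht => H.hasDerivAt_mildSolution_space D x ht,
      fun x t ht => (hasDerivAt_heatFlow_space H.pos 1 H.continuous_init hB x ht).add
        (H₁.hasDerivAt_duhamel_space H₂ x ht)⟩, fun _ _ => rfl⟩
  refine (((hasDerivAt_heatFlow_time H.pos H.continuous_init hB x ht).add
    (H₂.hasDerivAt_duhamel_time (H.weightedBdd_source D) (by norm_num) x ht)).congr_of_eventuallyEq
      ?_).congr_deriv (by ring)
  filter_upwards [lt_mem_nhds ht] with s hs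
  exact H.mildSolution_eq_of_isSpaceDeriv D x hs

end MildData

/-! ### Moving frames -/

/-- The function `h` seen in the frame moving with velocity `-c`. -/
def galilean (c : ℝ) (h : ℝ → ℝ → ℝ) (x t : ℝ) : ℝ := h (x - c * t) t

section Galilean

variable {h : ℝ → ℝ → ℝ} {α a : ℝ}

@[simp]
lemma galilean_galilean_neg (c : ℝ) (h : ℝ → ℝ → ℝ) : galilean c (galilean (-c) h) = h := by
  ext x t
  simp [galilean]

@[simp]
lemma galilean_neg_galilean (c : ℝ) (h : ℝ → ℝ → ℝ) : galilean (-c) (galilean c h) = h := by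
  simpa using galilean_galilean_neg (-c) h

lemma ContinuousPos.galilean (hh : ContinuousPos h) (c : ℝ) : ContinuousPos (galilean c h) :=
  ContinuousOn.comp (f := fun p : ℝ × ℝ => (p.1 - c * p.2, p.2)) hh (by fun_prop) fun _ hp => hp

lemma WeightedBdd.galilean (hh : WeightedBdd a h) (c : ℝ) : WeightedBdd a (galilean c h) := by
  intro T hT
  obtain ⟨A, hA, hle⟩ := hh T hT
  exact ⟨A, hA, fun x s hs hsT => hle _ s hs hsT⟩

lemma WeightedHolder.galilean (hh : WeightedHolder α a h) (c : ℝ) :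
    WeightedHolder α a (galilean c h) := by
  intro T hT
  obtain ⟨A, hA, hle⟩ := hh T hT
  refine ⟨A, hA, fun x y s hs hsT => (hle _ _ s hs hsT).trans_eq ?_⟩
  rw [sub_sub_sub_cancel_right]

lemma hasDerivAt_galilean_space {hx : ℝ → ℝ → ℝ} (c : ℝ) {t : ℝ}
    (hh : ∀ x, HasDerivAt (fun x => h x t) (hx x t) x) (x : ℝ) :
    HasDerivAt (fun x => galilean c h x t) (galilean c hx x t) x :=
  (hh (x - c * t)).comp_sub_const x (c * t)

lemma IsSpaceDeriv.galilean {hx : ℝ → ℝ → ℝ} (D : IsSpaceDeriv h hx) (c : ℝ) :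
    IsSpaceDeriv (galilean c h) (galilean c hx) :=
  ⟨D.continuousPos.galilean c, D.weightedBdd.galilean c, fun x t ht =>
    hasDerivAt_galilean_space c (fun x => D.hasDerivAt x t ht) x⟩

lemma HasClassicalDerivs.hasStrictFDerivAt {u ut ux uxx : ℝ → ℝ → ℝ}
    (D : HasClassicalDerivs u ut ux uxx) (x : ℝ) {t : ℝ} (ht : 0 < t) :
    HasStrictFDerivAt (fun p : ℝ × ℝ => u p.1 p.2)
      ((ContinuousLinearMap.toSpanSingleton ℝ (ux x t)).coprod
        (ContinuousLinearMap.toSpanSingleton ℝ (ut x t))) (x, t) := by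
  have hmem : {p : ℝ × ℝ | 0 < p.2} ∈ 𝓝 (x, t) := isOpen_snd_pos.mem_nhds ht
  have hspan : Continuous fun a : ℝ => ContinuousLinearMap.toSpanSingleton ℝ a :=
    (ContinuousLinearMap.toSpanSingletonCLE (𝕜 := ℝ) (E := ℝ)).continuous
  refine hasStrictFDerivAt_uncurry_coprod (𝕜 := ℝ) (u := (x, t)) (f := u)
    (f₁ := fun x t => ContinuousLinearMap.toSpanSingleton ℝ (ux x t))
    (f₂ := fun x t => ContinuousLinearMap.toSpanSingleton ℝ (ut x t)) ?_ ?_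
    (hspan.continuousAt.comp (D.continuousPos_space.continuousAt hmem))
    (hspan.continuousAt.comp (D.continuousPos_time.continuousAt hmem))
  · filter_upwards [hmem] with p hp
    exact (D.hasDerivAt_space p.1 p.2 hp).hasFDerivAt
  · filter_upwards [hmem] with p hp
    exact (D.hasDerivAt_time p.1 p.2 hp).hasFDerivAt

lemma HasClassicalDerivs.galilean {u ut ux uxx : ℝ → ℝ → ℝ} (D : HasClassicalDerivs u ut ux uxx)
    (c : ℝ) : HasClassicalDerivs (galilean c u)
      (fun x t => galilean c ut x t - c * galilean c ux x t) (galilean c ux) (galilean c uxx) where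
  continuousPos_time := (D.continuousPos_time.galilean c).sub
    (continuousOn_const.mul (D.continuousPos_space.galilean c))
  continuousPos_space := D.continuousPos_space.galilean c
  continuousPos_space_space := D.continuousPos_space_space.galilean c
  hasDerivAt_space x t ht :=
    hasDerivAt_galilean_space c (fun x => D.hasDerivAt_space x t ht) x
  hasDerivAt_space_space x t ht :=
    hasDerivAt_galilean_space c (fun x => D.hasDerivAt_space_space x t ht) x
  hasDerivAt_time x t ht := by
    have hpath : HasDerivAt (fun t => (x - c * t, t)) (-c, (1 : ℝ)) t :=
      (by simpa using ((hasDerivAt_id t).const_mul c).const_sub x :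
        HasDerivAt (fun t => x - c * t) (-c) t).prodMk (hasDerivAt_id t)
    refine (HasFDerivAt.comp_hasDerivAt (f := fun t => (x - c * t, t)) t
      (D.hasStrictFDerivAt (x - c * t) ht).hasFDerivAt hpath).congr_deriv ?_
    simp only [ContinuousLinearMap.coprod_apply, ContinuousLinearMap.toSpanSingleton_apply,
      smul_eq_mul, neg_mul, one_mul, GRD.galilean]
    ring

end Galilean

/-- The mild solution of `u_t = d u_xx + c u_x + F + G_x`, obtained by removing the drift in a
moving frame. -/
def driftMildSolution (d c : ℝ) (u₀ : ℝ → ℝ) (F G : ℝ → ℝ → ℝ) : ℝ → ℝ → ℝ :=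
  galilean (-c) (mildSolution d u₀ (galilean c F) (galilean c G))

namespace MildData

variable {d α : ℝ} {u₀ : ℝ → ℝ} {F G Gx : ℝ → ℝ → ℝ}

lemma galilean (H : MildData d u₀ F G) (c : ℝ) :
    MildData d u₀ (galilean c F) (galilean c G) where
  pos := H.pos
  continuous_init := H.continuous_init
  bdd_init := H.bdd_init
  continuousPos_reaction := H.continuousPos_reaction.galilean c
  weightedBdd_reaction := H.weightedBdd_reaction.galilean c
  continuousPos_flux := H.continuousPos_flux.galilean c
  weightedBdd_flux := H.weightedBdd_flux.galilean c

lemma driftMildSolution_zero (H : MildData d u₀ F G) (c x : ℝ) :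
    driftMildSolution d c u₀ F G x 0 = u₀ x := by
  simp [driftMildSolution, GRD.galilean, (H.galilean c).mildSolution_zero]

lemma continuousOn_driftMildSolution (H : MildData d u₀ F G) (c : ℝ) :
    ContinuousOn (fun p : ℝ × ℝ => driftMildSolution d c u₀ F G p.1 p.2) {p | 0 ≤ p.2} :=
  (H.galilean c).continuousOn_mildSolution.comp
    (f := fun p : ℝ × ℝ => (p.1 - -c * p.2, p.2)) (by fun_prop) fun _ hp => hp

lemma weightedHolder_driftMildSolution (H : MildData d u₀ F G) (c : ℝ) (hα : 0 ≤ α)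
    (hα1 : α < 1) : WeightedHolder α (α / 2) (driftMildSolution d c u₀ F G) :=
  ((H.galilean c).weightedHolder_mildSolution hα hα1).galilean (-c)

lemma exists_isSpaceDeriv_driftMildSolution (H : MildData d u₀ F G) (c : ℝ) (hα : 0 < α)
    (hα1 : α < 1) (hG : WeightedHolder α (α / 2) G) :
    ∃ ux, IsSpaceDeriv (driftMildSolution d c u₀ F G) ux := by
  obtain ⟨ux, hux⟩ :=
    (H.galilean c).exists_isSpaceDeriv_mildSolution hα hα1 (hG.galilean c)
  exact ⟨_, hux.galilean (-c)⟩

lemma weightedHolder_of_isSpaceDeriv_drift (H : MildData d u₀ F G) (D : IsSpaceDeriv G Gx)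
    {c : ℝ} (hα : 0 ≤ α) (hα1 : α < 1) {ux : ℝ → ℝ → ℝ}
    (hux : IsSpaceDeriv (driftMildSolution d c u₀ F G) ux) :
    WeightedHolder α ((1 + α) / 2) ux := by
  have hux' := hux.galilean c
  rw [driftMildSolution, galilean_galilean_neg] at hux'
  rw [← galilean_neg_galilean c ux]
  exact ((H.galilean c).weightedHolder_of_hasDerivAt (D.galilean c) hα hα1
    hux'.hasDerivAt).galilean (-c)

lemma exists_hasClassicalDerivs_driftMildSolution (H : MildData d u₀ F G)
    (D : IsSpaceDeriv G Gx) (c : ℝ) (hα : 0 < α) (hα1 : α < 1)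
    (hsource : WeightedHolder α ((1 + α) / 2) fun x t => F x t + Gx x t) :
    ∃ ut ux uxx, HasClassicalDerivs (driftMildSolution d c u₀ F G) ut ux uxx ∧
      ∀ x t, ut x t = d * uxx x t + c * ux x t + F x t + Gx x t := by
  obtain ⟨ut, ux, uxx, hderiv, hpde⟩ :=
    (H.galilean c).exists_hasClassicalDerivs_mildSolution (D.galilean c) hα hα1
      (hsource.galilean c)
  refine ⟨_, _, _, hderiv.galilean (-c), fun x t => ?_⟩
  have hframe : x - -c * t - c * t = x := by ring
  simp only [GRD.galilean, hpde, hframe]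
  ring

end MildData

/-! ### Gaussian weights -/

/-- The Gaussian weight `exp (-b² / (M n))`; the solutions are controlled by it with `n = 1 + t`. -/
def gaussianWeight (M n b : ℝ) : ℝ := exp (-(b ^ 2 / (M * n)))

/-- The Gaussian in `z` left over when `gaussianWeight M (n + τ) a` is split off from
`gaussianWeight M n (a + √τ z) * exp (-(2 / M) z²)`. -/
def residualGaussian (M n τ a z : ℝ) : ℝ :=
  exp (-(1 / (2 * M * n * (n + τ))) * (a * √τ + (n + τ) * z) ^ 2)

lemma gaussianWeight_pos (M n b : ℝ) : 0 < gaussianWeight M n b := exp_pos _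

lemma gaussianWeight_le_one {M n : ℝ} (hM : 0 ≤ M) (hn : 0 ≤ n) (b : ℝ) :
    gaussianWeight M n b ≤ 1 := by
  rw [gaussianWeight, exp_le_one_iff, neg_nonpos]
  positivity

lemma integrable_exp_neg_mul_sq_affine {β q : ℝ} (hβ : 0 < β) (hq : q ≠ 0) (p : ℝ) :
    Integrable fun z : ℝ => exp (-β * (p + q * z) ^ 2) :=
  ((integrable_exp_neg_mul_sq hβ).comp_add_left p).comp_mul_left' hq

lemma integral_exp_neg_mul_sq_affine (β q p : ℝ) :
    ∫ z, exp (-β * (p + q * z) ^ 2) = √(π / β) / |q| := by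
  rw [Measure.integral_comp_mul_left (fun y => exp (-β * (p + y) ^ 2)) q,
    integral_add_left_eq_self (fun y => exp (-β * y ^ 2)) p, integral_gaussian, smul_eq_mul,
    abs_inv, inv_mul_eq_div]

section Residual

variable {M n τ : ℝ}

lemma integrable_residualGaussian (hM : 0 < M) (hn : 0 < n) (hτ : 0 ≤ τ) (a : ℝ) :
    Integrable (residualGaussian M n τ a) :=
  integrable_exp_neg_mul_sq_affine (by positivity) (by positivity) _

lemma integral_residualGaussian (hM : 0 < M) (hn : 0 < n) (hτ : 0 ≤ τ) (a : ℝ) :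
    ∫ z, residualGaussian M n τ a z = √(2 * π * M) * (√n / √(n + τ)) := by
  have hN : 0 < n + τ := by positivity
  have hvar : π / (1 / (2 * M * n * (n + τ))) = 2 * π * M * n * (n + τ) := by field_simp
  simp only [residualGaussian]
  rw [integral_exp_neg_mul_sq_affine, hvar, abs_of_pos hN, sqrt_mul (by positivity),
    sqrt_mul (by positivity), mul_assoc, mul_div_assoc, mul_div_assoc, sqrt_div_self,
    ← div_eq_mul_inv]

lemma gaussianWeight_mul_exp_eq (hM : 0 < M) (hn : 0 < n) (hτ : 0 ≤ τ) (a z : ℝ) :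
    gaussianWeight M n (a + √τ * z) * exp (-(2 / M) * z ^ 2) =
      gaussianWeight M (n + τ) a * residualGaussian M n τ a z *
        exp (-((a * √τ + (n + τ) * z) ^ 2 / (n * (n + τ)) / 2 + z ^ 2) / M) := by
  have hN : 0 < n + τ := by positivity
  obtain ⟨q, hq, rfl⟩ : ∃ q, 0 ≤ q ∧ q ^ 2 = τ := ⟨√τ, sqrt_nonneg τ, sq_sqrt hτ⟩
  simp only [gaussianWeight, residualGaussian, ← exp_add, sqrt_sq hq]
  congr 1
  field_simp
  ring

lemma gaussianWeight_mul_exp_le (hM : 0 < M) (hn : 0 < n) (hτ : 0 ≤ τ) (a z : ℝ) :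
    gaussianWeight M n (a + √τ * z) * exp (-(2 / M) * z ^ 2) ≤
      gaussianWeight M (n + τ) a * residualGaussian M n τ a z := by
  have hpos := gaussianWeight_pos M (n + τ) a
  rw [gaussianWeight_mul_exp_eq hM hn hτ]
  refine mul_le_of_le_one_right (mul_pos hpos (exp_pos _)).le (exp_le_one_iff.2 ?_)
  exact div_nonpos_of_nonpos_of_nonneg (neg_nonpos.2 (by positivity)) hM.le

lemma gaussianWeight_mul_gaussianWeight_mul_exp_le (hM : 0 < M) (hn : 0 < n) (hτ : 0 ≤ τ)
    {a z b X : ℝ}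
    (hX : X ≤ (a * √τ + (n + τ) * z) ^ 2 / (n * (n + τ)) / 2 + z ^ 2 + b ^ 2 / n) :
    gaussianWeight M n (a + √τ * z) * gaussianWeight M n b * exp (-(2 / M) * z ^ 2) ≤
      exp (-X / M) * (gaussianWeight M (n + τ) a * residualGaussian M n τ a z) := by
  have hpos := gaussianWeight_pos M (n + τ) a
  rw [mul_right_comm, gaussianWeight_mul_exp_eq hM hn hτ, mul_assoc, mul_comm (exp (-X / M))]
  refine mul_le_mul_of_nonneg_left ?_ (mul_pos hpos (exp_pos _)).le
  rw [gaussianWeight, ← exp_add, exp_le_exp, mul_comm M, ← div_div (b ^ 2), ← neg_div, ← add_div]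
  gcongr
  linarith

lemma exists_abs_heatFlow_le_gaussianWeight {d : ℝ} (hd : 0 < d) (hM : 16 * d ≤ M) (k : ℕ) :
    ∃ C, 0 < C ∧ ∀ (w : ℝ → ℝ) (a n τ D : ℝ), 0 < n → 0 ≤ τ →
      (∀ z, |w (a + √τ * z)| * exp (-(2 / M) * z ^ 2) ≤
        D * (gaussianWeight M (n + τ) a * residualGaussian M n τ a z)) →
      |heatFlow d k w a τ| ≤
        C * D * ((√τ) ^ k)⁻¹ * √n * ((√(n + τ))⁻¹ * gaussianWeight M (n + τ) a) := by
  obtain ⟨A, hA, hψ⟩ := exists_heatProfile_le hd k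
  have hM0 : 0 < M := by linarith
  have hψM (z : ℝ) : |heatProfile d k z| ≤ A * exp (-(2 / M) * z ^ 2) := by
    refine (hψ z).trans ?_
    gcongr A * exp (-?_ * z ^ 2)
    rw [div_le_div_iff₀ hM0 (by positivity)]
    linarith
  refine ⟨A * √(2 * π * M), by positivity, fun w a n τ D hn hτ hw => ?_⟩
  have hmean : |scaledMean (heatProfile d k) w (√τ) a| ≤
      ∫ z, A * D * gaussianWeight M (n + τ) a * residualGaussian M n τ a z := by
    rw [scaledMean, ← Real.norm_eq_abs]
    refine norm_integral_le_of_norm_le ((integrable_residualGaussian hM0 hn hτ a).const_mul _)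
      (ae_of_all _ fun z => ?_)
    rw [norm_mul, Real.norm_eq_abs, Real.norm_eq_abs]
    calc |w (a + √τ * z)| * |heatProfile d k z|
        ≤ |w (a + √τ * z)| * (A * exp (-(2 / M) * z ^ 2)) := by gcongr; exact hψM z
      _ = A * (|w (a + √τ * z)| * exp (-(2 / M) * z ^ 2)) := by ring
      _ ≤ A * (D * (gaussianWeight M (n + τ) a * residualGaussian M n τ a z)) := by
        exact mul_le_mul_of_nonneg_left (hw z) hA.le
      _ = _ := by ring
  rw [integral_const_mul, integral_residualGaussian hM0 hn hτ] at hmean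
  rw [heatFlow, abs_mul, abs_of_nonneg (by positivity)]
  calc ((√τ) ^ k)⁻¹ * |scaledMean (heatProfile d k) w (√τ) a|
      ≤ ((√τ) ^ k)⁻¹ * (A * D * gaussianWeight M (n + τ) a *
        (√(2 * π * M) * (√n / √(n + τ)))) := by gcongr
    _ = _ := by ring

end Residual

/-! ### Interaction of two Gaussians separating with relative speed `κ` -/

section Interaction

variable {M s τ : ℝ}

lemma sq_sub_add_le (x y z : ℝ) : (x - y + z) ^ 2 ≤ 3 * (x ^ 2 + y ^ 2 + z ^ 2) := by
  nlinarith [sq_nonneg (x + y), sq_nonneg (x - z), sq_nonneg (y + z)]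

/-- Most of the time has been spent diffusing: the separation `κ s` of the two centres has to be
paid for by one of the three terms on the right. -/
lemma separation_le_of_le_diffusion (hs : 0 ≤ s) (hτ : 0 < τ) (hle : (1 + s + τ) / 4 ≤ τ)
    (κ a z : ℝ) :
    κ ^ 2 * (s - 1) / 24 ≤
      (a * √τ + (1 + s + τ) * z) ^ 2 / ((1 + s) * (1 + s + τ)) / 2 + z ^ 2 +
        (a + √τ * z + κ * s) ^ 2 / (1 + s) := by
  obtain ⟨n, hn, hns⟩ : ∃ n, 0 < n ∧ 1 + s = n := ⟨1 + s, by positivity, rfl⟩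
  obtain ⟨q, hq, rfl⟩ : ∃ q, 0 < q ∧ q ^ 2 = τ := ⟨√τ, sqrt_pos.2 hτ, sq_sqrt hτ.le⟩
  rw [hns] at hle ⊢
  rw [sqrt_sq hq.le]
  set A := a * q + (n + q ^ 2) * z with hA
  set b := a + q * z
  have hsplit : (κ * s) ^ 2 ≤ 3 * ((b + κ * s) ^ 2 + (A / q) ^ 2 + (n * z / q) ^ 2) := by
    have hκs : κ * s = b + κ * s - A / q + n * z / q := by field_simp; rw [hA]; ring
    have h := sq_sub_add_le (b + κ * s) (A / q) (n * z / q)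
    rwa [← hκs] at h
  have hcentre : (A / q) ^ 2 ≤ 4 * (A ^ 2 / (n * (n + q ^ 2)) * n) := by
    rw [div_pow, show 4 * (A ^ 2 / (n * (n + q ^ 2)) * n) = A ^ 2 / ((n + q ^ 2) / 4) by field_simp]
    gcongr
  have hprofile : (n * z / q) ^ 2 ≤ 4 * (z ^ 2 * n) := by
    rw [div_pow, div_le_iff₀ (by positivity)]
    nlinarith [mul_nonneg (mul_nonneg hn.le (sq_nonneg z)) (show 0 ≤ 3 * q ^ 2 - n by linarith),
      mul_nonneg (mul_nonneg hn.le (sq_nonneg z)) (sq_nonneg q)]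
  have htime : κ ^ 2 * ((s - 1) * n) ≤ (κ * s) ^ 2 := by
    rw [mul_pow]
    gcongr
    rw [← hns]
    nlinarith
  have hweight : (b + κ * s) ^ 2 = (b + κ * s) ^ 2 / n * n := by field_simp
  refine le_of_mul_le_mul_right ?_ hn
  have h₁ : 0 ≤ z ^ 2 * n := by positivity
  have h₂ : 0 ≤ (b + κ * s) ^ 2 / n * n := by positivity
  linarith

/-- Little time has been spent diffusing: the weight centred at `-κ s` is still seen from `a`. -/
lemma separation_le_of_diffusion_le (hs : 0 ≤ s) (hτ : 0 ≤ τ) (hle : τ ≤ (1 + s + τ) / 4)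
    (κ a z : ℝ) :
    (a + κ * s) ^ 2 / (2 * (1 + s + τ)) ≤
      (a * √τ + (1 + s + τ) * z) ^ 2 / ((1 + s) * (1 + s + τ)) / 2 + z ^ 2 +
        (a + √τ * z + κ * s) ^ 2 / (1 + s) := by
  have hn : 0 < 1 + s := by positivity
  obtain ⟨q, hq, rfl⟩ : ∃ q, 0 ≤ q ∧ q ^ 2 = τ := ⟨√τ, sqrt_nonneg τ, sq_sqrt hτ⟩
  rw [sqrt_sq hq]
  have hshift : (a + κ * s) ^ 2 / 2 - q ^ 2 * z ^ 2 ≤ (a + q * z + κ * s) ^ 2 := by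
    nlinarith [sq_nonneg (a + κ * s + 2 * q * z)]
  have hprofile : q ^ 2 * z ^ 2 / (1 + s) ≤ z ^ 2 := by
    rw [div_le_iff₀ hn, mul_comm]
    gcongr
    linarith
  have hcentre : 0 ≤ (a * q + (1 + s + q ^ 2) * z) ^ 2 / ((1 + s) * (1 + s + q ^ 2)) := by
    positivity
  calc (a + κ * s) ^ 2 / (2 * (1 + s + q ^ 2))
      ≤ (a + κ * s) ^ 2 / (2 * (1 + s)) := by
        gcongr _ / (2 * ?_); linarith
    _ = ((a + κ * s) ^ 2 / 2 - q ^ 2 * z ^ 2) / (1 + s) + q ^ 2 * z ^ 2 / (1 + s) := by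
      field_simp; ring
    _ ≤ (a + q * z + κ * s) ^ 2 / (1 + s) + z ^ 2 := by gcongr
    _ ≤ _ := by linarith

/-- The gain, integrable in `s`, due to the separation of two wave packets: how much the product
of their weights at time `s` contributes, relative to the weight of the first, to the value at the
point `a` at time `N - 1`. -/
def interactionRate (M κ N a s : ℝ) : ℝ :=
  exp (-(κ ^ 2 / (24 * M)) * (s - 1)) +
    2 * (√N)⁻¹ * exp (-(1 / (2 * M * N)) * (a + κ * s) ^ 2)

lemma gaussianWeight_mul_gaussianWeight_le_interactionRate (hM : 0 < M) (hs : 0 ≤ s)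
    (hτ : 0 < τ) (κ a z : ℝ) :
    gaussianWeight M (1 + s) (a + √τ * z) * gaussianWeight M (1 + s) (a + √τ * z + κ * s) *
        exp (-(2 / M) * z ^ 2) * (√(1 + s))⁻¹ ≤
      interactionRate M κ (1 + s + τ) a s *
        (gaussianWeight M (1 + s + τ) a * residualGaussian M (1 + s) τ a z) := by
  have hn : 0 < 1 + s := by positivity
  have hρ : 0 ≤ gaussianWeight M (1 + s + τ) a * residualGaussian M (1 + s) τ a z :=
    (mul_pos (gaussianWeight_pos _ _ _) (exp_pos _)).le
  suffices ∃ X, X ≤ (a * √τ + (1 + s + τ) * z) ^ 2 / ((1 + s) * (1 + s + τ)) / 2 + z ^ 2 +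
        (a + √τ * z + κ * s) ^ 2 / (1 + s) ∧
      exp (-X / M) * (√(1 + s))⁻¹ ≤ interactionRate M κ (1 + s + τ) a s by
    obtain ⟨X, hX, hrate⟩ := this
    calc _ ≤ exp (-X / M) * (gaussianWeight M (1 + s + τ) a * residualGaussian M (1 + s) τ a z) *
          (√(1 + s))⁻¹ := by
          exact mul_le_mul_of_nonneg_right
            (gaussianWeight_mul_gaussianWeight_mul_exp_le hM hn hτ.le hX) (by positivity)
      _ = exp (-X / M) * (√(1 + s))⁻¹ * _ := mul_right_comm _ _ _
      _ ≤ _ := by gcongr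
  rcases le_total ((1 + s + τ) / 4) τ with hle | hle
  · refine ⟨_, separation_le_of_le_diffusion hs hτ hle κ a z, ?_⟩
    have hone : (√(1 + s))⁻¹ ≤ 1 := inv_le_one_of_one_le₀ (one_le_sqrt.2 (by linarith))
    rw [show -(κ ^ 2 * (s - 1) / 24) / M = -(κ ^ 2 / (24 * M)) * (s - 1) by field_simp]
    refine (mul_le_of_le_one_right (exp_pos _).le hone).trans (le_add_of_nonneg_right ?_)
    positivity
  · refine ⟨_, separation_le_of_diffusion_le hs hτ.le hle κ a z, ?_⟩
    have hsqrt : (√(1 + s))⁻¹ ≤ 2 * (√(1 + s + τ))⁻¹ := by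
      rw [inv_le_iff_one_le_mul₀ (sqrt_pos.2 hn), ← div_eq_mul_inv, div_mul_eq_mul_div,
        one_le_div (by positivity), sqrt_le_left (by positivity), mul_pow, sq_sqrt hn.le]
      linarith
    rw [show -((a + κ * s) ^ 2 / (2 * (1 + s + τ))) / M =
      -(1 / (2 * M * (1 + s + τ))) * (a + κ * s) ^ 2 by field_simp, mul_comm]
    exact (mul_le_mul_of_nonneg_right hsqrt (exp_pos _).le).trans
      (le_add_of_nonneg_left (exp_pos _).le)

end Interaction

/-! ### Gaussian estimates for mild solutions -/

lemma abs_duhamel_le_setIntegral {d : ℝ} {k : ℕ} {h : ℝ → ℝ → ℝ} {x t : ℝ} (ht : 0 < t)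
    {β : ℝ → ℝ} (hβ : IntegrableOn β (Ioo 0 t))
    (hb : ∀ s τ, 0 < s → 0 < τ → s + τ = t → |heatFlow d k (fun y => h y s) x τ| ≤ β s) :
    |duhamel d k h x t| ≤ ∫ s in Ioo 0 t, β s := by
  rw [duhamel_eq_setIntegral d k h x ht, ← Real.norm_eq_abs]
  refine norm_integral_le_of_norm_le hβ ?_
  filter_upwards [self_mem_ae_restrict measurableSet_Ioo] with s hs
  exact hb s (t - s) hs.1 (sub_pos.2 hs.2) (add_sub_cancel _ _)

section InteractionRate

variable {M κ N : ℝ}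

lemma integrableOn_exp_neg_mul_sub_one {η : ℝ} (hη : 0 < η) :
    IntegrableOn (fun s : ℝ => exp (-η * (s - 1))) (Ioi 0) := by
  have h : IntegrableOn (fun s : ℝ => exp η * exp (-η * s)) (Ioi 0) :=
    (integrableOn_exp_mul_Ioi (neg_lt_zero.2 hη) 0).const_mul (exp η)
  refine h.congr_fun (fun s _ => ?_) measurableSet_Ioi
  simp only [← exp_add]
  ring_nf

lemma integrable_translating_gaussian (hM : 0 < M) (hκ : κ ≠ 0) (hN : 0 < N) (a : ℝ) :
    Integrable fun s => 2 * (√N)⁻¹ * exp (-(1 / (2 * M * N)) * (a + κ * s) ^ 2) :=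
  (integrable_exp_neg_mul_sq_affine (by positivity) hκ a).const_mul _

lemma integral_translating_gaussian (hM : 0 ≤ M) (hN : 0 < N) (a : ℝ) :
    ∫ s, 2 * (√N)⁻¹ * exp (-(1 / (2 * M * N)) * (a + κ * s) ^ 2) =
      2 * √(2 * π * M) / |κ| := by
  rw [integral_const_mul, integral_exp_neg_mul_sq_affine,
    show π / (1 / (2 * M * N)) = 2 * π * M * N by rw [div_div_eq_mul_div]; ring,
    sqrt_mul (by positivity)]
  field_simp

lemma interactionRate_nonneg (M κ N a s : ℝ) : 0 ≤ interactionRate M κ N a s := by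
  rw [interactionRate]
  positivity

lemma integrableOn_interactionRate (hM : 0 < M) (hκ : κ ≠ 0) (hN : 0 < N) (a : ℝ) :
    IntegrableOn (interactionRate M κ N a) (Ioi 0) :=
  (integrableOn_exp_neg_mul_sub_one (by positivity)).add
    (integrable_translating_gaussian hM hκ hN a).integrableOn

lemma setIntegral_interactionRate_le (hM : 0 < M) (hκ : κ ≠ 0) (hN : 0 < N) (a : ℝ) :
    ∫ s in Ioi 0, interactionRate M κ N a s ≤
      (∫ s in Ioi 0, exp (-(κ ^ 2 / (24 * M)) * (s - 1))) + 2 * √(2 * π * M) / |κ| := by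
  have hgauss := integrable_translating_gaussian hM hκ hN a
  simp only [interactionRate]
  rw [integral_add (integrableOn_exp_neg_mul_sub_one (by positivity)) hgauss.integrableOn,
    ← integral_translating_gaussian hM.le hN a]
  gcongr
  · exact ae_of_all _ fun s => by positivity
  · exact Measure.restrict_le_self

end InteractionRate

section GaussianEstimates

variable {d M κ : ℝ}

/-- The pointwise bound on a reaction term of the form `u⁴ + u v`, when `u` and `v` are bounded by
wave packets with relative speed `κ`; time decay is exchanged for the extra Gaussian factor. -/
def ReactionBound (M κ E : ℝ) (F : ℝ → ℝ → ℝ) : Prop :=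
  ∀ b s, 0 < s → |F b s| ≤ E * (((1 + s) ^ 2)⁻¹ * gaussianWeight M (1 + s) b +
    (1 + s)⁻¹ * (gaussianWeight M (1 + s) b * gaussianWeight M (1 + s) (b + κ * s)))

/-- The pointwise bound on a flux of the form `u² + u v`, when `u` is bounded by a wave packet. -/
def FluxBound (M E : ℝ) (G : ℝ → ℝ → ℝ) : Prop :=
  ∀ b s, 0 < s → |G b s| ≤ E * (1 + s)⁻¹ * gaussianWeight M (1 + s) b

lemma exists_abs_heatFlow_init_le (hd : 0 < d) (hM : 16 * d ≤ M) :
    ∃ K, 0 ≤ K ∧ ∀ (u₀ : ℝ → ℝ) (δ : ℝ), (∀ b, |u₀ b| ≤ δ * gaussianWeight M 1 b) →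
      ∀ a t, 0 ≤ t →
      |heatFlow d 0 u₀ a t| ≤ K * δ * ((√(1 + t))⁻¹ * gaussianWeight M (1 + t) a) := by
  obtain ⟨C, hC, hheat⟩ := exists_abs_heatFlow_le_gaussianWeight hd hM 0
  have hδ {u₀ : ℝ → ℝ} {δ : ℝ} (hu : ∀ b, |u₀ b| ≤ δ * gaussianWeight M 1 b) : 0 ≤ δ :=
    nonneg_of_mul_nonneg_left ((abs_nonneg _).trans (hu 0)) (gaussianWeight_pos _ _ _)
  refine ⟨C, hC.le, fun u₀ δ hu a t ht => ?_⟩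
  refine (hheat u₀ a 1 t δ one_pos ht fun z => ?_).trans_eq (by simp)
  calc |u₀ (a + √t * z)| * exp (-(2 / M) * z ^ 2)
      ≤ δ * gaussianWeight M 1 (a + √t * z) * exp (-(2 / M) * z ^ 2) := by gcongr; exact hu _
    _ = δ * (gaussianWeight M 1 (a + √t * z) * exp (-(2 / M) * z ^ 2)) := mul_assoc _ _ _
    _ ≤ _ := mul_le_mul_of_nonneg_left
      (gaussianWeight_mul_exp_le (by linarith) one_pos ht a z) (hδ hu)

lemma exists_abs_duhamel_flux_le (hd : 0 < d) (hM : 16 * d ≤ M) :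
    ∃ K, 0 ≤ K ∧ ∀ (G : ℝ → ℝ → ℝ) (E : ℝ), 0 ≤ E → FluxBound M E G → ∀ a t, 0 < t →
      |duhamel d 1 G a t| ≤ K * E * ((√(1 + t))⁻¹ * gaussianWeight M (1 + t) a) := by
  obtain ⟨C, hC, hheat⟩ := exists_abs_heatFlow_le_gaussianWeight hd hM 1
  refine ⟨C * betaMass (1 / 2) (1 / 2), mul_nonneg hC.le (betaMass_nonneg _ _),
    fun G E hE hG a t ht => ?_⟩
  have hgauss := gaussianWeight_pos M (1 + t) a
  set X := (√(1 + t))⁻¹ * gaussianWeight M (1 + t) a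
  refine (abs_integral_le_of_convolution_bound (A := C * E * X) (p := 1 / 2) (a := 1 / 2)
    (Φ := fun s τ => heatFlow d 1 (fun y => G y s) a τ) ht (by norm_num) (by norm_num)
    fun s τ hs hτ hst => ?_).trans_eq (by norm_num; ring)
  have hn : 0 < 1 + s := by positivity
  have hflow := hheat (fun y => G y s) a (1 + s) τ (E * (1 + s)⁻¹) hn hτ.le fun z => by
    calc |G (a + √τ * z) s| * exp (-(2 / M) * z ^ 2)
        ≤ E * (1 + s)⁻¹ * gaussianWeight M (1 + s) (a + √τ * z) * exp (-(2 / M) * z ^ 2) := by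
          gcongr; exact hG _ s hs
      _ = E * (1 + s)⁻¹ * (gaussianWeight M (1 + s) (a + √τ * z) * exp (-(2 / M) * z ^ 2)) :=
        mul_assoc _ _ _
      _ ≤ _ := mul_le_mul_of_nonneg_left
        (gaussianWeight_mul_exp_le (by linarith) hn hτ.le a z) (by positivity)
  rw [add_assoc, hst, pow_one] at hflow
  have hdecay : (1 + s)⁻¹ * √(1 + s) ≤ (√s)⁻¹ := by
    rw [← one_div, div_mul_eq_mul_div, one_mul, sqrt_div_self]
    gcongr
    linarith
  rw [rpow_neg hτ.le, rpow_neg hs.le, ← sqrt_eq_rpow, ← sqrt_eq_rpow]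
  calc |heatFlow d 1 (fun y => G y s) a τ|
      ≤ C * (E * (1 + s)⁻¹) * (√τ)⁻¹ * √(1 + s) * X := hflow
    _ = C * E * X * (√τ)⁻¹ * ((1 + s)⁻¹ * √(1 + s)) := by ring
    _ ≤ C * E * X * (√τ)⁻¹ * (√s)⁻¹ := by gcongr

lemma ReactionBound.mul_exp_le (hM : 0 < M) {E : ℝ} (hE : 0 ≤ E) {F : ℝ → ℝ → ℝ}
    (hF : ReactionBound M κ E F) {s τ : ℝ} (hs : 0 < s) (hτ : 0 < τ) (a z : ℝ) :
    |F (a + √τ * z) s| * exp (-(2 / M) * z ^ 2) ≤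
      E * (((1 + s) ^ 2)⁻¹ + (√(1 + s))⁻¹ * interactionRate M κ (1 + s + τ) a s) *
        (gaussianWeight M (1 + s + τ) a * residualGaussian M (1 + s) τ a z) := by
  have hn : 0 < 1 + s := by positivity
  have hself := gaussianWeight_mul_exp_le hM hn hτ.le a z
  have hmixed := gaussianWeight_mul_gaussianWeight_le_interactionRate hM hs.le hτ κ a z
  have hinv : (1 + s)⁻¹ = (√(1 + s))⁻¹ * (√(1 + s))⁻¹ := by
    rw [← mul_inv, mul_self_sqrt hn.le]
  set ρ := gaussianWeight M (1 + s + τ) a * residualGaussian M (1 + s) τ a z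
  refine (mul_le_mul_of_nonneg_right (hF (a + √τ * z) s hs) (exp_pos _).le).trans ?_
  set g := gaussianWeight M (1 + s) (a + √τ * z)
  set g' := gaussianWeight M (1 + s) (a + √τ * z + κ * s)
  set e := exp (-(2 / M) * z ^ 2)
  calc E * (((1 + s) ^ 2)⁻¹ * g + (1 + s)⁻¹ * (g * g')) * e
      = E * (((1 + s) ^ 2)⁻¹ * (g * e) + (√(1 + s))⁻¹ * (g * g' * e * (√(1 + s))⁻¹)) := by
        rw [hinv]; ring
    _ ≤ E * (((1 + s) ^ 2)⁻¹ * ρ +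
        (√(1 + s))⁻¹ * (interactionRate M κ (1 + s + τ) a s * ρ)) := by gcongr
    _ = _ := by ring

lemma exists_abs_heatFlow_reaction_le (hd : 0 < d) (hM : 16 * d ≤ M) :
    ∃ C, 0 ≤ C ∧ ∀ (F : ℝ → ℝ → ℝ) (E : ℝ), 0 ≤ E → ReactionBound M κ E F →
      ∀ a s τ, 0 < s → 0 < τ →
      |heatFlow d 0 (fun y => F y s) a τ| ≤
        C * E * ((√(1 + s + τ))⁻¹ * gaussianWeight M (1 + s + τ) a) *
          ((s + 1) ^ (-(3 / 2) : ℝ) + interactionRate M κ (1 + s + τ) a s) := by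
  obtain ⟨C, hC, hheat⟩ := exists_abs_heatFlow_le_gaussianWeight hd hM 0
  refine ⟨C, hC.le, fun F E hE hF a s τ hs hτ => ?_⟩
  have hn : 0 < 1 + s := by positivity
  refine (hheat (fun y => F y s) a (1 + s) τ _ hn hτ.le
    (hF.mul_exp_le (by linarith) hE hs hτ a)).trans_eq ?_
  have hpow : ((1 + s) ^ 2)⁻¹ * √(1 + s) = (s + 1) ^ (-(3 / 2) : ℝ) := by
    rw [add_comm s 1, sqrt_eq_rpow, ← rpow_natCast, ← rpow_neg hn.le, ← rpow_add hn]
    norm_num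
  rw [← hpow, pow_zero]
  field_simp

lemma exists_abs_duhamel_reaction_le (hd : 0 < d) (hM : 16 * d ≤ M) (hκ : κ ≠ 0) :
    ∃ K, 0 ≤ K ∧ ∀ (F : ℝ → ℝ → ℝ) (E : ℝ), 0 ≤ E → ReactionBound M κ E F → ∀ a t, 0 < t →
      |duhamel d 0 F a t| ≤ K * E * ((√(1 + t))⁻¹ * gaussianWeight M (1 + t) a) := by
  obtain ⟨C, hC, hheat⟩ := exists_abs_heatFlow_reaction_le (κ := κ) hd hM
  have hM0 : 0 < M := by linarith
  have hpow : IntegrableOn (fun s : ℝ => (s + 1) ^ (-(3 / 2) : ℝ)) (Ioi 0) :=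
    integrableOn_add_rpow_Ioi_of_lt (by norm_num) (by norm_num)
  have hpow_nonneg {s : ℝ} (hs : s ∈ Ioi (0 : ℝ)) : 0 ≤ (s + 1) ^ (-(3 / 2) : ℝ) :=
    rpow_nonneg (add_nonneg (le_of_lt hs) zero_le_one) _
  set J := (∫ s in Ioi (0 : ℝ), (s + 1) ^ (-(3 / 2) : ℝ)) +
    ((∫ s in Ioi 0, exp (-(κ ^ 2 / (24 * M)) * (s - 1))) + 2 * √(2 * π * M) / |κ|)
  have hJ : 0 ≤ J := add_nonneg (setIntegral_nonneg measurableSet_Ioi fun _ => hpow_nonneg)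
    (add_nonneg (setIntegral_nonneg measurableSet_Ioi fun _ _ => (exp_pos _).le) (by positivity))
  refine ⟨C * J, mul_nonneg hC hJ, fun F E hE hF a t ht => ?_⟩
  have hgauss := gaussianWeight_pos M (1 + t) a
  set X := (√(1 + t))⁻¹ * gaussianWeight M (1 + t) a
  set β := fun s => C * E * X * ((s + 1) ^ (-(3 / 2) : ℝ) + interactionRate M κ (1 + t) a s)
  have hrate := integrableOn_interactionRate hM0 hκ (N := 1 + t) (by positivity) a
  have hβ : IntegrableOn β (Ioi 0) := (hpow.add hrate).const_mul _
  calc |duhamel d 0 F a t|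
      ≤ ∫ s in Ioo 0 t, β s := by
        refine abs_duhamel_le_setIntegral ht (hβ.mono_set Ioo_subset_Ioi_self)
          fun s τ hs hτ hst => ?_
        have hflow := hheat F E hE hF a s τ hs hτ
        rwa [add_assoc, hst] at hflow
    _ ≤ ∫ s in Ioi 0, β s := by
        refine setIntegral_mono_set hβ ?_ Ioo_subset_Ioi_self.eventuallyLE
        filter_upwards [self_mem_ae_restrict measurableSet_Ioi] with s hs
        exact mul_nonneg (by positivity) (add_nonneg (hpow_nonneg hs)
          (interactionRate_nonneg _ _ _ _ _))
    _ ≤ C * E * X * J := by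
        rw [integral_const_mul, integral_add hpow hrate]
        exact mul_le_mul_of_nonneg_left (add_le_add_right
          (setIntegral_interactionRate_le hM0 hκ (by positivity) a) _) (by positivity)
    _ = C * J * E * X := by ring

lemma exists_abs_mildSolution_le (hd : 0 < d) (hM : 16 * d ≤ M) (hκ : κ ≠ 0) :
    ∃ K, 0 ≤ K ∧ ∀ (u₀ : ℝ → ℝ) (F G : ℝ → ℝ → ℝ) (δ E E' : ℝ), 0 ≤ E → 0 ≤ E' →
      (∀ b, |u₀ b| ≤ δ * gaussianWeight M 1 b) → ReactionBound M κ E F → FluxBound M E' G →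
      ∀ a t, 0 < t →
      |mildSolution d u₀ F G a t| ≤
        K * (δ + E + E') * ((√(1 + t))⁻¹ * gaussianWeight M (1 + t) a) := by
  obtain ⟨K₀, h₀, hheat⟩ := exists_abs_heatFlow_init_le hd hM
  obtain ⟨K₁, h₁, hreaction⟩ := exists_abs_duhamel_reaction_le hd hM hκ
  obtain ⟨K₂, h₂, hflux⟩ := exists_abs_duhamel_flux_le hd hM
  refine ⟨K₀ + K₁ + K₂, by positivity, fun u₀ F G δ E E' hE hE' hu hF hG a t ht => ?_⟩
  have hδ : 0 ≤ δ :=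
    nonneg_of_mul_nonneg_left ((abs_nonneg _).trans (hu 0)) (gaussianWeight_pos _ _ _)
  have hgauss := gaussianWeight_pos M (1 + t) a
  set X := (√(1 + t))⁻¹ * gaussianWeight M (1 + t) a
  have hrest : 0 ≤ (K₀ * (E + E') + K₁ * (δ + E') + K₂ * (δ + E)) * X := by positivity
  calc |mildSolution d u₀ F G a t|
      ≤ |heatFlow d 0 u₀ a t| + |duhamel d 0 F a t| + |duhamel d 1 G a t| := abs_add_three _ _ _
    _ ≤ K₀ * δ * X + K₁ * E * X + K₂ * E' * X :=
      add_le_add (add_le_add (hheat u₀ δ hu a t ht.le) (hreaction F E hE hF a t ht))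
        (hflux G E' hE' hG a t ht)
    _ ≤ (K₀ + K₁ + K₂) * (δ + E + E') * X := by linarith

end GaussianEstimates

/-! ### Wave packets -/

section Envelope

variable {M c c' : ℝ}

/-- The profile, at time `t`, of a diffusing wave packet that travels with velocity `-c`. -/
def envelope (M c x t : ℝ) : ℝ := (√(1 + t))⁻¹ * gaussianWeight M (1 + t) (x + c * t)

lemma envelope_nonneg (M c x t : ℝ) : 0 ≤ envelope M c x t :=
  mul_nonneg (by positivity) (gaussianWeight_pos _ _ _).le

lemma envelope_le_inv_sqrt (hM : 0 ≤ M) {t : ℝ} (ht : 0 ≤ t) (c x : ℝ) :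
    envelope M c x t ≤ (√(1 + t))⁻¹ :=
  mul_le_of_le_one_right (by positivity) (gaussianWeight_le_one hM (by positivity) _)

lemma envelope_le_one (hM : 0 ≤ M) {t : ℝ} (ht : 0 ≤ t) (c x : ℝ) : envelope M c x t ≤ 1 :=
  (envelope_le_inv_sqrt hM ht c x).trans
    (inv_le_one_of_one_le₀ (one_le_sqrt.2 (le_add_of_nonneg_right ht)))

section PacketBounds

variable {e C s : ℝ} {u v : ℝ → ℝ → ℝ}

lemma abs_mul_abs_le_of_le_envelope (hs : 0 ≤ s) {b : ℝ}
    (hu : |u (b - c * s) s| ≤ e * envelope M c (b - c * s) s)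
    (hv : |v (b - c * s) s| ≤ e * envelope M c' (b - c * s) s) :
    |u (b - c * s) s| * |v (b - c * s) s| ≤ e ^ 2 * ((1 + s)⁻¹ *
      (gaussianWeight M (1 + s) b * gaussianWeight M (1 + s) (b + (c' - c) * s))) := by
  refine (mul_le_mul hu hv (abs_nonneg _) ((abs_nonneg _).trans hu)).trans_eq ?_
  rw [envelope, envelope, sub_add_cancel, show b - c * s + c' * s = b + (c' - c) * s by ring,
    ← mul_self_sqrt (by positivity : 0 ≤ 1 + s), mul_inv, mul_self_sqrt (by positivity)]
  ring

lemma sq_abs_le_of_le_envelope (hM : 0 ≤ M) (hs : 0 ≤ s) {b : ℝ}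
    (hu : |u (b - c * s) s| ≤ e * envelope M c (b - c * s) s) :
    |u (b - c * s) s| ^ 2 ≤ e ^ 2 * ((1 + s)⁻¹ * gaussianWeight M (1 + s) b) := by
  have hg := gaussianWeight_pos M (1 + s) b
  rw [sq]
  refine (abs_mul_abs_le_of_le_envelope hs hu hu).trans ?_
  gcongr
  exact mul_le_of_le_one_right hg.le (gaussianWeight_le_one hM (by positivity) _)

lemma reactionBound_galilean (hM : 0 ≤ M) (he : 0 ≤ e) (he1 : e ≤ 1) (hC : 0 ≤ C)
    (hu : ∀ x t, 0 < t → |u x t| ≤ e * envelope M c x t)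
    (hv : ∀ x t, 0 < t → |v x t| ≤ e * envelope M c' x t) {F : ℝ → ℝ → ℝ}
    (hF : ∀ x t, 0 < t → |F x t| ≤ C * (|u x t| ^ 4 + |u x t| * |v x t|)) :
    ReactionBound M (c' - c) (C * e ^ 2) (galilean c F) := by
  intro b s hs
  have hprod := abs_mul_abs_le_of_le_envelope hs.le (hu (b - c * s) s hs) (hv (b - c * s) s hs)
  have hsq := sq_abs_le_of_le_envelope hM hs.le (hu (b - c * s) s hs)
  have hg1 := gaussianWeight_le_one hM (by positivity : 0 ≤ 1 + s) b
  have hg := gaussianWeight_pos M (1 + s) b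
  refine (hF _ s hs).trans ?_
  set g := gaussianWeight M (1 + s) b
  set U := |u (b - c * s) s|
  set V := |v (b - c * s) s|
  have hfour : U ^ 4 ≤ e ^ 2 * (((1 + s) ^ 2)⁻¹ * g) := by
    calc U ^ 4 = U ^ 2 * U ^ 2 := by ring
      _ ≤ e ^ 2 * ((1 + s)⁻¹ * g) * (e ^ 2 * ((1 + s)⁻¹ * g)) := by gcongr
      _ ≤ e ^ 2 * ((1 + s)⁻¹ * g) * (1 ^ 2 * ((1 + s)⁻¹ * 1)) := by gcongr
      _ = e ^ 2 * (((1 + s) ^ 2)⁻¹ * g) := by rw [← inv_pow]; ring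
  calc C * (U ^ 4 + U * V)
      ≤ C * (e ^ 2 * (((1 + s) ^ 2)⁻¹ * g) + e ^ 2 * ((1 + s)⁻¹ *
          (g * gaussianWeight M (1 + s) (b + (c' - c) * s)))) := by gcongr
    _ = _ := by ring

lemma fluxBound_galilean (hM : 0 ≤ M) (hC : 0 ≤ C)
    (hu : ∀ x t, 0 < t → |u x t| ≤ e * envelope M c x t)
    (hv : ∀ x t, 0 < t → |v x t| ≤ e * envelope M c' x t) {G : ℝ → ℝ → ℝ}
    (hG : ∀ x t, 0 < t → |G x t| ≤ C * (|u x t| ^ 2 + |u x t| * |v x t|)) :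
    FluxBound M (2 * (C * e ^ 2)) (galilean c G) := by
  intro b s hs
  have hprod := abs_mul_abs_le_of_le_envelope hs.le (hu (b - c * s) s hs) (hv (b - c * s) s hs)
  have hsq := sq_abs_le_of_le_envelope hM hs.le (hu (b - c * s) s hs)
  have hg' := gaussianWeight_le_one hM (by positivity : 0 ≤ 1 + s) (b + (c' - c) * s)
  have hg := gaussianWeight_pos M (1 + s) b
  set g := gaussianWeight M (1 + s) b
  calc |galilean c G b s|
      ≤ C * (|u (b - c * s) s| ^ 2 + |u (b - c * s) s| * |v (b - c * s) s|) := hG _ s hs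
    _ ≤ C * (e ^ 2 * ((1 + s)⁻¹ * g) + e ^ 2 * ((1 + s)⁻¹ * (g * 1))) := by
      have hprod' := hprod.trans (by gcongr : _ ≤ e ^ 2 * ((1 + s)⁻¹ * (g * 1)))
      gcongr
    _ = _ := by ring

lemma exists_abs_driftMildSolution_le_envelope {d : ℝ} (hd : 0 < d) (hM : 16 * d ≤ M)
    (hc : c ≠ c') :
    ∃ K, 0 ≤ K ∧ ∀ (u₀ : ℝ → ℝ) (F G u v : ℝ → ℝ → ℝ) (δ C e : ℝ), 0 ≤ C → 0 ≤ e → e ≤ 1 →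
      (∀ b, |u₀ b| ≤ δ * gaussianWeight M 1 b) →
      (∀ x t, 0 < t → |u x t| ≤ e * envelope M c x t) →
      (∀ x t, 0 < t → |v x t| ≤ e * envelope M c' x t) →
      (∀ x t, 0 < t → |F x t| ≤ C * (|u x t| ^ 4 + |u x t| * |v x t|)) →
      (∀ x t, 0 < t → |G x t| ≤ C * (|u x t| ^ 2 + |u x t| * |v x t|)) →
      ∀ x t, 0 < t →
      |driftMildSolution d c u₀ F G x t| ≤ K * (δ + 3 * C * e ^ 2) * envelope M c x t := by
  obtain ⟨K, hK, hmild⟩ := exists_abs_mildSolution_le hd hM (sub_ne_zero.2 hc.symm)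
  have hM0 : 0 ≤ M := by linarith
  refine ⟨K, hK, fun u₀ F G u v δ C e hC he he1 hu₀ hu hv hF hG x t ht => ?_⟩
  have hbound := hmild u₀ (galilean c F) (galilean c G) δ (C * e ^ 2) (2 * (C * e ^ 2))
    (by positivity) (by positivity) hu₀ (reactionBound_galilean hM0 he he1 hC hu hv hF)
    (fluxBound_galilean hM0 hC hu hv hG) (x + c * t) t ht
  simp only [driftMildSolution, galilean, neg_mul, sub_neg_eq_add]
  exact hbound.trans_eq (by rw [envelope]; ring)

end PacketBounds

end Envelope

/-! ### Contraction in exponentially weighted norms -/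

section Contraction

lemma integrableOn_rpow_mul_exp_neg_mul {p L : ℝ} (hp : 0 < p) (hL : 0 < L) :
    IntegrableOn (fun τ : ℝ => τ ^ (p - 1) * exp (-(L * τ))) (Ioi 0) := by
  simpa using integrableOn_rpow_mul_exp_neg_mul_rpow (by linarith : -1 < p - 1) one_pos hL

lemma tendsto_integral_rpow_mul_exp_neg_mul {p : ℝ} (hp : 0 < p) :
    Tendsto (fun L : ℝ => ∫ τ in Ioi (0 : ℝ), τ ^ (p - 1) * exp (-(L * τ))) atTop (𝓝 0) := by
  have hlim : Tendsto (fun L : ℝ => L ^ (-p) * Gamma p) atTop (𝓝 0) := by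
    simpa using (tendsto_rpow_neg_atTop hp).mul_const (Gamma p)
  refine hlim.congr' ?_
  filter_upwards [eventually_gt_atTop 0] with L hL
  rw [integral_rpow_mul_exp_neg_mul_Ioi hp hL, one_div, inv_rpow hL.le, rpow_neg hL.le]

lemma preimage_const_sub_Ioo_zero (t : ℝ) : (fun s : ℝ => t - s) ⁻¹' Ioo 0 t = Ioo 0 t := by simp

lemma integrableOn_Ioo_comp_sub_left {φ : ℝ → ℝ} {t : ℝ} (hφ : IntegrableOn φ (Ioo 0 t)) :
    IntegrableOn (fun s => φ (t - s)) (Ioo 0 t) := by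
  rw [← preimage_const_sub_Ioo_zero t]
  exact ((Measure.measurePreserving_sub_left volume t).integrableOn_comp_preimage
    (MeasurableEquiv.subLeft t).measurableEmbedding).2 hφ

lemma setIntegral_Ioo_comp_sub_left (φ : ℝ → ℝ) (t : ℝ) :
    ∫ s in Ioo 0 t, φ (t - s) = ∫ s in Ioo 0 t, φ s := by
  conv_lhs => rw [← preimage_const_sub_Ioo_zero t]
  exact (Measure.measurePreserving_sub_left volume t).setIntegral_preimage_emb
    (MeasurableEquiv.subLeft t).measurableEmbedding φ _

lemma exists_abs_duhamel_le_exp {d : ℝ} (hd : 0 < d) {k : ℕ} (hk : k ≤ 1) {θ : ℝ} (hθ : 0 < θ) :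
    ∃ L₀, ∀ L, L₀ ≤ L → ∀ (h : ℝ → ℝ → ℝ) (N : ℝ),
      (∀ y s, 0 < s → |h y s| ≤ N * exp (L * s)) →
      ∀ x t, 0 < t → |duhamel d k h x t| ≤ θ * N * exp (L * t) := by
  set I := ∫ z, |heatProfile d k z|
  have hk' : (k : ℝ) ≤ 1 := by exact_mod_cast hk
  have hp : (0 : ℝ) < 1 - k / 2 := by linarith
  have hlim := (tendsto_integral_rpow_mul_exp_neg_mul hp).const_mul I
  rw [mul_zero] at hlim
  obtain ⟨L₀, hL₀⟩ :=
    ((hlim.eventually_le_const hθ).and (eventually_gt_atTop 0)).exists_forall_of_atTop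
  refine ⟨L₀, fun L hL h N hb x t ht => ?_⟩
  obtain ⟨hLθ, hLpos⟩ := hL₀ L hL
  have hN : 0 ≤ N := nonneg_of_mul_nonneg_left ((abs_nonneg _).trans (hb 0 1 one_pos)) (exp_pos _)
  have hint := integrableOn_rpow_mul_exp_neg_mul hp hLpos
  set φ : ℝ → ℝ := fun τ => τ ^ ((1 - k / 2 : ℝ) - 1) * exp (-(L * τ)) with hφ
  have hflow (s τ : ℝ) (hs : 0 < s) (hτ : 0 < τ) (hst : s + τ = t) :
      |heatFlow d k (fun y => h y s) x τ| ≤ I * (N * exp (L * t)) * φ (t - s) := by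
    refine (abs_heatFlow_le hd k (fun y => hb y s hs) x hτ).trans_eq ?_
    simp only [hφ, ← hst, add_sub_cancel_left, mul_add, exp_add, exp_neg, sub_sub_cancel_left]
    field_simp
    rfl
  calc |duhamel d k h x t|
      ≤ ∫ s in Ioo 0 t, I * (N * exp (L * t)) * φ (t - s) :=
        abs_duhamel_le_setIntegral ht ((integrableOn_Ioo_comp_sub_left
          (hint.mono_set Ioo_subset_Ioi_self)).const_mul _) hflow
    _ = I * (N * exp (L * t)) * ∫ s in Ioo 0 t, φ s := by
      rw [integral_const_mul, setIntegral_Ioo_comp_sub_left]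
    _ ≤ I * (N * exp (L * t)) * ∫ s in Ioi 0, φ s := by
      refine mul_le_mul_of_nonneg_left
        (setIntegral_mono_set hint ?_ Ioo_subset_Ioi_self.eventuallyLE) (by positivity)
      filter_upwards [self_mem_ae_restrict measurableSet_Ioi] with s hs
      exact mul_nonneg (rpow_nonneg (le_of_lt hs) _) (exp_pos _).le
    _ = I * (∫ s in Ioi 0, φ s) * (N * exp (L * t)) := by ring
    _ ≤ θ * (N * exp (L * t)) := by gcongr
    _ = θ * N * exp (L * t) := (mul_assoc _ _ _).symm

lemma exists_abs_driftMildSolution_sub_le {d c : ℝ} (hd : 0 < d) {θ : ℝ} (hθ : 0 < θ) :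
    ∃ L₀, ∀ L, L₀ ≤ L → ∀ (u₀ : ℝ → ℝ) (F G F' G' : ℝ → ℝ → ℝ) (N : ℝ),
      MildData d u₀ F G → MildData d u₀ F' G' →
      (∀ y s, 0 < s → |F y s - F' y s| ≤ N * exp (L * s)) →
      (∀ y s, 0 < s → |G y s - G' y s| ≤ N * exp (L * s)) → ∀ x t, 0 < t →
      |driftMildSolution d c u₀ F G x t - driftMildSolution d c u₀ F' G' x t| ≤
        θ * N * exp (L * t) := by
  obtain ⟨L₀, h₀⟩ := exists_abs_duhamel_le_exp hd (k := 0) zero_le_one (half_pos hθ)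
  obtain ⟨L₁, h₁⟩ := exists_abs_duhamel_le_exp hd (k := 1) le_rfl (half_pos hθ)
  refine ⟨max L₀ L₁, fun L hL u₀ F G F' G' N H H' hF hG x t ht => ?_⟩
  have hreaction := h₀ L ((le_max_left _ _).trans hL) _ N (fun y s => hF (y - c * s) s)
    (x - -c * t) t ht
  have hflux := h₁ L ((le_max_right _ _).trans hL) _ N (fun y s => hG (y - c * s) s)
    (x - -c * t) t ht
  have hF_sub := ((H.galilean c).admissible_reaction zero_le_one).duhamel_sub
    ((H'.galilean c).admissible_reaction zero_le_one) (x - -c * t) ht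
  have hG_sub := ((H.galilean c).admissible_flux le_rfl).duhamel_sub
    ((H'.galilean c).admissible_flux le_rfl) (x - -c * t) ht
  calc |driftMildSolution d c u₀ F G x t - driftMildSolution d c u₀ F' G' x t|
      = |duhamel d 0 (fun y s => galilean c F y s - galilean c F' y s) (x - -c * t) t +
          duhamel d 1 (fun y s => galilean c G y s - galilean c G' y s) (x - -c * t) t| := by
        rw [hF_sub, hG_sub]
        simp only [driftMildSolution, galilean, mildSolution]
        ring_nf
    _ ≤ θ / 2 * N * exp (L * t) + θ / 2 * N * exp (L * t) :=
      (abs_add_le _ _).trans (add_le_add hreaction hflux)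
    _ = θ * N * exp (L * t) := by ring

end Contraction

section FixedPoint

variable {ι : Type*} {E : ι → ℝ → ℝ → ℝ} {L : ℝ}

/-- The family `z` is continuous and dominated by `E` at positive times. -/
structure DominatedBy (E z : ι → ℝ → ℝ → ℝ) : Prop where
  continuousPos (i : ι) : ContinuousPos (z i)
  abs_le (i : ι) (x t : ℝ) (ht : 0 < t) : |z i x t| ≤ E i x t

variable [TopologicalSpace ι]

/-- The families dominated by `E`, with distance `sup exp (-L t) |z i x t - z' i x t|`: a family `z`
is encoded by the bounded continuous function `exp (-L t) z i x t`. -/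
def DominatedSpace (E : ι → ℝ → ℝ → ℝ) (L : ℝ) : Set (ι × {p : ℝ × ℝ // 0 < p.2} →ᵇ ℝ) :=
  {ζ | ∀ q, |ζ q| ≤ exp (-(L * q.2.1.2)) * E q.1 q.2.1.1 q.2.1.2}

lemma isClosed_dominatedSpace : IsClosed (DominatedSpace E L) := by
  simp only [DominatedSpace, ofPred_forall]
  exact isClosed_iInter fun q =>
    isClosed_le (continuous_eval_const q).abs continuous_const

/-- The family encoded by `ζ`, extended by `0` to nonpositive times. -/
def decode (L : ℝ) (ζ : ι × {p : ℝ × ℝ // 0 < p.2} →ᵇ ℝ) (i : ι) (x t : ℝ) : ℝ :=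
  if ht : 0 < t then exp (L * t) * ζ (i, ⟨(x, t), ht⟩) else 0

lemma decode_of_pos (L : ℝ) (ζ : ι × {p : ℝ × ℝ // 0 < p.2} →ᵇ ℝ) (i : ι) (x : ℝ) {t : ℝ}
    (ht : 0 < t) : decode L ζ i x t = exp (L * t) * ζ (i, ⟨(x, t), ht⟩) := dif_pos ht

lemma abs_decode_sub_decode_le (ζ ζ' : ι × {p : ℝ × ℝ // 0 < p.2} →ᵇ ℝ) (i : ι) (x : ℝ) {t : ℝ}
    (ht : 0 < t) : |decode L ζ i x t - decode L ζ' i x t| ≤ dist ζ ζ' * exp (L * t) := by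
  rw [decode_of_pos L _ i x ht, decode_of_pos L _ i x ht, ← mul_sub, abs_mul, abs_exp, mul_comm]
  gcongr
  exact BoundedContinuousFunction.dist_coe_le_dist (f := ζ) (g := ζ') (i, ⟨(x, t), ht⟩)

lemma dist_le_of_abs_decode_sub_decode_le {ζ ζ' : ι × {p : ℝ × ℝ // 0 < p.2} →ᵇ ℝ} {N : ℝ}
    (hN : 0 ≤ N)
    (h : ∀ i x t, 0 < t → |decode L ζ i x t - decode L ζ' i x t| ≤ N * exp (L * t)) :
    dist ζ ζ' ≤ N := by
  refine (BoundedContinuousFunction.dist_le hN).2 fun ⟨i, ⟨x, t⟩, ht⟩ => ?_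
  have hle := h i x t ht
  rw [decode_of_pos L _ i x ht, decode_of_pos L _ i x ht, ← mul_sub, abs_mul, abs_exp,
    mul_comm] at hle
  exact le_of_mul_le_mul_right hle (exp_pos _)

lemma dominatedBy_decode (ζ : DominatedSpace E L) : DominatedBy E (decode L ζ.1) where
  continuousPos i := by
    rw [ContinuousPos, continuousOn_iff_continuous_domRestrict]
    have hcont : Continuous fun p : {p : ℝ × ℝ // 0 < p.2} => exp (L * p.1.2) * ζ.1 (i, p) := by
      fun_prop
    exact hcont.congr fun p => (decode_of_pos L ζ.1 i p.1.1 p.2).symm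
  abs_le i x t ht := by
    rw [decode_of_pos L _ i x ht, abs_mul, abs_exp, ← le_inv_mul_iff₀ (exp_pos _), ← exp_neg]
    exact ζ.2 (i, ⟨(x, t), ht⟩)

variable [DiscreteTopology ι]

/-- The point of the dominated space that encodes the family `z`. -/
def encode (hE : ∀ i x t, 0 < t → E i x t ≤ 1) (hL : 0 ≤ L) {z : ι → ℝ → ℝ → ℝ}
    (hz : DominatedBy E z) : DominatedSpace E L :=
  have hle (q : ι × {p : ℝ × ℝ // 0 < p.2}) :
      |exp (-(L * q.2.1.2)) * z q.1 q.2.1.1 q.2.1.2| ≤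
        exp (-(L * q.2.1.2)) * E q.1 q.2.1.1 q.2.1.2 := by
    rw [abs_mul, abs_exp]
    exact mul_le_mul_of_nonneg_left (hz.abs_le _ _ _ q.2.2) (exp_pos _).le
  ⟨.ofNormedAddCommGroup (fun q => exp (-(L * q.2.1.2)) * z q.1 q.2.1.1 q.2.1.2)
    (continuous_prod_of_discrete_left.2 fun i => by
      have hcont := (hz.continuousPos i).domRestrict
      exact (by fun_prop : Continuous fun p : {p : ℝ × ℝ // 0 < p.2} => exp (-(L * p.1.2))).mul
        hcont) 1
    fun q => (hle q).trans (mul_le_one₀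
      (exp_le_one_iff.2 (neg_nonpos.2 (mul_nonneg hL q.2.2.le)))
      ((abs_nonneg _).trans (hz.abs_le _ _ _ q.2.2)) (hE _ _ _ q.2.2)), hle⟩

lemma decode_encode (hE : ∀ i x t, 0 < t → E i x t ≤ 1) (hL : 0 ≤ L) {z : ι → ℝ → ℝ → ℝ}
    (hz : DominatedBy E z) (i : ι) (x : ℝ) {t : ℝ} (ht : 0 < t) :
    decode L (encode hE hL hz).1 i x t = z i x t := by
  rw [decode_of_pos L _ i x ht]
  change exp (L * t) * (exp (-(L * t)) * z i x t) = z i x t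
  rw [← mul_assoc, ← exp_add, add_neg_cancel, exp_zero, one_mul]

lemma DominatedBy.exists_fixedPoint (hE₀ : ∀ i x t, 0 < t → 0 ≤ E i x t)
    (hE : ∀ i x t, 0 < t → E i x t ≤ 1) (hL : 0 ≤ L)
    {Φ : (ι → ℝ → ℝ → ℝ) → ι → ℝ → ℝ → ℝ} (hΦ : ∀ z, DominatedBy E z → DominatedBy E (Φ z))
    (hcontr : ∀ z z', DominatedBy E z → DominatedBy E z' → ∀ N,
      (∀ i x t, 0 < t → |z i x t - z' i x t| ≤ N * exp (L * t)) →
      ∀ i x t, 0 < t → |Φ z i x t - Φ z' i x t| ≤ 1 / 2 * N * exp (L * t)) :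
    ∃ w, DominatedBy E w ∧ ∀ i x t, 0 < t → Φ w i x t = w i x t := by
  have hΦdec (ζ : DominatedSpace E L) := hΦ _ (dominatedBy_decode ζ)
  let T (ζ : DominatedSpace E L) : DominatedSpace E L := encode hE hL (hΦdec ζ)
  have hT : ContractingWith (1 / 2) T := by
    refine ⟨by norm_num, LipschitzWith.of_dist_le_mul fun ζ ζ' =>
      dist_le_of_abs_decode_sub_decode_le (L := L) (by positivity) fun i x t ht => ?_⟩
    rw [decode_encode hE hL _ i x ht, decode_encode hE hL _ i x ht]
    simpa [Subtype.dist_eq] using hcontr _ _ (dominatedBy_decode ζ) (dominatedBy_decode ζ') _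
      (fun i x t ht => abs_decode_sub_decode_le ζ.1 ζ'.1 i x ht) i x t ht
  have : Nonempty (DominatedSpace E L) := ⟨encode hE hL (z := fun _ _ _ => 0)
    ⟨fun _ => continuousOn_const, fun i x t ht => by simpa using hE₀ i x t ht⟩⟩
  have : CompleteSpace (DominatedSpace E L) := isClosed_dominatedSpace.completeSpace_coe
  refine ⟨decode L hT.fixedPoint.1, dominatedBy_decode _, fun i x t ht => ?_⟩
  rw [← decode_encode hE hL (hΦdec hT.fixedPoint) i x ht]
  exact congrArg (fun ζ : DominatedSpace E L => decode L ζ.1 i x t) hT.fixedPoint_isFixedPt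

end FixedPoint

/-! ### Regularity of mild solutions of the system -/

section Products

variable {α a b : ℝ} {h h' : ℝ → ℝ → ℝ}

lemma ContinuousPos.mul (hh : ContinuousPos h) (hh' : ContinuousPos h') :
    ContinuousPos fun x t => h x t * h' x t :=
  ContinuousOn.mul hh hh'

lemma WeightedBdd.mul (hh : WeightedBdd a h) (hh' : WeightedBdd b h') :
    WeightedBdd (a + b) fun x t => h x t * h' x t := by
  intro T hT
  obtain ⟨A, hA, hle⟩ := hh T hT
  obtain ⟨A', hA', hle'⟩ := hh' T hT
  refine ⟨A * A', by positivity, fun x s hs hsT => ?_⟩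
  rw [abs_mul, neg_add, rpow_add hs, mul_mul_mul_comm]
  exact mul_le_mul (hle x s hs hsT) (hle' x s hs hsT) (abs_nonneg _) (by positivity)

lemma WeightedHolder.mul {a' b' e : ℝ} (hb : WeightedBdd a h) (hh : WeightedHolder α a' h)
    (hb' : WeightedBdd b h') (hh' : WeightedHolder α b' h') (he : a + b' = e) (he' : a' + b = e) :
    WeightedHolder α e fun x t => h x t * h' x t := by
  intro T hT
  obtain ⟨B, hB, hbdd⟩ := hb T hT
  obtain ⟨B', hB', hbdd'⟩ := hb' T hT
  obtain ⟨A, hA, hle⟩ := hh T hT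
  obtain ⟨A', hA', hle'⟩ := hh' T hT
  refine ⟨B * A' + A * B', by positivity, fun x y s hs hsT => ?_⟩
  have hsplit : h x s * h' x s - h y s * h' y s =
      h x s * (h' x s - h' y s) + (h x s - h y s) * h' y s := by ring
  calc |h x s * h' x s - h y s * h' y s|
      ≤ |h x s| * |h' x s - h' y s| + |h x s - h y s| * |h' y s| := by
        rw [hsplit, ← abs_mul, ← abs_mul]
        exact abs_add_le _ _
    _ ≤ B * s ^ (-a) * (A' * |x - y| ^ α * s ^ (-b')) +
        A * |x - y| ^ α * s ^ (-a') * (B' * s ^ (-b)) := by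
      gcongr
      exacts [hbdd x s hs hsT, hle' x y s hs hsT, hle x y s hs hsT, hbdd' y s hs hsT]
    _ = B * A' * |x - y| ^ α * (s ^ (-a) * s ^ (-b')) +
        A * B' * |x - y| ^ α * (s ^ (-a') * s ^ (-b)) := by ring
    _ = (B * A' + A * B') * |x - y| ^ α * s ^ (-e) := by
      rw [← rpow_add hs, ← rpow_add hs, ← neg_add, ← neg_add, he, he']
      ring

end Products

/-- The composition operator `z ↦ f (u, v)`, where `u = z false` and `v = z true`. -/
def nemytskii (f : ℝ × ℝ → ℝ) (z : Bool → ℝ → ℝ → ℝ) (x t : ℝ) : ℝ := f (z false x t, z true x t)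

section Nemytskii

variable {α r : ℝ} {f : ℝ × ℝ → ℝ} {z : Bool → ℝ → ℝ → ℝ}

lemma mem_closedBall_of_abs_le (hb : ∀ i x t, 0 < t → |z i x t| ≤ r) (x : ℝ) {t : ℝ} (ht : 0 < t) :
    (z false x t, z true x t) ∈ Metric.closedBall (0 : ℝ × ℝ) r :=
  mem_closedBall_zero_iff.2 (max_le (hb _ _ _ ht) (hb _ _ _ ht))

lemma continuousPos_nemytskii (hf : Continuous f) (hz : ∀ i, ContinuousPos (z i)) :
    ContinuousPos (nemytskii f z) :=
  hf.comp_continuousOn ((hz false).prodMk (hz true))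

lemma weightedBdd_nemytskii (hf : Continuous f) (hb : ∀ i x t, 0 < t → |z i x t| ≤ r) :
    WeightedBdd 0 (nemytskii f z) := by
  obtain ⟨C, hC⟩ :=
    (isCompact_closedBall (0 : ℝ × ℝ) r).exists_bound_of_continuousOn hf.continuousOn
  refine fun _ _ => ⟨|C|, abs_nonneg _, fun x t ht _ => ?_⟩
  rw [neg_zero, rpow_zero, mul_one]
  exact (hC _ (mem_closedBall_of_abs_le hb x ht)).trans (le_abs_self _)

lemma exists_abs_sub_le_of_locallyLipschitz (hf : LocallyLipschitz f) (r : ℝ) :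
    ∃ K, 0 ≤ K ∧ ∀ p ∈ Metric.closedBall (0 : ℝ × ℝ) r, ∀ q ∈ Metric.closedBall (0 : ℝ × ℝ) r,
      |f p - f q| ≤ K * ‖p - q‖ := by
  obtain ⟨K, hK⟩ := hf.locallyLipschitzOn.exists_lipschitzOnWith_of_compact
    (isCompact_closedBall (0 : ℝ × ℝ) r)
  exact ⟨K, K.2, fun p hp q hq => hK.norm_sub_le hp hq⟩

lemma weightedHolder_nemytskii (hf : LocallyLipschitz f) (hb : ∀ i x t, 0 < t → |z i x t| ≤ r)
    {a : ℝ} (hz : ∀ i, WeightedHolder α a (z i)) : WeightedHolder α a (nemytskii f z) := by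
  obtain ⟨K, hK, hlip⟩ := exists_abs_sub_le_of_locallyLipschitz hf r
  intro T hT
  obtain ⟨A, hA, hle⟩ := hz false T hT
  obtain ⟨A', -, hle'⟩ := hz true T hT
  refine ⟨K * max A A', by positivity, fun x y t ht htT => ?_⟩
  refine (hlip _ (mem_closedBall_of_abs_le hb x ht) _ (mem_closedBall_of_abs_le hb y ht)).trans ?_
  rw [mul_assoc, mul_assoc]
  refine mul_le_mul_of_nonneg_left (max_le ?_ ?_) hK
  · refine (hle x y t ht htT).trans ?_
    rw [mul_assoc]
    gcongr
    exact le_max_left _ _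
  · refine (hle' x y t ht htT).trans ?_
    rw [mul_assoc]
    gcongr
    exact le_max_right _ _

/-- The space derivative of `nemytskii g z` by the chain rule, `zx` being that of `z`. -/
def nemytskiiDeriv (g : ℝ × ℝ → ℝ) (z zx : Bool → ℝ → ℝ → ℝ) (x t : ℝ) : ℝ :=
  nemytskii (fun p => fderiv ℝ g p (1, 0)) z x t * zx false x t +
    nemytskii (fun p => fderiv ℝ g p (0, 1)) z x t * zx true x t

variable {g : ℝ × ℝ → ℝ} {zx : Bool → ℝ → ℝ → ℝ}

lemma contDiff_fderiv_apply (hg : ContDiff ℝ 2 g) (p : ℝ × ℝ) :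
    ContDiff ℝ 1 fun q => fderiv ℝ g q p :=
  (hg.fderiv_right (m := 1) (by norm_num)).clm_apply contDiff_const

lemma continuous_fderiv_apply (hg : ContDiff ℝ 1 g) (p : ℝ × ℝ) :
    Continuous fun q => fderiv ℝ g q p :=
  (hg.continuous_fderiv one_ne_zero).clm_apply continuous_const

lemma hasDerivAt_nemytskii (hg : Differentiable ℝ g) {x t : ℝ}
    (hz : ∀ i, HasDerivAt (fun x => z i x t) (zx i x t) x) :
    HasDerivAt (fun x => nemytskii g z x t) (nemytskiiDeriv g z zx x t) x := by
  refine ((hg (z false x t, z true x t)).hasFDerivAt.comp_hasDerivAt x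
    ((hz false).prodMk (hz true))).congr_deriv ?_
  have hvec : (zx false x t, zx true x t) =
      zx false x t • ((1 : ℝ), (0 : ℝ)) + zx true x t • ((0 : ℝ), (1 : ℝ)) := by simp
  rw [hvec, map_add, map_smul, map_smul, smul_eq_mul, smul_eq_mul, mul_comm, mul_comm (zx true x t)]
  rfl

lemma isSpaceDeriv_nemytskii (hg : ContDiff ℝ 1 g) (hc : ∀ i, ContinuousPos (z i))
    (hb : ∀ i x t, 0 < t → |z i x t| ≤ r) (hz : ∀ i, IsSpaceDeriv (z i) (zx i)) :
    IsSpaceDeriv (nemytskii g z) (nemytskiiDeriv g z zx) where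
  continuousPos :=
    ((continuousPos_nemytskii (continuous_fderiv_apply hg _) hc).mul (hz _).continuousPos).add
      ((continuousPos_nemytskii (continuous_fderiv_apply hg _) hc).mul (hz _).continuousPos)
  weightedBdd := by
    have hpartial (p : ℝ × ℝ) (i : Bool) :
        WeightedBdd (1 / 2) fun x t => nemytskii (fun q => fderiv ℝ g q p) z x t * zx i x t := by
      simpa only [zero_add] using
        (weightedBdd_nemytskii (continuous_fderiv_apply hg p) hb).mul (hz i).weightedBdd
    exact (hpartial _ _).add (hpartial _ _)
  hasDerivAt x t ht := hasDerivAt_nemytskii (hg.differentiable one_ne_zero)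
    fun i => (hz i).hasDerivAt x t ht

lemma weightedHolder_nemytskiiDeriv (hg : ContDiff ℝ 2 g) (hb : ∀ i x t, 0 < t → |z i x t| ≤ r)
    (hz : ∀ i, WeightedHolder α (α / 2) (z i)) (hzx : ∀ i, WeightedBdd (1 / 2) (zx i))
    (hzx' : ∀ i, WeightedHolder α ((1 + α) / 2) (zx i)) :
    WeightedHolder α ((1 + α) / 2) (nemytskiiDeriv g z zx) := by
  have hpartial (p : ℝ × ℝ) (i : Bool) : WeightedHolder α ((1 + α) / 2)
      fun x t => nemytskii (fun q => fderiv ℝ g q p) z x t * zx i x t :=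
    WeightedHolder.mul (weightedBdd_nemytskii (contDiff_fderiv_apply hg p).continuous hb)
      (weightedHolder_nemytskii (contDiff_fderiv_apply hg p).locallyLipschitz hb hz) (hzx i)
      (hzx' i) (zero_add _) (by ring)
  exact (hpartial _ _).add (hpartial _ _)

end Nemytskii

section MildSolutions

/-- A system `∂ₜ zᵢ = dᵢ ∂ₓₓ zᵢ + cᵢ ∂ₓ zᵢ + fᵢ(u, v) + ∂ₓ(gᵢ(u, v))`, where `u` and `v` are the
components of `z` indexed by `false` and `true`. -/
structure System where
  diffusion : Bool → ℝ
  drift : Bool → ℝ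
  reaction : Bool → ℝ × ℝ → ℝ
  flux : Bool → ℝ × ℝ → ℝ
  diffusion_pos : ∀ i, 0 < diffusion i
  locallyLipschitz_reaction : ∀ i, LocallyLipschitz (reaction i)
  contDiff_flux : ∀ i, ContDiff ℝ 2 (flux i)

namespace System

variable {S : System} {u₀ : Bool → ℝ →ᵇ ℝ} {z : Bool → ℝ → ℝ → ℝ}

/-- The solution of the linear system with sources `fᵢ(z)`, `gᵢ(z)`; mild solutions are the fixed
points of this map. -/
def picard (S : System) (u₀ : Bool → ℝ →ᵇ ℝ) (z : Bool → ℝ → ℝ → ℝ) (i : Bool) : ℝ → ℝ → ℝ :=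
  driftMildSolution (S.diffusion i) (S.drift i) (u₀ i) (nemytskii (S.reaction i) z)
    (nemytskii (S.flux i) z)

lemma locallyLipschitz_flux (S : System) (i : Bool) : LocallyLipschitz (S.flux i) :=
  ((S.contDiff_flux i).of_le one_le_two).locallyLipschitz

lemma mildData (S : System) (u₀ : Bool → ℝ →ᵇ ℝ) {r : ℝ} (hz : DominatedBy (fun _ _ _ => r) z)
    (i : Bool) :
    MildData (S.diffusion i) (u₀ i) (nemytskii (S.reaction i) z) (nemytskii (S.flux i) z) where
  pos := S.diffusion_pos i
  continuous_init := (u₀ i).continuous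
  bdd_init := ⟨_, (u₀ i).norm_coe_le_norm⟩
  continuousPos_reaction :=
    continuousPos_nemytskii (S.locallyLipschitz_reaction i).continuous hz.continuousPos
  weightedBdd_reaction :=
    weightedBdd_nemytskii (S.locallyLipschitz_reaction i).continuous hz.abs_le
  continuousPos_flux := continuousPos_nemytskii (S.contDiff_flux i).continuous hz.continuousPos
  weightedBdd_flux := weightedBdd_nemytskii (S.contDiff_flux i).continuous hz.abs_le

/-- `z` is a bounded mild solution with initial data `u₀`; only its values at positive times are
constrained. -/
structure IsMildSolution (S : System) (u₀ : Bool → ℝ →ᵇ ℝ) (z : Bool → ℝ → ℝ → ℝ) : Prop where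
  exists_dominatedBy : ∃ r, DominatedBy (fun _ _ _ => r) z
  picard_eq (i : Bool) (x t : ℝ) (ht : 0 < t) : S.picard u₀ z i x t = z i x t

namespace IsMildSolution

lemma weightedHolder (hz : S.IsMildSolution u₀ z) {α : ℝ} (hα : 0 ≤ α) (hα1 : α < 1) (i : Bool) :
    WeightedHolder α (α / 2) (z i) := by
  obtain ⟨r, hr⟩ := hz.exists_dominatedBy
  exact ((S.mildData u₀ hr i).weightedHolder_driftMildSolution (S.drift i) hα hα1).congr
    fun x t ht => (hz.picard_eq i x t ht).symm

lemma exists_isSpaceDeriv_picard (hz : S.IsMildSolution u₀ z) (i : Bool) :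
    ∃ zx, IsSpaceDeriv (S.picard u₀ z i) zx := by
  obtain ⟨r, hr⟩ := hz.exists_dominatedBy
  exact (S.mildData u₀ hr i).exists_isSpaceDeriv_driftMildSolution (S.drift i)
    (α := 1 / 2) (by norm_num) (by norm_num)
    (weightedHolder_nemytskii (S.locallyLipschitz_flux i) hr.abs_le
      (hz.weightedHolder (by norm_num) (by norm_num)))

lemma isSpaceDeriv (hz : S.IsMildSolution u₀ z) {i : Bool} {zx : ℝ → ℝ → ℝ}
    (hzx : IsSpaceDeriv (S.picard u₀ z i) zx) : IsSpaceDeriv (z i) zx where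
  continuousPos := hzx.continuousPos
  weightedBdd := hzx.weightedBdd
  hasDerivAt x t ht := by
    simpa only [hz.picard_eq i _ t ht] using hzx.hasDerivAt x t ht

lemma exists_hasClassicalDerivs_picard (hz : S.IsMildSolution u₀ z) {zx : Bool → ℝ → ℝ → ℝ}
    (hzx : ∀ i, IsSpaceDeriv (S.picard u₀ z i) (zx i)) (i : Bool) :
    ∃ ut ux uxx, HasClassicalDerivs (S.picard u₀ z i) ut ux uxx ∧
      ∀ x t, ut x t = S.diffusion i * uxx x t + S.drift i * ux x t +
        nemytskii (S.reaction i) z x t + nemytskiiDeriv (S.flux i) z zx x t := by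
  obtain ⟨r, hr⟩ := hz.exists_dominatedBy
  have hD (j : Bool) : IsSpaceDeriv (nemytskii (S.flux j) z) (nemytskiiDeriv (S.flux j) z zx) :=
    isSpaceDeriv_nemytskii ((S.contDiff_flux j).of_le one_le_two) hr.continuousPos hr.abs_le
      fun k => hz.isSpaceDeriv (hzx k)
  have hα : (0 : ℝ) < 1 / 2 := by norm_num
  have hα1 : (1 / 2 : ℝ) < 1 := by norm_num
  have hzHolder := hz.weightedHolder hα.le hα1
  have hzxHolder (j : Bool) : WeightedHolder (1 / 2) ((1 + 1 / 2) / 2) (zx j) :=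
    (S.mildData u₀ hr j).weightedHolder_of_isSpaceDeriv_drift (hD j) hα.le hα1 (hzx j)
  refine (S.mildData u₀ hr i).exists_hasClassicalDerivs_driftMildSolution (hD i) (S.drift i)
    hα hα1 (WeightedHolder.add ?_ ?_)
  · exact (weightedHolder_nemytskii (S.locallyLipschitz_reaction i) hr.abs_le hzHolder).mono
      (by norm_num)
  · exact weightedHolder_nemytskiiDeriv (S.contDiff_flux i) hr.abs_le hzHolder
      (fun j => (hzx j).weightedBdd) hzxHolder

lemma picard_zero (hz : S.IsMildSolution u₀ z) (i : Bool) (x : ℝ) :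
    S.picard u₀ z i x 0 = u₀ i x := by
  obtain ⟨r, hr⟩ := hz.exists_dominatedBy
  exact (S.mildData u₀ hr i).driftMildSolution_zero _ x

lemma continuousOn_picard (hz : S.IsMildSolution u₀ z) (i : Bool) :
    ContinuousOn (fun p : ℝ × ℝ => S.picard u₀ z i p.1 p.2) {p | 0 ≤ p.2} := by
  obtain ⟨r, hr⟩ := hz.exists_dominatedBy
  exact (S.mildData u₀ hr i).continuousOn_driftMildSolution _

lemma exists_abs_picard_le (hz : S.IsMildSolution u₀ z) (i : Bool) :
    ∃ B, ∀ x t, 0 ≤ t → |S.picard u₀ z i x t| ≤ B := by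
  obtain ⟨r, hr⟩ := hz.exists_dominatedBy
  refine ⟨max ‖u₀ i‖ r, fun x t ht => ?_⟩
  rcases ht.eq_or_lt with rfl | ht
  · rw [hz.picard_zero]
    exact ((u₀ i).norm_coe_le_norm x).trans (le_max_left _ _)
  · rw [hz.picard_eq i x t ht]
    exact (hr.abs_le i x t ht).trans (le_max_right _ _)

theorem isClassicalSolution_picard (hz : S.IsMildSolution u₀ z) :
    IsClassicalSolution (S.diffusion false) (S.diffusion true) (S.drift false) (S.drift true)
      (S.reaction false) (S.reaction true) (S.flux false) (S.flux true) ⊤ (u₀ false) (u₀ true)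
      (S.picard u₀ z false) (S.picard u₀ z true) := by
  obtain ⟨B, hB⟩ := hz.exists_abs_picard_le false
  obtain ⟨B', hB'⟩ := hz.exists_abs_picard_le true
  choose zx hzx using hz.exists_isSpaceDeriv_picard
  choose ut ux uxx hderiv hpde using hz.exists_hasClassicalDerivs_picard hzx
  have hflux (i : Bool) (x t : ℝ) (ht : 0 < t) :
      HasDerivAt (fun x => nemytskii (S.flux i) z x t) (nemytskiiDeriv (S.flux i) z zx x t) x :=
    hasDerivAt_nemytskii ((S.contDiff_flux i).differentiable two_ne_zero)
      fun j => (hz.isSpaceDeriv (hzx j)).hasDerivAt x t ht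
  refine ⟨hz.picard_zero false, hz.picard_zero true,
    ((hz.continuousOn_picard false).prodMk (hz.continuousOn_picard true)).mono fun _ hp => hp.1,
    fun _ _ _ => ⟨B + B', fun x t ht _ => add_le_add (hB x t ht) (hB' x t ht)⟩,
    ut false, ut true, ux false, ux true, uxx false, uxx true,
    nemytskiiDeriv (S.flux false) z zx, nemytskiiDeriv (S.flux true) z zx, fun x t ht _ => ?_, ?_⟩
  · refine ⟨(hderiv _).hasDerivAt_time x t ht, (hderiv _).hasDerivAt_space x t ht,
      (hderiv _).hasDerivAt_space_space x t ht, ?_, (hderiv _).hasDerivAt_time x t ht,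
      (hderiv _).hasDerivAt_space x t ht, (hderiv _).hasDerivAt_space_space x t ht, ?_, ?_, ?_⟩
    · simpa only [nemytskii, hz.picard_eq _ _ t ht] using hflux false x t ht
    · simpa only [nemytskii, hz.picard_eq _ _ t ht] using hflux true x t ht
    · simpa only [nemytskii, hz.picard_eq _ _ t ht] using hpde false x t
    · simpa only [nemytskii, hz.picard_eq _ _ t ht] using hpde true x t
  · have hcont (i : Bool) := (hderiv i).continuousPos_time.prodMk
      ((hderiv i).continuousPos_space.prodMk (hderiv i).continuousPos_space_space)
    exact ((hderiv false).continuousPos_time.prodMk ((hderiv false).continuousPos_space.prodMk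
      ((hderiv false).continuousPos_space_space.prodMk (hcont true)))).mono fun _ hp => hp.1

end IsMildSolution

end System

end MildSolutions

/-! ### Small global solutions -/

namespace System

variable {S : System} {M r C : ℝ}

/-- On the box `|u|, |v| ≤ r` the nonlinearities of the `i`-th equation contain at least one factor
`|zᵢ|`, and are quartic (reaction) or quadratic (flux) up to the mixed term `|u| |v|`. -/
structure HasMixedBounds (S : System) (r C : ℝ) : Prop where
  radius_pos : 0 < r
  abs_reaction_le (i : Bool) (a : Bool → ℝ) (ha : ∀ j, |a j| ≤ r) :
    |S.reaction i (a false, a true)| ≤ C * (|a i| ^ 4 + |a i| * |a (!i)|)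
  abs_flux_le (i : Bool) (a : Bool → ℝ) (ha : ∀ j, |a j| ≤ r) :
    |S.flux i (a false, a true)| ≤ C * (|a i| ^ 2 + |a i| * |a (!i)|)

lemma HasMixedBounds.nonneg (hS : S.HasMixedBounds r C) : 0 ≤ C := by
  have hr := hS.radius_pos
  have hle := hS.abs_reaction_le false (fun i => bif i then 0 else r) fun i => by
    cases i <;> simp [abs_of_pos hr, hr.le]
  refine nonneg_of_mul_nonneg_left ((abs_nonneg _).trans hle) ?_
  simpa using pow_pos (abs_pos.2 hr.ne') 4

/-- The wave packets of amplitude `e` that dominate the small solutions. -/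
def packet (S : System) (M e : ℝ) (i : Bool) (x t : ℝ) : ℝ := e * envelope M (S.drift i) x t

lemma packet_le (S : System) (hM : 0 ≤ M) {e : ℝ} (he : 0 ≤ e) (i : Bool) (x : ℝ) {t : ℝ}
    (ht : 0 ≤ t) : S.packet M e i x t ≤ e :=
  mul_le_of_le_one_right he (envelope_le_one hM ht _ _)

lemma exists_abs_picard_le_packet (hS : S.HasMixedBounds r C)
    (hM : ∀ i, 16 * S.diffusion i ≤ M) (hc : S.drift false ≠ S.drift true) :
    ∃ K, 0 ≤ K ∧ ∀ (u₀ : Bool → ℝ →ᵇ ℝ) (z : Bool → ℝ → ℝ → ℝ) (δ e : ℝ),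
      0 ≤ δ → 0 ≤ e → e ≤ 1 → (∀ i b, |u₀ i b| ≤ δ * gaussianWeight M 1 b) →
      DominatedBy (fun _ _ _ => r) z → DominatedBy (S.packet M e) z → ∀ i x t, 0 < t →
      |S.picard u₀ z i x t| ≤ S.packet M (K * (δ + 3 * C * e ^ 2)) i x t := by
  have hcne (i : Bool) : S.drift i ≠ S.drift (!i) := by
    cases i
    exacts [hc, hc.symm]
  choose K hK hle using fun i =>
    exists_abs_driftMildSolution_le_envelope (S.diffusion_pos i) (hM i) (hcne i)
  have hKmax (i : Bool) : K i ≤ max (K false) (K true) := by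
    cases i
    exacts [le_max_left _ _, le_max_right _ _]
  refine ⟨max (K false) (K true), (hK false).trans (hKmax false),
    fun u₀ z δ e hδ he he1 hu₀ hr hz i x t ht => ?_⟩
  have hC := hS.nonneg
  have henv := envelope_nonneg M (S.drift i) x t
  refine (hle i (u₀ i) _ _ (z i) (z !i) δ C e hC he he1 (hu₀ i) (hz.abs_le i) (hz.abs_le !i)
    (fun x t ht => hS.abs_reaction_le i (fun j => z j x t) fun j => hr.abs_le j x t ht)
    (fun x t ht => hS.abs_flux_le i (fun j => z j x t) fun j => hr.abs_le j x t ht)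
    x t ht).trans ?_
  rw [packet]
  gcongr
  exact hKmax i

lemma abs_nemytskii_sub_le {f : ℝ × ℝ → ℝ} {K : ℝ} (hK : 0 ≤ K)
    (hf : ∀ p ∈ Metric.closedBall (0 : ℝ × ℝ) r, ∀ q ∈ Metric.closedBall (0 : ℝ × ℝ) r,
      |f p - f q| ≤ K * ‖p - q‖) {z z' : Bool → ℝ → ℝ → ℝ}
    (hz : DominatedBy (fun _ _ _ => r) z) (hz' : DominatedBy (fun _ _ _ => r) z') {x t N : ℝ}
    (ht : 0 < t) (hN : ∀ i, |z i x t - z' i x t| ≤ N) :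
    |nemytskii f z x t - nemytskii f z' x t| ≤ K * N :=
  (hf _ (mem_closedBall_of_abs_le hz.abs_le x ht) _
    (mem_closedBall_of_abs_le hz'.abs_le x ht)).trans
    (mul_le_mul_of_nonneg_left (max_le (hN false) (hN true)) hK)

lemma exists_abs_picard_sub_le (S : System) (r : ℝ) (i : Bool) :
    ∃ L₀, ∀ L, L₀ ≤ L → ∀ (u₀ : Bool → ℝ →ᵇ ℝ) (z z' : Bool → ℝ → ℝ → ℝ),
      DominatedBy (fun _ _ _ => r) z → DominatedBy (fun _ _ _ => r) z' → ∀ N,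
      (∀ j x t, 0 < t → |z j x t - z' j x t| ≤ N * exp (L * t)) → ∀ x t, 0 < t →
      |S.picard u₀ z i x t - S.picard u₀ z' i x t| ≤ 1 / 2 * N * exp (L * t) := by
  obtain ⟨K, hK, hreaction⟩ :=
    exists_abs_sub_le_of_locallyLipschitz (S.locallyLipschitz_reaction i) r
  obtain ⟨K', hK', hflux⟩ := exists_abs_sub_le_of_locallyLipschitz (S.locallyLipschitz_flux i) r
  obtain ⟨L₀, hL₀⟩ := exists_abs_driftMildSolution_sub_le (c := S.drift i) (S.diffusion_pos i)
    (by positivity : 0 < 1 / (2 * (K + K' + 1)))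
  refine ⟨L₀, fun L hL u₀ z z' hz hz' N hN x t ht => ?_⟩
  have hsource (y s : ℝ) (hs : 0 < s) {k : ℝ} (hk : k ≤ K + K' + 1) :
      k * (N * exp (L * s)) ≤ (K + K' + 1) * N * exp (L * s) := by
    rw [mul_assoc]
    exact mul_le_mul_of_nonneg_right hk ((abs_nonneg _).trans (hN true y s hs))
  refine (hL₀ L hL (u₀ i) _ _ _ _ ((K + K' + 1) * N) (S.mildData u₀ hz i) (S.mildData u₀ hz' i)
    (fun y s hs => ?_) (fun y s hs => ?_) x t ht).trans_eq (by field_simp)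
  · exact (abs_nemytskii_sub_le hK hreaction hz hz' hs fun j => hN j y s hs).trans
      (hsource y s hs (by linarith))
  · exact (abs_nemytskii_sub_le hK' hflux hz hz' hs fun j => hN j y s hs).trans
      (hsource y s hs (by linarith))

end System

lemma exists_self_consistent_amplitude {K C r e : ℝ} (hK : 0 ≤ K) (hC : 0 ≤ C) (hr : 0 < r)
    (he : 0 < e) :
    ∃ δ e', 0 < δ ∧ δ ≤ e' ∧ 0 < e' ∧ e' ≤ e ∧ e' ≤ 1 ∧ e' ≤ r ∧
      K * (δ + 3 * C * e' ^ 2) ≤ e' := by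
  obtain ⟨e', he', hlt⟩ : ∃ e' > 0, e' < min (min e 1) (min r (1 / (6 * K * C + 1))) :=
    exists_between (by positivity)
  simp only [lt_min_iff] at hlt
  obtain ⟨⟨hle, hle1⟩, hler, hleK⟩ := hlt
  rw [lt_div_iff₀ (by positivity)] at hleK
  refine ⟨e' / (2 * (K + 1)), e', by positivity, div_le_self he'.le (by linarith), he', hle.le,
    hle1.le, hler.le, ?_⟩
  have hlinear : K * (e' / (2 * (K + 1))) ≤ e' / 2 := by
    rw [mul_div_assoc', div_le_div_iff₀ (by positivity) two_pos]
    nlinarith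
  have hquadratic : 3 * K * C * e' ^ 2 ≤ e' / 2 := by nlinarith
  linarith

namespace System

variable {S : System} {M r C : ℝ}

theorem exists_isMildSolution (hS : S.HasMixedBounds r C)
    (hM : ∀ i, 16 * S.diffusion i ≤ M) (hc : S.drift false ≠ S.drift true) {e : ℝ} (he : 0 < e) :
    ∃ δ, 0 < δ ∧ δ ≤ e ∧ ∀ u₀ : Bool → ℝ →ᵇ ℝ, (∀ i b, |u₀ i b| ≤ δ * gaussianWeight M 1 b) →
      ∃ z, S.IsMildSolution u₀ z ∧ DominatedBy (S.packet M e) z := by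
  have hM0 : 0 ≤ M := by linarith [hM false, S.diffusion_pos false]
  obtain ⟨K, hK, hpacket⟩ := exists_abs_picard_le_packet hS hM hc
  obtain ⟨δ, e', hδ, hδe', he', he'e, he'1, he'r, hself⟩ :=
    exists_self_consistent_amplitude hK hS.nonneg hS.radius_pos he
  choose L₀ hcontr using S.exists_abs_picard_sub_le r
  have hL₀ (i : Bool) : L₀ i ≤ max 0 (max (L₀ false) (L₀ true)) := by
    cases i <;> simp
  have hbox {z : Bool → ℝ → ℝ → ℝ} (hz : DominatedBy (S.packet M e') z) :
      DominatedBy (fun _ _ _ => r) z :=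
    ⟨hz.continuousPos, fun i x t ht =>
      ((hz.abs_le i x t ht).trans (S.packet_le hM0 he'.le i x ht.le)).trans he'r⟩
  refine ⟨δ, hδ, hδe'.trans he'e, fun u₀ hu₀ => ?_⟩
  obtain ⟨z, hz, hfix⟩ := DominatedBy.exists_fixedPoint (E := S.packet M e') (Φ := S.picard u₀)
    (fun i x t _ => mul_nonneg he'.le (envelope_nonneg _ _ _ _))
    (fun i x t ht => (S.packet_le hM0 he'.le i x ht.le).trans he'1) (le_max_left _ _)
    (fun z hz => ⟨fun i => ((S.mildData u₀ (hbox hz) i).continuousOn_driftMildSolution _).mono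
      fun p (hp : 0 < p.2) => hp.le, fun i x t ht =>
      (hpacket u₀ z δ e' hδ.le he'.le he'1 hu₀ (hbox hz) hz i x t ht).trans
        (mul_le_mul_of_nonneg_right hself (envelope_nonneg _ _ _ _))⟩)
    (fun z z' hz hz' N hN i => hcontr i _ (hL₀ i) u₀ z z' (hbox hz) (hbox hz') N hN)
  exact ⟨z, ⟨⟨r, hbox hz⟩, hfix⟩, hz.continuousPos, fun i x t ht => (hz.abs_le i x t ht).trans
    (mul_le_mul_of_nonneg_right he'e (envelope_nonneg _ _ _ _))⟩

theorem exists_isClassicalSolution (hS : S.HasMixedBounds r C)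
    (hM : ∀ i, 16 * S.diffusion i ≤ M) (hc : S.drift false ≠ S.drift true) {e : ℝ} (he : 0 < e) :
    ∃ δ, 0 < δ ∧ ∀ u₀ : Bool → ℝ →ᵇ ℝ, (∀ i b, |u₀ i b| ≤ δ * gaussianWeight M 1 b) →
      ∃ u : Bool → ℝ → ℝ → ℝ,
        IsClassicalSolution (S.diffusion false) (S.diffusion true) (S.drift false) (S.drift true)
          (S.reaction false) (S.reaction true) (S.flux false) (S.flux true) ⊤ (u₀ false) (u₀ true)
          (u false) (u true) ∧
        ∀ i x t, 0 ≤ t → |u i x t| ≤ S.packet M e i x t := by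
  obtain ⟨δ, hδ, hδe, hmild⟩ := exists_isMildSolution hS hM hc he
  refine ⟨δ, hδ, fun u₀ hu₀ => ?_⟩
  obtain ⟨z, hz, hpacket⟩ := hmild u₀ hu₀
  refine ⟨S.picard u₀ z, hz.isClassicalSolution_picard, fun i x t ht => ?_⟩
  rcases ht.eq_or_lt with rfl | ht
  · rw [hz.picard_zero]
    have hweight := gaussianWeight_pos M 1 x
    calc |u₀ i x| ≤ δ * gaussianWeight M 1 x := hu₀ i x
      _ ≤ e * gaussianWeight M 1 x := by gcongr
      _ = S.packet M e i x 0 := by simp [packet, envelope]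
  · rw [hz.picard_eq i x t ht]
    exact hpacket.abs_le i x t ht

end System

section Decay

variable {M c c' e t : ℝ} {u v : ℝ → ℝ}

lemma envelope_eq (M c x t : ℝ) :
    envelope M c x t = exp (-(x + c * t) ^ 2 / (M * (1 + t))) / √(1 + t) := by
  rw [envelope, gaussianWeight, neg_div]
  ring

lemma abs_le_mul_gaussianWeight_of_lt {δ a x : ℝ} (h : |a| * exp (x ^ 2 / M) < δ) :
    |a| ≤ δ * gaussianWeight M 1 x := by
  rw [← lt_div_iff₀ (exp_pos _)] at h
  rw [gaussianWeight, exp_neg, mul_one]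
  exact h.le

lemma envelope_eq_exp_affine (M c x t : ℝ) :
    envelope M c x t = (√(1 + t))⁻¹ * exp (-(1 / (M * (1 + t))) * (c * t + 1 * x) ^ 2) := by
  rw [envelope, gaussianWeight]
  ring_nf

lemma integrable_envelope (hM : 0 < M) (ht : 0 ≤ t) (c : ℝ) :
    Integrable fun x => envelope M c x t := by
  simp only [envelope_eq_exp_affine]
  exact (integrable_exp_neg_mul_sq_affine (by positivity) one_ne_zero _).const_mul _

lemma integral_envelope (M : ℝ) (ht : 0 ≤ t) (c : ℝ) : ∫ x, envelope M c x t = √(π * M) := by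
  have hscale : π / (1 / (M * (1 + t))) = (1 + t) * (π * M) := by
    rw [div_div_eq_mul_div, div_one]
    ring
  simp only [envelope_eq_exp_affine]
  rw [integral_const_mul, integral_exp_neg_mul_sq_affine, abs_one, div_one, hscale,
    sqrt_mul (by positivity), inv_mul_cancel_left₀ (by positivity)]

lemma integrable_abs_of_le_envelope (hM : 0 < M) (ht : 0 ≤ t) (hu : Continuous u)
    (hle : ∀ x, |u x| ≤ e * envelope M c x t) : Integrable fun x => |u x| :=
  ((integrable_envelope hM ht c).const_mul e).mono' hu.abs.aestronglyMeasurable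
    (ae_of_all _ fun x => by simpa only [norm_eq_abs, abs_abs] using hle x)

lemma integral_abs_le_of_le_envelope (hM : 0 < M) (ht : 0 ≤ t) (hu : Continuous u)
    (hle : ∀ x, |u x| ≤ e * envelope M c x t) : ∫ x, |u x| ≤ e * √(π * M) := by
  rw [← integral_envelope M ht c, ← integral_const_mul]
  exact integral_mono (integrable_abs_of_le_envelope hM ht hu hle)
    ((integrable_envelope hM ht c).const_mul e) hle

lemma le_mul_exp_div_sqrt_of_le_envelope {ε x a : ℝ} (heε : e ≤ ε)
    (h : |a| ≤ e * envelope M c x t) :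
    |a| ≤ ε * exp (-(x + c * t) ^ 2 / (M * (1 + t))) / √(1 + t) := by
  rw [mul_div_assoc, ← envelope_eq]
  exact h.trans (mul_le_mul_of_nonneg_right heε (envelope_nonneg _ _ _ _))

lemma abs_add_abs_le_of_le_envelope (hM : 0 ≤ M) (ht : 0 ≤ t) (he : 0 ≤ e) {x a b : ℝ}
    (ha : |a| ≤ e * envelope M c x t) (hb : |b| ≤ e * envelope M c' x t) :
    |a| + |b| ≤ 2 * e / √(1 + t) := by
  have hsum := add_le_add
    (ha.trans (mul_le_mul_of_nonneg_left (envelope_le_inv_sqrt hM ht c x) he))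
    (hb.trans (mul_le_mul_of_nonneg_left (envelope_le_inv_sqrt hM ht c' x) he))
  exact hsum.trans_eq (by ring)

lemma exists_amplitude_le {ε R : ℝ} (hε : 0 < ε) (hR : 0 ≤ R) :
    ∃ e, 0 < e ∧ 2 * e ≤ ε ∧ 2 * (e * R) ≤ ε := by
  refine ⟨ε / (2 * (1 + R)), by positivity, ?_, ?_⟩
  · rw [mul_div_assoc', div_le_iff₀ (by positivity)]
    nlinarith
  · rw [div_mul_eq_mul_div, mul_div_assoc', div_le_iff₀ (by positivity)]
    nlinarith

lemma continuous_slice_of_isClassicalSolution {d₁ d₂ c₁ c₂ : ℝ} {f₁ f₂ g₁ g₂ : ℝ × ℝ → ℝ}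
    {u₀ v₀ : ℝ → ℝ} {u v : ℝ → ℝ → ℝ}
    (h : IsClassicalSolution d₁ d₂ c₁ c₂ f₁ f₂ g₁ g₂ ⊤ u₀ v₀ u v) (ht : 0 ≤ t) :
    Continuous fun x => (u x t, v x t) :=
  h.2.2.1.comp_continuous (f := fun x => (x, t)) (by fun_prop) fun _ => ⟨ht, ENNReal.ofReal_lt_top⟩

end Decay

theorem System.exists_isClassicalSolution_decay {S : System} {M r C : ℝ}
    (hS : S.HasMixedBounds r C) (hM : ∀ i, 16 * S.diffusion i ≤ M)
    (hc : S.drift false ≠ S.drift true) {ε : ℝ} (hε : 0 < ε) :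
    ∃ δ, 0 < δ ∧ ∀ u₀ v₀ : ℝ → ℝ, Continuous u₀ → Continuous v₀ →
      (∀ x, |u₀ x| * exp (x ^ 2 / M) < δ) → (∀ x, |v₀ x| * exp (x ^ 2 / M) < δ) →
      ∃ u v : ℝ → ℝ → ℝ,
        IsClassicalSolution (S.diffusion false) (S.diffusion true) (S.drift false) (S.drift true)
          (S.reaction false) (S.reaction true) (S.flux false) (S.flux true) ⊤ u₀ v₀ u v ∧
        ∀ t, 0 ≤ t →
          (∀ x, |u x t| ≤ ε * exp (-(x + S.drift false * t) ^ 2 / (M * (1 + t))) / √(1 + t)) ∧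
          (∀ x, |v x t| ≤ ε * exp (-(x + S.drift true * t) ^ 2 / (M * (1 + t))) / √(1 + t)) ∧
          (∀ x, |u x t| + |v x t| ≤ ε / √(1 + t)) ∧
          Integrable (fun x => |u x t| + |v x t|) ∧ ∫ x, (|u x t| + |v x t|) ≤ ε := by
  have hM0 : 0 < M := by linarith [hM false, S.diffusion_pos false]
  obtain ⟨e, he, heε, heR⟩ := exists_amplitude_le hε (sqrt_nonneg (π * M))
  obtain ⟨δ, hδ, hsol⟩ := exists_isClassicalSolution hS hM hc he
  refine ⟨δ, hδ, fun u₀ v₀ hu₀ hv₀ hu₀δ hv₀δ => ?_⟩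
  have hle (w : ℝ → ℝ) (hw : ∀ x, |w x| * exp (x ^ 2 / M) < δ) (x : ℝ) : ‖w x‖ ≤ δ :=
    (abs_le_mul_gaussianWeight_of_lt (hw x)).trans
      (mul_le_of_le_one_right hδ.le (gaussianWeight_le_one hM0.le zero_le_one x))
  obtain ⟨u, hu, hpacket⟩ := hsol
    (fun i => bif i then .ofNormedAddCommGroup v₀ hv₀ δ (hle v₀ hv₀δ)
      else .ofNormedAddCommGroup u₀ hu₀ δ (hle u₀ hu₀δ))
    (Bool.forall_bool.2 ⟨fun x => abs_le_mul_gaussianWeight_of_lt (hu₀δ x),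
      fun x => abs_le_mul_gaussianWeight_of_lt (hv₀δ x)⟩)
  refine ⟨u false, u true, hu, fun t ht => ?_⟩
  have hbound (i : Bool) (x : ℝ) := hpacket i x t ht
  have hcont := continuous_slice_of_isClassicalSolution hu ht
  have hint := integrable_abs_of_le_envelope hM0 ht hcont.fst (hbound false)
  have hint' := integrable_abs_of_le_envelope hM0 ht hcont.snd (hbound true)
  refine ⟨fun x => le_mul_exp_div_sqrt_of_le_envelope (by linarith) (hbound false x),
    fun x => le_mul_exp_div_sqrt_of_le_envelope (by linarith) (hbound true x),
    fun x => (abs_add_abs_le_of_le_envelope hM0.le ht he.le (hbound false x)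
      (hbound true x)).trans (by gcongr), hint.add hint', ?_⟩
  rw [integral_add hint hint']
  linarith [integral_abs_le_of_le_envelope hM0 ht hcont.fst (hbound false),
    integral_abs_le_of_le_envelope hM0 ht hcont.snd (hbound true)]

lemma continuous_of_holderCont {α : ℝ} (hα : 0 < α) {u : ℝ → ℝ} (hu : HolderCont α u) :
    Continuous u := by
  obtain ⟨A, hA⟩ := hu
  refine continuous_iff_continuousAt.2 fun y => tendsto_iff_dist_tendsto_zero.2
    (squeeze_zero (fun _ => dist_nonneg) (fun x => hA x y) ?_)
  have hcont : Continuous fun x : ℝ => A * |x - y| ^ α :=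
    continuous_const.mul ((by fun_prop : Continuous fun x : ℝ => |x - y|).rpow_const
      fun _ => Or.inr hα.le)
  simpa [zero_rpow hα.ne'] using hcont.tendsto y

end GRD

theorem global_existence_mix_terms_exponential_general
    (d₁ d₂ c₁ c₂ : ℝ) (hd₁ : 0 < d₁) (hd₂ : 0 < d₂) (hc : c₁ ≠ c₂)
    (f₁ f₂ g₁ g₂ : ℝ × ℝ → ℝ)
    (hf₁ : LocallyLipschitz f₁) (hf₂ : LocallyLipschitz f₂)
    (hg₁ : ContDiff ℝ 2 g₁) (hg₂ : ContDiff ℝ 2 g₂)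
    (C₀ r₀ : ℝ) (hr₀ : 0 < r₀)
    (hnl : ∀ u v : ℝ, |u| ≤ r₀ → |v| ≤ r₀ →
      |f₁ (u, v)| ≤ C₀ * (|u| ^ 4 + |u| * |v|) ∧
      |g₁ (u, v)| ≤ C₀ * (|u| ^ 2 + |u| * |v|) ∧
      |f₂ (u, v)| ≤ C₀ * (|v| ^ 4 + |u| * |v|) ∧
      |g₂ (u, v)| ≤ C₀ * (|v| ^ 2 + |u| * |v|)) :
    ∃ M₀ : ℝ, 1 ≤ M₀ ∧
      ∀ M : ℝ, M₀ ≤ M → ∀ ε : ℝ, 0 < ε → ∃ δ : ℝ, 0 < δ ∧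
        ∀ u₀ v₀ : ℝ → ℝ, Continuous u₀ → Continuous v₀ →
          (∀ x : ℝ, |u₀ x| * Real.exp (x ^ 2 / M) < δ) →
          (∀ x : ℝ, |v₀ x| * Real.exp (x ^ 2 / M) < δ) →
          ∃ u v : ℝ → ℝ → ℝ,
            IsClassicalSolution d₁ d₂ c₁ c₂ f₁ f₂ g₁ g₂ ⊤ u₀ v₀ u v ∧
            ∀ t : ℝ, 0 ≤ t →
              (∀ x : ℝ, |u x t| ≤
                ε * Real.exp (-(x + c₁ * t) ^ 2 / (M * (1 + t))) / Real.sqrt (1 + t)) ∧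
              (∀ x : ℝ, |v x t| ≤
                ε * Real.exp (-(x + c₂ * t) ^ 2 / (M * (1 + t))) / Real.sqrt (1 + t)) ∧
              (∀ x : ℝ, |u x t| + |v x t| ≤ ε / Real.sqrt (1 + t)) ∧
              Integrable (fun x : ℝ => |u x t| + |v x t|) ∧
              (∫ x : ℝ, (|u x t| + |v x t|)) ≤ ε := by
  let S : GRD.System :=
    { diffusion := fun i => bif i then d₂ else d₁
      drift := fun i => bif i then c₂ else c₁
      reaction := fun i => bif i then f₂ else f₁
      flux := fun i => bif i then g₂ else g₁
      diffusion_pos := Bool.forall_bool.2 ⟨hd₁, hd₂⟩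
      locallyLipschitz_reaction := Bool.forall_bool.2 ⟨hf₁, hf₂⟩
      contDiff_flux := Bool.forall_bool.2 ⟨hg₁, hg₂⟩ }
  have hS : S.HasMixedBounds r₀ C₀ :=
    { radius_pos := hr₀
      abs_reaction_le := Bool.forall_bool.2 ⟨fun a ha => (hnl _ _ (ha false) (ha true)).1,
        fun a ha => (hnl _ _ (ha false) (ha true)).2.2.1.trans_eq
          (by rw [mul_comm |a false|]; rfl)⟩
      abs_flux_le := Bool.forall_bool.2 ⟨fun a ha => (hnl _ _ (ha false) (ha true)).2.1,
        fun a ha => (hnl _ _ (ha false) (ha true)).2.2.2.trans_eq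
          (by rw [mul_comm |a false|]; rfl)⟩ }
  refine ⟨max 1 (max (16 * d₁) (16 * d₂)), le_max_left _ _, fun M hM ε hε => ?_⟩
  simp only [max_le_iff] at hM
  exact GRD.System.exists_isClassicalSolution_decay hS (Bool.forall_bool.2 hM.2) hc hε

/-- Theorem 1.2 (exponentially localized initial data). -/
theorem global_existence_mix_terms_exponential
    (α d₁ d₂ c₁ c₂ : ℝ) (hα : α ∈ Set.Ioo (0 : ℝ) 1)
    (hd₁ : 0 < d₁) (hd₂ : 0 < d₂) (hc : c₁ ≠ c₂)
    (f₁ f₂ g₁ g₂ : ℝ × ℝ → ℝ)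
    (hf₁ : IsC2Holder α f₁) (hf₂ : IsC2Holder α f₂)
    (hg₁ : IsC2Holder α g₁) (hg₂ : IsC2Holder α g₂)
    (C₀ r₀ : ℝ) (hC₀ : 1 < C₀) (hr₀ : 0 < r₀)
    (hnl : ∀ u v : ℝ, |u| ≤ r₀ → |v| ≤ r₀ →
      |f₁ (u, v)| ≤ C₀ * (|u| ^ 4 + |u| * |v|) ∧
      |g₁ (u, v)| ≤ C₀ * (|u| ^ 2 + |u| * |v|) ∧
      |f₂ (u, v)| ≤ C₀ * (|v| ^ 4 + |u| * |v|) ∧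
      |g₂ (u, v)| ≤ C₀ * (|v| ^ 2 + |u| * |v|)) :
    ∃ M₀ : ℝ, 1 ≤ M₀ ∧
      ∀ M : ℝ, M₀ ≤ M → ∀ ε : ℝ, 0 < ε → ∃ δ : ℝ, 0 < δ ∧
        ∀ u₀ v₀ : ℝ → ℝ,
          (∃ B : ℝ, ∀ x : ℝ, |u₀ x| ≤ B) → (∃ B : ℝ, ∀ x : ℝ, |v₀ x| ≤ B) →
          HolderCont α u₀ → HolderCont α v₀ →
          (∀ x : ℝ, |u₀ x| * Real.exp (x ^ 2 / M) < δ) →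
          (∀ x : ℝ, |v₀ x| * Real.exp (x ^ 2 / M) < δ) →
          ∃ u v : ℝ → ℝ → ℝ,
            IsClassicalSolution d₁ d₂ c₁ c₂ f₁ f₂ g₁ g₂ ⊤ u₀ v₀ u v ∧
            ∀ t : ℝ, 0 ≤ t →
              (∀ x : ℝ, |u x t| ≤
                ε * Real.exp (-(x + c₁ * t) ^ 2 / (M * (1 + t))) / Real.sqrt (1 + t)) ∧
              (∀ x : ℝ, |v x t| ≤
                ε * Real.exp (-(x + c₂ * t) ^ 2 / (M * (1 + t))) / Real.sqrt (1 + t)) ∧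
              (∀ x : ℝ, |u x t| + |v x t| ≤ ε / Real.sqrt (1 + t)) ∧
              Integrable (fun x : ℝ => |u x t| + |v x t|) ∧
              (∫ x : ℝ, (|u x t| + |v x t|)) ≤ ε := by
  obtain ⟨M₀, hM₀, hsol⟩ := global_existence_mix_terms_exponential_general d₁ d₂ c₁ c₂ hd₁ hd₂ hc
    f₁ f₂ g₁ g₂ ((hf₁.1.of_le one_le_two).locallyLipschitz)
    ((hf₂.1.of_le one_le_two).locallyLipschitz) hg₁.1 hg₂.1 C₀ r₀ hr₀ hnl
  refine ⟨M₀, hM₀, fun M hM ε hε => ?_⟩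
  obtain ⟨δ, hδ, hdata⟩ := hsol M hM ε hε
  exact ⟨δ, hδ, fun u₀ v₀ _ _ hu₀ hv₀ => hdata u₀ v₀ (GRD.continuous_of_holderCont hα.1 hu₀)
    (GRD.continuous_of_holderCont hα.1 hv₀)⟩
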